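/- Define the complex numbers L₁ = F(1/8,5/8) − 2√3·F(3/8,7/8) − 4i√3·F(5/8,9/8) − 8i·F(7/8,11/8) (the L-value L(f_{1/8,5/8},1) of the Hecke eigenform built from the Galois family of 𝕂₂(1/8,5/8), up to normalization) and L₂ = F(1/8,1) − 2i√3·F(3/8,1) − 4√3·F(5/8,1) + 8i·F(7/8,1) (similarly for f_{1/8,1}). Then L₁ = −(1/2)·ζ₄₈·L₂, where ζ₄₈ = e^{2πi/48}. -/

import Mathlib

/-- The Pochhammer symbol (x)_k = x(x+1)⋯(x+k−1). -/
noncomputable def poch (x : ℝ) (k : ℕ) : ℝ := ∏ i ∈ Finset.range k, (x + i)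

/-- The hypergeometric series ₃F₂(a1,a2,a3;b1,b2;1). -/
noncomputable def threeF2 (a1 a2 a3 b1 b2 : ℝ) : ℝ :=
  ∑' k : ℕ, poch a1 k * poch a2 k * poch a3 k /
    (poch b1 k * poch b2 k * (Nat.factorial k : ℝ))

/-- The Beta function B(a,b) = Γ(a)Γ(b)/Γ(a+b). -/
noncomputable def betaFn (a b : ℝ) : ℝ :=
  Real.Gamma a * Real.Gamma b / Real.Gamma (a + b)

/-- The normalized hypergeometric value
F(r,s) = (2^{1−4r}·B(r,s−r)/N(r)) · ₃F₂(1/2,1/2,r;1,s;1), where N(r) = 2·den(r). -/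
noncomputable def Fval (r s : ℚ) : ℝ :=
  (2:ℝ) ^ ((1:ℝ) - 4 * (r:ℝ)) * betaFn (r:ℝ) ((s:ℝ) - (r:ℝ)) / (2 * (r.den : ℝ)) *
    threeF2 (1/2) (1/2) (r:ℝ) 1 (s:ℝ)

/-!
By Euler's integral, `Fval r s` is an elementary multiple of the integral of
`x ^ (r - 1) * (1 - x) ^ (s - r - 1) * K x` over `(0, 1)`, where `K x = ₂F₁(1/2, 1/2; 1; x)` is a
period of the Legendre curve with modulus `x`. Ramanujan's modular equation of degree three
parametrizes the pairs `(α, β)` of moduli of `3`-isogenous curves by a multiplier `m`, which is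
also the ratio of their periods.

The linear relations between the integrals come from two sources. First, the form
`(β / (1 - β)) ^ e * K β * R(m) dm` is holomorphic above the segment `(-1, 1)`, so its integral
over the arc from `-1` to `1` on which `β` runs through `(0, 1)` equals the integral of its
boundary values on the segment itself. There `β` is outside `[0, 1]`, and the powers and the
periods acquire the phases and the imaginary parts which relate the values with `s = 1` to those
with `s = r + 1/2`. Second, the equation `β(m) = β` has four roots, namely a point of that arc,
its complex conjugate and two real numbers. Summing over them the pullback of a form in `α`
multiplies the form in `β` by `2` up to sign; this is the action of the Hecke operator `T₃`. On
the real branches the sum yields integrals with `s = 1` at `r = 3/8` or `5/8`, on the arc it is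
evaluated by the first argument. Together the two sources express everything by the integrals with
`s = 1` at `r = 3/8` and `r = 5/8`, and the theorem reduces to an identity for trigonometric
values at `π / 8`.
-/

section EulerIntegrals

open MeasureTheory Set
open scoped Real Nat

lemma lintegral_rpow_mul_one_sub_rpow {a b : ℝ} (ha : 0 < a) (hb : 0 < b) :
    ∫⁻ x in Ioo (0 : ℝ) 1, ENNReal.ofReal (x ^ (a - 1) * (1 - x) ^ (b - 1)) =
      ENNReal.ofReal (ProbabilityTheory.beta a b) := by
  have hB := ProbabilityTheory.beta_pos ha hb
  have hpdf := ProbabilityTheory.lintegral_betaPDF_eq_one ha hb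
  have hmul : ∀ x : ℝ, ENNReal.ofReal (1 / ProbabilityTheory.beta a b *
      x ^ (a - 1) * (1 - x) ^ (b - 1)) = ENNReal.ofReal (1 / ProbabilityTheory.beta a b) *
        ENNReal.ofReal (x ^ (a - 1) * (1 - x) ^ (b - 1)) := fun x => by
    rw [mul_assoc, ENNReal.ofReal_mul (by positivity)]
  simp_rw [ProbabilityTheory.lintegral_betaPDF, hmul] at hpdf
  rw [lintegral_const_mul _ (by fun_prop), one_div, ENNReal.ofReal_inv_of_pos hB] at hpdf
  rw [ENNReal.eq_inv_of_mul_eq_one_left ((mul_comm _ _).trans hpdf), inv_inv]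

lemma integrableOn_rpow_mul_one_sub_rpow {a b : ℝ} (ha : -1 < a) (hb : -1 < b) :
    IntegrableOn (fun x : ℝ => x ^ a * (1 - x) ^ b) (Ioo 0 1) := by
  have h := lintegral_rpow_mul_one_sub_rpow (a := a + 1) (b := b + 1) (by linarith) (by linarith)
  simp only [add_sub_cancel_right] at h
  refine ⟨by fun_prop, ?_⟩
  rw [hasFiniteIntegral_iff_ofReal, h]
  · exact ENNReal.ofReal_lt_top
  · filter_upwards [ae_restrict_mem measurableSet_Ioo] with x hx
    exact mul_nonneg (Real.rpow_nonneg hx.1.le _) (Real.rpow_nonneg (by linarith [hx.2]) _)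

lemma ofReal_rpow_mul_one_sub_rpow_mul_tsum {a b x : ℝ} {c : ℕ → ℝ} (hx : x ∈ Ioo (0 : ℝ) 1)
    (hc : ∀ k, 0 ≤ c k) (hs : Summable fun k => c k * x ^ k) :
    ENNReal.ofReal (x ^ (a - 1) * (1 - x) ^ (b - 1) * ∑' k, c k * x ^ k) =
      ∑' k : ℕ, ENNReal.ofReal (c k) *
        ENNReal.ofReal (x ^ (a + k - 1) * (1 - x) ^ (b - 1)) := by
  have hx0 := hx.1
  have hx1 := sub_pos.2 hx.2
  rw [← tsum_mul_left, ENNReal.ofReal_tsum_of_nonneg (fun k => by have := hc k; positivity)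
    (hs.mul_left _)]
  refine tsum_congr fun k => ?_
  rw [← ENNReal.ofReal_mul (hc k), show a + k - 1 = (a - 1) + k by ring,
    Real.rpow_add hx0, Real.rpow_natCast]
  congr 1
  ring

lemma integral_rpow_mul_one_sub_rpow_mul_tsum {a b : ℝ} (ha : 0 < a) (hb : 0 < b) {c : ℕ → ℝ}
    (hc : ∀ k, 0 ≤ c k) (hs : ∀ x ∈ Ioo (0 : ℝ) 1, Summable fun k => c k * x ^ k) :
    ∫ x in Ioo (0 : ℝ) 1, x ^ (a - 1) * (1 - x) ^ (b - 1) * ∑' k, c k * x ^ k =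
      ∑' k, c k * ProbabilityTheory.beta (a + k) b := by
  have hterm : ∀ k : ℕ, ∫⁻ x in Ioo (0 : ℝ) 1, ENNReal.ofReal (c k) *
      ENNReal.ofReal (x ^ (a + k - 1) * (1 - x) ^ (b - 1)) =
        ENNReal.ofReal (c k * ProbabilityTheory.beta (a + k) b) := fun k => by
    rw [lintegral_const_mul _ (by fun_prop),
      lintegral_rpow_mul_one_sub_rpow (by positivity) hb, ENNReal.ofReal_mul (hc k)]
  have hnonneg : 0 ≤ᵐ[volume.restrict (Ioo 0 1)] fun x : ℝ =>
      x ^ (a - 1) * (1 - x) ^ (b - 1) * ∑' k, c k * x ^ k := by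
    filter_upwards [ae_restrict_mem measurableSet_Ioo] with x hx
    have hx0 := hx.1
    have hx1 := sub_pos.2 hx.2
    exact mul_nonneg (by positivity) (tsum_nonneg fun k => mul_nonneg (hc k) (by positivity))
  have hmeas : AEStronglyMeasurable (fun x : ℝ =>
      x ^ (a - 1) * (1 - x) ^ (b - 1) * ∑' k, c k * x ^ k) (volume.restrict (Ioo 0 1)) := by
    fun_prop
  rw [integral_eq_lintegral_of_nonneg_ae hnonneg hmeas,
    setLIntegral_congr_fun measurableSet_Ioo
      (fun x hx => ofReal_rpow_mul_one_sub_rpow_mul_tsum hx hc (hs x hx)),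
    lintegral_tsum (fun k => by fun_prop), ENNReal.tsum_toReal_eq fun k => by
      rw [hterm]; exact ENNReal.ofReal_ne_top]
  refine tsum_congr fun k => ?_
  rw [hterm, ENNReal.toReal_ofReal
    (mul_nonneg (hc k) (ProbabilityTheory.beta_pos (by positivity) hb).le)]

lemma poch_succ (x : ℝ) (k : ℕ) : poch x (k + 1) = poch x k * (x + k) :=
  Finset.prod_range_succ _ _

lemma poch_pos {x : ℝ} (hx : 0 < x) (k : ℕ) : 0 < poch x k :=
  Finset.prod_pos fun i _ => by positivity

lemma poch_eq_eval_ascPochhammer (x : ℝ) (k : ℕ) : poch x k = (ascPochhammer ℝ k).eval x := by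
  induction k with
  | zero => simp [poch]
  | succ k ih => rw [poch_succ, ih, ascPochhammer_succ_eval]

lemma poch_one (k : ℕ) : poch 1 k = k ! := by
  rw [poch_eq_eval_ascPochhammer, ascPochhammer_eval_one]

lemma Gamma_add_natCast {x : ℝ} (hx : 0 < x) (k : ℕ) :
    Real.Gamma (x + k) = poch x k * Real.Gamma x := by
  induction k with
  | zero => simp [poch]
  | succ k ih =>
    rw [Nat.cast_succ, ← add_assoc, Real.Gamma_add_one (by positivity), ih, poch_succ]; ring

lemma choose_add_sub_one_eq_poch_div (a : ℝ) (k : ℕ) :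
    Ring.choose (a + k - 1) k = poch a k / k ! := by
  have h := Ring.factorial_nsmul_multichoose_eq_ascPochhammer a k
  rw [nsmul_eq_mul, Polynomial.ascPochhammer_smeval_eq_eval] at h
  rw [← Ring.multichoose_eq, eq_div_iff (by positivity), mul_comm, h, poch_eq_eval_ascPochhammer]

lemma hasSum_one_sub_rpow_neg (a : ℝ) {z : ℝ} (hz : |z| < 1) :
    HasSum (fun k : ℕ => poch a k / k ! * z ^ k) ((1 - z) ^ (-a)) := by
  have h := (Real.one_div_one_sub_rpow_hasFPowerSeriesOnBall_zero a).hasSum (y := z) (by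
    simpa [edist_dist] using hz)
  simp only [FormalMultilinearSeries.ofScalars_apply_eq, choose_add_sub_one_eq_poch_div, zero_add,
    smul_eq_mul] at h
  rw [Real.rpow_neg (by linarith [le_abs_self z]), ← one_div]
  simpa only [mul_comm] using h

end EulerIntegrals

section EllipticIntegral

open MeasureTheory Set Filter
open scoped Real Nat

/-- The symmetric complete elliptic integral `(1 / π) ∫₀^∞ du / √(u (u + x) (u + y))`, normalized
so that `ellInt 1 (1 - x) = ₂F₁(1/2, 1/2; 1; x)`. Isogenies act on it by rational substitutions
of `u`. -/
noncomputable def ellInt (x y : ℝ) : ℝ :=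
  1 / π * ∫ u in Ioi (0 : ℝ), (√(u * (u + x) * (u + y)))⁻¹

lemma ellInt_comm (x y : ℝ) : ellInt x y = ellInt y x := by
  simp only [ellInt, mul_right_comm]

lemma ellInt_mul_mul {c : ℝ} (hc : 0 < c) (x y : ℝ) :
    ellInt (c * x) (c * y) = (√c)⁻¹ * ellInt x y := by
  have hscale := integral_comp_mul_left_Ioi
    (fun u : ℝ => (√(u * (u + c * x) * (u + c * y)))⁻¹) 0 hc
  have hsqrt : ∀ u : ℝ, (√(c * u * (c * u + c * x) * (c * u + c * y)))⁻¹ =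
      c⁻¹ * ((√c)⁻¹ * (√(u * (u + x) * (u + y)))⁻¹) := fun u => by
    rw [show c * u * (c * u + c * x) * (c * u + c * y) =
      c ^ 2 * (c * (u * (u + x) * (u + y))) by ring,
      Real.sqrt_mul (by positivity), Real.sqrt_mul hc.le, Real.sqrt_sq hc.le, mul_inv, mul_inv]
  simp_rw [mul_zero, hsqrt, integral_const_mul, smul_eq_mul] at hscale
  rw [ellInt, ellInt, ← mul_left_cancel₀ (inv_ne_zero hc.ne') hscale]
  ring

lemma image_one_sub_div_Ioo : (fun t : ℝ => (1 - t) / t) '' Ioo 0 1 = Ioi 0 := by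
  ext u
  constructor
  · rintro ⟨t, ht, rfl⟩
    exact div_pos (by linarith [ht.2]) ht.1
  · intro (hu : 0 < u)
    exact ⟨1 / (1 + u), ⟨by positivity, by rw [div_lt_one (by positivity)]; linarith⟩,
      by field_simp; ring⟩

lemma ellInt_one_one_sub_eq_integral (x : ℝ) :
    ellInt 1 (1 - x) = 1 / π * ∫ t in Ioo (0 : ℝ) 1,
      t ^ ((1 / 2 : ℝ) - 1) * (1 - t) ^ ((1 / 2 : ℝ) - 1) * (√(1 - x * t))⁻¹ := by
  have hinj : InjOn (fun t : ℝ => (1 - t) / t) (Ioo 0 1) := fun s hs t ht h => by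
    have h1 := hs.1.ne'
    have h2 := ht.1.ne'
    simp only at h
    field_simp at h
    linarith
  have hderiv : ∀ t ∈ Ioo (0 : ℝ) 1,
      HasDerivWithinAt (fun t : ℝ => (1 - t) / t) (-(1 / t ^ 2)) (Ioo 0 1) t := fun t ht => by
    have h0 := ht.1.ne'
    refine ((((hasDerivAt_id t).const_sub 1).div (hasDerivAt_id t) h0).congr_deriv
      ?_).hasDerivWithinAt
    simp only [id]
    field_simp; ring
  rw [ellInt, ← image_one_sub_div_Ioo,
    integral_image_eq_integral_abs_deriv_smul measurableSet_Ioo hderiv hinj]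
  congr 1
  refine setIntegral_congr_fun measurableSet_Ioo fun t ht => ?_
  have h0 := ht.1
  have h1 := sub_pos.2 ht.2
  have hfactor : (1 - t) / t * ((1 - t) / t + 1) * ((1 - t) / t + (1 - x)) =
      (1 / t ^ 2) ^ 2 * (t * (1 - t)) * (1 - x * t) := by field_simp; ring
  simp only [smul_eq_mul]
  rw [abs_neg, abs_of_pos (by positivity), hfactor, Real.sqrt_mul (by positivity),
    Real.sqrt_mul (by positivity), Real.sqrt_sq (by positivity),
    ← Real.mul_rpow h0.le h1.le, show (1 / 2 : ℝ) - 1 = -(1 / 2) by norm_num,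
    Real.rpow_neg (by positivity), ← Real.sqrt_eq_rpow, mul_inv, mul_inv, ← mul_assoc, ← mul_assoc,
    mul_inv_cancel₀ (by positivity), one_mul]

lemma poch_half_div_factorial_nonneg (k : ℕ) : 0 ≤ poch (1 / 2) k / k ! :=
  div_nonneg (poch_pos (by norm_num) k).le (by positivity)

lemma poch_half_div_factorial_le_one (k : ℕ) : poch (1 / 2) k / k ! ≤ 1 := by
  rw [div_le_one (by positivity), ← poch_one]
  exact Finset.prod_le_prod (fun i _ => by positivity) fun i _ => by norm_num

lemma beta_half_add_natCast_half (k : ℕ) :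
    ProbabilityTheory.beta (1 / 2 + k) (1 / 2) = π * (poch (1 / 2) k / k !) := by
  rw [ProbabilityTheory.beta, Gamma_add_natCast (by norm_num),
    show (1 / 2 : ℝ) + k + 1 / 2 = k + 1 by ring, Real.Gamma_nat_eq_factorial,
    Real.Gamma_one_half_eq, mul_assoc, Real.mul_self_sqrt Real.pi_pos.le]
  ring

lemma summable_poch_half_div_factorial_sq {x : ℝ} (hx : x ∈ Ioo (0 : ℝ) 1) :
    Summable fun k : ℕ => (poch (1 / 2) k / k !) ^ 2 * x ^ k := by
  refine Summable.of_nonneg_of_le (fun k => ?_) (fun k => ?_)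
    (summable_geometric_of_lt_one hx.1.le hx.2)
  · have := hx.1; positivity
  · exact mul_le_of_le_one_left (pow_nonneg hx.1.le k)
      (pow_le_one₀ (poch_half_div_factorial_nonneg k) (poch_half_div_factorial_le_one k))

lemma ellInt_one_one_sub_eq_tsum {x : ℝ} (hx : x ∈ Ioo (0 : ℝ) 1) :
    ellInt 1 (1 - x) = ∑' k : ℕ, (poch (1 / 2) k / k !) ^ 2 * x ^ k := by
  have hseries : ∀ t ∈ Ioo (0 : ℝ) 1, HasSum (fun k : ℕ => poch (1 / 2) k / k ! * x ^ k * t ^ k)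
      (√(1 - x * t))⁻¹ := fun t ht => by
    have h0 := mul_nonneg hx.1.le ht.1.le
    have h1 := mul_lt_one_of_nonneg_of_lt_one_left hx.1.le hx.2 ht.2.le
    have h := hasSum_one_sub_rpow_neg (1 / 2) ((abs_of_nonneg h0).trans_lt h1)
    rw [Real.rpow_neg (sub_nonneg.2 h1.le), ← Real.sqrt_eq_rpow] at h
    simpa only [mul_pow, mul_assoc] using h
  have h := integral_rpow_mul_one_sub_rpow_mul_tsum (a := 1 / 2) (b := 1 / 2) (by norm_num)
    (by norm_num) (fun k => mul_nonneg (poch_half_div_factorial_nonneg k) (pow_nonneg hx.1.le k))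
    (fun t ht => (hseries t ht).summable)
  rw [ellInt_one_one_sub_eq_integral,
    setIntegral_congr_fun measurableSet_Ioo (g := fun t : ℝ => t ^ ((1 / 2 : ℝ) - 1) *
      (1 - t) ^ ((1 / 2 : ℝ) - 1) * ∑' k : ℕ, poch (1 / 2) k / k ! * x ^ k * t ^ k)
      (fun t ht => by simp only [(hseries t ht).tsum_eq]), h, ← tsum_mul_left]
  refine tsum_congr fun k => ?_
  rw [beta_half_add_natCast_half]
  field_simp

lemma Fval_eq_integral {r s : ℚ} (hr : 0 < r) (hs : r < s) :
    Fval r s = (2 : ℝ) ^ ((1 : ℝ) - 4 * (r : ℝ)) / (2 * (r.den : ℝ)) *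
      ∫ x in Ioo (0 : ℝ) 1, x ^ ((r : ℝ) - 1) * (1 - x) ^ ((s : ℝ) - r - 1) * ellInt 1 (1 - x) := by
  have hr' : (0 : ℝ) < r := by exact_mod_cast hr
  have hs' : (0 : ℝ) < (s : ℝ) - r := sub_pos.2 (by exact_mod_cast hs)
  have hs0 : (0 : ℝ) < s := by linarith
  rw [setIntegral_congr_fun measurableSet_Ioo (g := fun x : ℝ => x ^ ((r : ℝ) - 1) *
    (1 - x) ^ ((s : ℝ) - r - 1) * ∑' k : ℕ, (poch (1 / 2) k / k !) ^ 2 * x ^ k)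
    (fun x hx => by simp only [ellInt_one_one_sub_eq_tsum hx]),
    integral_rpow_mul_one_sub_rpow_mul_tsum hr' hs' (fun k => sq_nonneg _)
      (fun x hx => summable_poch_half_div_factorial_sq hx), Fval, threeF2, ← tsum_mul_left,
    ← tsum_mul_left]
  refine tsum_congr fun k => ?_
  have := (poch_pos hs0 k).ne'
  have := (Real.Gamma_pos_of_pos hs0).ne'
  rw [ProbabilityTheory.beta, betaFn, Gamma_add_natCast hr',
    show (r : ℝ) + k + (s - r) = s + k by ring, Gamma_add_natCast hs0, poch_one,
    show (r : ℝ) + (s - r) = s by ring]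
  field_simp

end EllipticIntegral

section Substitution

open MeasureTheory Set Filter
open scoped Topology

variable {E : Type*} [NormedAddCommGroup E] [NormedSpace ℝ E] {f f' : ℝ → ℝ}

lemma integral_Ioo_comp_deriv_smul_of_deriv_nonneg {a b : ℝ} (hab : a ≤ b)
    (hf : ContinuousOn f (Icc a b)) (hff' : ∀ x ∈ Ioo a b, HasDerivAt f (f' x) x)
    (hf' : ∀ x ∈ Ioo a b, 0 ≤ f' x) (g : ℝ → E) :
    ∫ u in Ioo (f a) (f b), g u = ∫ x in Ioo a b, f' x • g (f x) := by
  rw [← integral_Icc_eq_integral_Ioo, ← integral_Icc_eq_integral_Ioo,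
    integral_Icc_deriv_smul_of_deriv_nonneg hf hff' hf' hab]

lemma integral_Ioo_comp_deriv_smul_of_deriv_nonpos {a b : ℝ} (hab : a ≤ b)
    (hf : ContinuousOn f (Icc a b)) (hff' : ∀ x ∈ Ioo a b, HasDerivAt f (f' x) x)
    (hf' : ∀ x ∈ Ioo a b, f' x ≤ 0) (g : ℝ → E) :
    ∫ u in Ioo (f b) (f a), g u = -∫ x in Ioo a b, f' x • g (f x) := by
  rw [← integral_Icc_eq_integral_Ioo, ← integral_Icc_eq_integral_Ioo,
    integral_Icc_deriv_smul_of_deriv_nonpos hf hff' hf' hab, neg_neg]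

lemma integrableOn_Ioo_comp_deriv_smul_iff_of_deriv_nonpos {a b : ℝ} (hab : a ≤ b)
    (hf : ContinuousOn f (Icc a b)) (hff' : ∀ x ∈ Ioo a b, HasDerivAt f (f' x) x)
    (hf' : ∀ x ∈ Ioo a b, f' x ≤ 0) (g : ℝ → E) :
    IntegrableOn (fun x => f' x • g (f x)) (Ioo a b) ↔ IntegrableOn g (Ioo (f b) (f a)) := by
  rw [← integrableOn_Icc_iff_integrableOn_Ioo, ← integrableOn_Icc_iff_integrableOn_Ioo,
    integrableOn_Icc_deriv_smul_iff_of_deriv_nonpos hf hff' hf' hab]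

lemma image_Ioi_zero_of_tendsto_atTop (hf : ContinuousOn f (Ici 0)) (h0 : f 0 = 0)
    (hpos : ∀ u, 0 < u → 0 < f u) (hlim : Tendsto f atTop atTop) : f '' Ioi 0 = Ioi 0 := by
  refine Subset.antisymm (image_subset_iff.2 fun u hu => hpos u hu) fun z hz => ?_
  obtain ⟨R, hzR, hR0⟩ := ((hlim.eventually_gt_atTop z).and (eventually_gt_atTop 0)).exists
  obtain ⟨u, hu, rfl⟩ := intermediate_value_Ioo hR0.le (hf.mono Icc_subset_Ici_self)
    ⟨by rwa [h0], hzR⟩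
  exact ⟨u, hu.1, rfl⟩

lemma integral_Ioi_comp_deriv_smul_of_deriv_pos (hf : ContinuousOn f (Ici 0)) (h0 : f 0 = 0)
    (hff' : ∀ u, 0 < u → HasDerivAt f (f' u) u) (hf' : ∀ u, 0 < u → 0 < f' u)
    (hlim : Tendsto f atTop atTop) (g : ℝ → E) :
    ∫ u in Ioi (0 : ℝ), g u = ∫ u in Ioi (0 : ℝ), f' u • g (f u) := by
  have hmono : StrictMonoOn f (Ici 0) := by
    refine strictMonoOn_of_deriv_pos (convex_Ici 0) hf fun u hu => ?_
    rw [interior_Ici, mem_Ioi] at hu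
    rw [(hff' u hu).deriv]
    exact hf' u hu
  have himage := image_Ioi_zero_of_tendsto_atTop hf h0
    (fun u hu => h0 ▸ hmono self_mem_Ici hu.le hu) hlim
  have h := integral_image_eq_integral_deriv_smul_of_monotoneOn measurableSet_Ioi
    (fun u hu => (hff' u hu).hasDerivWithinAt) (hmono.monotoneOn.mono Ioi_subset_Ici_self) g
  rwa [himage] at h

lemma ae_restrict_mem_and_ne {s : Set ℝ} (hs : MeasurableSet s) (c : ℝ) :
    ∀ᵐ x ∂volume.restrict s, x ∈ s ∧ x ≠ c :=
  (ae_restrict_mem hs).and (ae_restrict_of_ae (Measure.ae_ne volume c))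

end Substitution

section CubicTransformation

open MeasureTheory Set Filter

lemma hasDerivAt_mul_add_sq_div_add_sq {A B C D u : ℝ} (hsum : C + D = 3 * B - A)
    (hprod : C * D = A * B) (hu : u + B ≠ 0) :
    HasDerivAt (fun u : ℝ => u * (u + A) ^ 2 / (u + B) ^ 2)
      ((u + A) * (u + C) * (u + D) / (u + B) ^ 3) u := by
  have hnum : HasDerivAt (fun u : ℝ => u * (u + A) ^ 2)
      (1 * (u + A) ^ 2 + u * (2 * (u + A) ^ 1 * 1)) u :=
    (hasDerivAt_id u).mul (((hasDerivAt_id u).add_const A).pow 2)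
  have hden : HasDerivAt (fun u : ℝ => (u + B) ^ 2) (2 * (u + B) ^ 1 * 1) u :=
    ((hasDerivAt_id u).add_const B).pow 2
  have hcrit : (u + C) * (u + D) = u ^ 2 + (3 * B - A) * u + A * B := by
    rw [← hsum, ← hprod]; ring
  refine (hnum.div hden (pow_ne_zero 2 hu)).congr_deriv ?_
  rw [div_eq_div_iff (by positivity) (by positivity), mul_assoc (u + A), hcrit]
  ring

lemma tendsto_mul_add_sq_div_add_sq_atTop {A B : ℝ} (hA : 0 < A) (hB : 0 < B) :
    Tendsto (fun u : ℝ => u * (u + A) ^ 2 / (u + B) ^ 2) atTop atTop := by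
  refine tendsto_atTop_mono' atTop (f₁ := fun u => u * (A / (A + B)) ^ 2) ?_
    (Tendsto.atTop_mul_const (by positivity) tendsto_id)
  filter_upwards [eventually_ge_atTop 0] with u hu
  rw [mul_div_assoc, ← div_pow]
  gcongr u * ?_ ^ 2
  rw [div_le_div_iff₀ (by positivity) (by positivity)]
  nlinarith

/- The substitution `u ↦ u (u + A)² / (u + B)²` is the `x`-coordinate of a `3`-isogeny; `-C` and
`-D` are its remaining critical points. -/
lemma ellInt_isogeny {x y X Y A B C D : ℝ} (hA : 0 < A) (hB : 0 < B) (hC : 0 < C) (hD : 0 < D)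
    (hsum : C + D = 3 * B - A) (hprod : C * D = A * B)
    (hX : ∀ u, u * (u + A) ^ 2 + X * (u + B) ^ 2 = (u + x) * (u + C) ^ 2)
    (hY : ∀ u, u * (u + A) ^ 2 + Y * (u + B) ^ 2 = (u + y) * (u + D) ^ 2) :
    ellInt X Y = ellInt x y := by
  have hB' : ∀ u : ℝ, 0 ≤ u → u + B ≠ 0 := fun u hu => by positivity
  rw [ellInt, ellInt, integral_Ioi_comp_deriv_smul_of_deriv_pos
    (f := fun u => u * (u + A) ^ 2 / (u + B) ^ 2)
    (ContinuousOn.div (by fun_prop) (by fun_prop) fun u hu => pow_ne_zero 2 (hB' u hu)) (by simp)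
    (fun u hu => hasDerivAt_mul_add_sq_div_add_sq hsum hprod (hB' u hu.le))
    (fun u hu => by positivity) (tendsto_mul_add_sq_div_add_sq_atTop hA hB)]
  congr 1
  refine setIntegral_congr_fun measurableSet_Ioi fun u (hu : 0 < u) => ?_
  have := hB' u hu.le
  have hX' : u * (u + A) ^ 2 / (u + B) ^ 2 + X = (u + x) * (u + C) ^ 2 / (u + B) ^ 2 := by
    rw [← hX]; field_simp
  have hY' : u * (u + A) ^ 2 / (u + B) ^ 2 + Y = (u + y) * (u + D) ^ 2 / (u + B) ^ 2 := by
    rw [← hY]; field_simp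
  have hpullback : u * (u + A) ^ 2 / (u + B) ^ 2 * (u * (u + A) ^ 2 / (u + B) ^ 2 + X) *
      (u * (u + A) ^ 2 / (u + B) ^ 2 + Y) =
      ((u + A) * (u + C) * (u + D) / (u + B) ^ 3) ^ 2 * (u * (u + x) * (u + y)) := by
    rw [hX', hY']; field_simp
  have hpos : 0 < (u + A) * (u + C) * (u + D) / (u + B) ^ 3 := by positivity
  simp only [smul_eq_mul]
  rw [hpullback, Real.sqrt_mul (by positivity), Real.sqrt_sq hpos.le, mul_inv, ← mul_assoc,
    mul_inv_cancel₀ hpos.ne', one_mul]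

/-- Ramanujan's parametrization of the modular equation of degree three by the multiplier `m`:
`cubicBeta m` is the square of the modulus for which
`₂F₁(1/2, 1/2; 1; α) = m ₂F₁(1/2, 1/2; 1; β)`, where `α = cubicAlpha m`. -/
noncomputable def cubicBeta {K : Type*} [Field K] (m : K) : K := (m - 1) ^ 3 * (m + 3) / (16 * m)

/-- The partner `α` of `β = cubicBeta m` in the modular equation of degree three. -/
noncomputable def cubicAlpha {K : Type*} [Field K] (m : K) : K :=
  (m - 1) * (m + 3) ^ 3 / (16 * m ^ 3)

lemma one_sub_cubicBeta {K : Type*} [Field K] [CharZero K] {m : K} (hm : m ≠ 0) :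
    1 - cubicBeta m = (1 + m) ^ 3 * (3 - m) / (16 * m) := by
  rw [cubicBeta]; field_simp; ring

lemma one_sub_cubicAlpha {K : Type*} [Field K] [CharZero K] {m : K} (hm : m ≠ 0) :
    1 - cubicAlpha m = (1 + m) * (3 - m) ^ 3 / (16 * m ^ 3) := by
  rw [cubicAlpha]; field_simp; ring

lemma cubicBeta_neg {K : Type*} [Field K] [CharZero K] {m : K} (hm : m ≠ 0) :
    cubicBeta (-m) = 1 - cubicBeta m := by
  rw [cubicBeta, cubicBeta]; field_simp; ring

lemma cubicAlpha_neg {K : Type*} [Field K] [CharZero K] {m : K} (hm : m ≠ 0) :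
    cubicAlpha (-m) = 1 - cubicAlpha m := by
  rw [cubicAlpha, cubicAlpha]; field_simp; ring

lemma ellInt_eq_mul_of_ellInt_mul_eq {c d k x y X Y : ℝ} (hc : 0 < c) (hd : 0 < d) (hk : 0 < k)
    (hcd : c = k ^ 2 * d) (h : ellInt (c * X) (c * Y) = ellInt (d * x) (d * y)) :
    ellInt X Y = k * ellInt x y := by
  have hd' : 0 < √d := Real.sqrt_pos.2 hd
  rw [ellInt_mul_mul hc, ellInt_mul_mul hd, hcd, Real.sqrt_mul (by positivity),
    Real.sqrt_sq hk.le] at h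
  field_simp at h
  linarith

lemma ellInt_one_sub_cubicAlpha {m : ℝ} (h0 : 0 < m) (h3 : m < 3) :
    ellInt 1 (1 - cubicAlpha m) = m * ellInt 1 (1 - cubicBeta m) := by
  have : 0 < 3 - m := by linarith
  refine ellInt_eq_mul_of_ellInt_mul_eq (c := 16 * m ^ 3) (d := 16 * m) (by positivity)
    (by positivity) h0 (by ring) ?_
  rw [one_sub_cubicAlpha h0.ne', one_sub_cubicBeta h0.ne', mul_div_cancel₀ _ (by positivity),
    mul_div_cancel₀ _ (by positivity)]
  refine ellInt_isogeny (A := 4 * m * (3 - m) * (1 + m)) (B := 4 * (1 + m) ^ 2)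
    (C := 4 * m * (1 + m) ^ 2) (D := 4 * (1 + m) * (3 - m)) (by positivity) (by positivity)
    (by positivity) (by positivity) ?_ ?_ ?_ ?_ <;> intros <;> ring

lemma ellInt_cubicAlpha_of_one_lt {m : ℝ} (h1 : 1 < m) :
    ellInt 1 (cubicAlpha m) = m / 3 * ellInt 1 (cubicBeta m) := by
  have : 0 < m - 1 := by linarith
  have : 0 < m := by linarith
  have hbeta : 144 * m * cubicBeta m = 9 * ((m - 1) ^ 3 * (m + 3)) := by
    rw [cubicBeta]; field_simp; ring
  refine ellInt_eq_mul_of_ellInt_mul_eq (c := 16 * m ^ 3) (d := 144 * m) (by positivity)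
    (by positivity) (by positivity) (by ring) ?_
  rw [hbeta, cubicAlpha, mul_div_cancel₀ _ (by positivity)]
  refine (ellInt_isogeny (A := 12 * m * (m - 1) * (m + 3)) (B := 4 * m ^ 2 * (m + 3) ^ 2 / 3)
    (C := 4 * m * (m + 3) ^ 2) (D := 4 * m ^ 2 * (m - 1) * (m + 3)) (by positivity) (by positivity)
    (by positivity) (by positivity) ?_ ?_ ?_ ?_).symm <;> intros <;> ring

lemma ellInt_neg_cubicAlpha {m : ℝ} (h0 : 0 < m) (h1 : m < 1) :
    ellInt (-cubicAlpha m) (1 - cubicAlpha m) =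
      m / 3 * ellInt (-cubicBeta m) (1 - cubicBeta m) := by
  have : 0 < 1 - m := by linarith
  have : 0 < 3 - m := by linarith
  have hB : 9 - m ^ 2 = (3 - m) * (3 + m) := by ring
  have halpha : 16 * m ^ 3 * -cubicAlpha m = (1 - m) * (m + 3) ^ 3 := by
    rw [cubicAlpha]; field_simp; ring
  have hbeta : 144 * m * -cubicBeta m = 9 * ((1 - m) ^ 3 * (m + 3)) := by
    rw [cubicBeta]; field_simp; ring
  have hbeta' : 144 * m * (1 - cubicBeta m) = 9 * ((1 + m) ^ 3 * (3 - m)) := by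
    rw [one_sub_cubicBeta h0.ne']; field_simp; ring
  refine ellInt_eq_mul_of_ellInt_mul_eq (c := 16 * m ^ 3) (d := 144 * m) (by positivity)
    (by positivity) (by positivity) (by ring) ?_
  rw [halpha, hbeta, hbeta', one_sub_cubicAlpha h0.ne', mul_div_cancel₀ _ (by positivity)]
  refine (ellInt_isogeny (A := 3 * (1 - m) * (1 + m) * (3 + m) * (3 - m))
    (B := (9 - m ^ 2) ^ 2 / 3) (C := (1 - m) * (3 - m) ^ 2 * (3 + m))
    (D := (1 + m) * (3 + m) ^ 2 * (3 - m)) (by positivity) (by rw [hB]; positivity)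
    (by positivity) (by positivity) ?_ ?_ ?_ ?_).symm <;> intros <;> ring

end CubicTransformation

section ContourShift

open MeasureTheory Set Filter
open Complex (I)
open scoped Topology

/-- The half strip `a < re z < b`, `0 < im z`. -/
def halfStrip (a b : ℝ) : Set ℂ := {z | a < z.re ∧ z.re < b ∧ 0 < z.im}

lemma isOpen_halfStrip (a b : ℝ) : IsOpen (halfStrip a b) :=
  (isOpen_lt continuous_const Complex.continuous_re).inter
    ((isOpen_lt Complex.continuous_re continuous_const).inter
      (isOpen_lt continuous_const Complex.continuous_im))

lemma convex_halfStrip (a b : ℝ) : Convex ℝ (halfStrip a b) :=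
  (convex_halfSpace_re_gt a).inter
    ((convex_halfSpace_re_lt b).inter (convex_halfSpace_im_gt 0))

lemma add_mul_I_mem_halfStrip {a b ξ τ : ℝ} (hξ : ξ ∈ Ioo a b) (hτ : 0 < τ) :
    (ξ + τ * I : ℂ) ∈ halfStrip a b := by
  simpa [halfStrip] using ⟨hξ.1, hξ.2, hτ⟩

/-- The pullback of `F(z) dz` to the graph `ξ ↦ ξ + t y(ξ) i` of the height function `t • y`,
where `y'` is the derivative of `y`. -/
noncomputable def arcIntegrand (F : ℂ → ℂ) (y y' : ℝ → ℝ) (t ξ : ℝ) : ℂ :=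
  F (ξ + (t * y ξ : ℝ) * I) * (1 + (t * y' ξ : ℝ) * I)

/-- The data for pushing the graph of `y` down to the real interval `(a, b)`: the function `F` is
holomorphic on the half strip above `(a, b)` and dominated below the graph by an integrable
function `W` of `re z`, except over one point `c`, and the vertical segments joining the two
contours at the ends contribute nothing in the limit. -/
structure IsDominatedArc (F : ℂ → ℂ) (W y y' : ℝ → ℝ) (a b c L : ℝ) : Prop where
  mem : c ∈ Ioo a b
  differentiableOn : DifferentiableOn ℂ F (halfStrip a b)
  integrableOn : IntegrableOn W (Ioo a b)
  norm_le : ∀ ξ ∈ Ioo a b, ξ ≠ c → ∀ τ ∈ Ioc 0 (y ξ), ‖F (ξ + τ * I)‖ ≤ W ξ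
  hasDerivAt : ∀ ξ ∈ Ioo a b, HasDerivAt y (y' ξ) ξ
  continuousOn : ContinuousOn y' (Ioo a b)
  abs_deriv_le : ∀ ξ ∈ Ioo a b, |y' ξ| ≤ L
  pos : ∀ ξ ∈ Ioo a b, 0 < y ξ
  tendsto_left : Tendsto (fun ξ => W ξ * y ξ) (𝓝[>] a) (𝓝 0)
  tendsto_right : Tendsto (fun ξ => W ξ * y ξ) (𝓝[<] b) (𝓝 0)

namespace IsDominatedArc

variable {F : ℂ → ℂ} {W y y' : ℝ → ℝ} {a b c L t : ℝ}

lemma norm_scaled_le (h : IsDominatedArc F W y y' a b c L) (ht : t ∈ Ioc (0 : ℝ) 1) {ξ : ℝ}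
    (hξ : ξ ∈ Ioo a b) (hc : ξ ≠ c) : ‖F (ξ + (t * y ξ : ℝ) * I)‖ ≤ W ξ :=
  h.norm_le ξ hξ hc _ ⟨mul_pos ht.1 (h.pos ξ hξ), mul_le_of_le_one_left (h.pos ξ hξ).le ht.2⟩

lemma hasDerivAt_scaled (h : IsDominatedArc F W y y' a b c L) (t : ℝ) {ξ : ℝ} (hξ : ξ ∈ Ioo a b) :
    HasDerivAt (fun ξ : ℝ => (ξ + (t * y ξ : ℝ) * I : ℂ)) (1 + (t * y' ξ : ℝ) * I) ξ :=
  (hasDerivAt_id ξ).ofReal_comp.add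
    (((h.hasDerivAt ξ hξ).const_mul t).ofReal_comp.mul_const I)

lemma continuousOn_arcIntegrand (h : IsDominatedArc F W y y' a b c L) (ht : 0 < t) :
    ContinuousOn (arcIntegrand F y y' t) (Ioo a b) := by
  refine (h.differentiableOn.continuousOn.comp
    (fun ξ hξ => (h.hasDerivAt_scaled t hξ).continuousAt.continuousWithinAt)
    fun ξ hξ => add_mul_I_mem_halfStrip hξ (mul_pos ht (h.pos ξ hξ))).mul ?_
  exact continuousOn_const.add ((Complex.continuous_ofReal.comp_continuousOn
    (continuousOn_const.mul h.continuousOn)).mul continuousOn_const)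

lemma norm_arcIntegrand_le (h : IsDominatedArc F W y y' a b c L) (ht : t ∈ Ioc (0 : ℝ) 1) {ξ : ℝ}
    (hξ : ξ ∈ Ioo a b) (hc : ξ ≠ c) : ‖arcIntegrand F y y' t ξ‖ ≤ W ξ * (1 + L) := by
  have hF := h.norm_scaled_le ht hξ hc
  rw [arcIntegrand, norm_mul]
  refine mul_le_mul hF ((norm_add_le _ _).trans ?_) (norm_nonneg _) ((norm_nonneg _).trans hF)
  rw [norm_one, norm_mul, Complex.norm_I, mul_one, Complex.norm_real, Real.norm_eq_abs, abs_mul,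
    abs_of_pos ht.1]
  linarith [mul_le_of_le_one_left (abs_nonneg (y' ξ)) ht.2, h.abs_deriv_le ξ hξ]

lemma integrableOn_arcIntegrand (h : IsDominatedArc F W y y' a b c L) (ht : t ∈ Ioc (0 : ℝ) 1) :
    IntegrableOn (arcIntegrand F y y' t) (Ioo a b) :=
  Integrable.mono' (h.integrableOn.mul_const (1 + L))
    ((h.continuousOn_arcIntegrand ht.1).aestronglyMeasurable measurableSet_Ioo) (by
      filter_upwards [ae_restrict_mem_and_ne measurableSet_Ioo c] with ξ hξ
        using h.norm_arcIntegrand_le ht hξ.1 hξ.2)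

lemma norm_primitive_sub_le (h : IsDominatedArc F W y y' a b c L) {G : ℂ → ℂ}
    (hG : ∀ z ∈ halfStrip a b, HasDerivAt G (F z) z) (ht : t ∈ Ioc (0 : ℝ) 1) {ξ : ℝ}
    (hξ : ξ ∈ Ioo a b) (hc : ξ ≠ c) :
    ‖G (ξ + (1 * y ξ : ℝ) * I) - G (ξ + (t * y ξ : ℝ) * I)‖ ≤ W ξ * y ξ := by
  have hW : 0 ≤ W ξ := (norm_nonneg _).trans (h.norm_scaled_le ht hξ hc)
  have hderiv : ∀ s ∈ Ioc (0 : ℝ) 1, HasDerivWithinAt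
      (fun s : ℝ => G (ξ + (s * y ξ : ℝ) * I))
      (F (ξ + (s * y ξ : ℝ) * I) * ((1 * y ξ : ℝ) * I)) (Ioc 0 1) s := fun s hs =>
    ((hG _ (add_mul_I_mem_halfStrip hξ (mul_pos hs.1 (h.pos ξ hξ)))).comp s
      ((((hasDerivAt_id s).mul_const (y ξ)).ofReal_comp.mul_const I).const_add
        (ξ : ℂ))).hasDerivWithinAt
  have hbound : ∀ s ∈ Ioc (0 : ℝ) 1,
      ‖F (ξ + (s * y ξ : ℝ) * I) * ((1 * y ξ : ℝ) * I)‖ ≤ W ξ * y ξ := fun s hs => by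
    rw [norm_mul, norm_mul, Complex.norm_I, mul_one, Complex.norm_real, one_mul,
      Real.norm_of_nonneg (h.pos ξ hξ).le]
    exact mul_le_mul_of_nonneg_right (h.norm_scaled_le hs hξ hc) (h.pos ξ hξ).le
  refine ((convex_Ioc 0 1).norm_image_sub_le_of_norm_hasDerivWithin_le hderiv hbound ht
    ⟨one_pos, le_rfl⟩).trans
      (mul_le_of_le_one_right (mul_nonneg hW (h.pos ξ hξ).le) ?_)
  rw [Real.norm_of_nonneg (by linarith [ht.2])]
  linarith [ht.1]

lemma integral_arcIntegrand_eq_of_mem_Ioc (h : IsDominatedArc F W y y' a b c L)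
    (ht : t ∈ Ioc (0 : ℝ) 1) :
    ∫ ξ in Ioo a b, arcIntegrand F y y' 1 ξ = ∫ ξ in Ioo a b, arcIntegrand F y y' t ξ := by
  obtain ⟨G, hG'⟩ := (convex_halfStrip a b).exists_forall_hasDerivWithinAt h.differentiableOn
  have hG : ∀ z ∈ halfStrip a b, HasDerivAt G (F z) z := fun z hz =>
    (hG' z hz).hasDerivAt ((isOpen_halfStrip a b).mem_nhds hz)
  have h1 : (1 : ℝ) ∈ Ioc (0 : ℝ) 1 := ⟨one_pos, le_rfl⟩
  have hab : a < b := h.mem.1.trans h.mem.2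
  have hderiv : ∀ s ∈ Ioc (0 : ℝ) 1, ∀ ξ ∈ Ioo a b, HasDerivAt
      (fun ξ : ℝ => G (ξ + (s * y ξ : ℝ) * I)) (arcIntegrand F y y' s ξ) ξ := fun s hs ξ hξ =>
    (hG _ (add_mul_I_mem_halfStrip hξ (mul_pos hs.1 (h.pos ξ hξ)))).comp ξ
      (h.hasDerivAt_scaled s hξ)
  have hleft : ∀ᶠ ξ in 𝓝[>] a, ξ ∈ Ioo a b ∧ ξ ≠ c := by
    filter_upwards [Ioo_mem_nhdsGT h.mem.1] with ξ hξ
      using ⟨⟨hξ.1, hξ.2.trans h.mem.2⟩, hξ.2.ne⟩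
  have hright : ∀ᶠ ξ in 𝓝[<] b, ξ ∈ Ioo a b ∧ ξ ≠ c := by
    filter_upwards [Ioo_mem_nhdsLT h.mem.2] with ξ hξ
      using ⟨⟨h.mem.1.trans hξ.1, hξ.2⟩, hξ.1.ne'⟩
  have hint := (h.integrableOn_arcIntegrand h1).sub (h.integrableOn_arcIntegrand ht)
  have hFTC := intervalIntegral.integral_eq_sub_of_hasDerivAt_of_tendsto hab
    (fun ξ hξ => (hderiv 1 h1 ξ hξ).sub (hderiv t ht ξ hξ))
    ((intervalIntegrable_iff_integrableOn_Ioo_of_le hab.le).2 hint)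
    (squeeze_zero_norm' (hleft.mono fun ξ hξ => h.norm_primitive_sub_le hG ht hξ.1 hξ.2)
      h.tendsto_left)
    (squeeze_zero_norm' (hright.mono fun ξ hξ => h.norm_primitive_sub_le hG ht hξ.1 hξ.2)
      h.tendsto_right)
  rw [intervalIntegral.integral_of_le hab.le, integral_Ioc_eq_integral_Ioo, sub_zero] at hFTC
  exact sub_eq_zero.1 ((integral_sub (h.integrableOn_arcIntegrand h1)
    (h.integrableOn_arcIntegrand ht)).symm.trans hFTC)

variable {f : ℝ → ℂ}

lemma tendsto_arcIntegrand (h : IsDominatedArc F W y y' a b c L) {ξ : ℝ} (hξ : ξ ∈ Ioo a b)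
    (hf : Tendsto (fun τ : ℝ => F (ξ + τ * I)) (𝓝[>] 0) (𝓝 (f ξ))) :
    Tendsto (fun t => arcIntegrand F y y' t ξ) (𝓝[>] 0) (𝓝 (f ξ)) := by
  have hheight : Tendsto (fun t : ℝ => t * y ξ) (𝓝[>] 0) (𝓝[>] 0) := by
    refine tendsto_nhdsWithin_iff.2 ⟨?_, ?_⟩
    · simpa using ((tendsto_id (x := 𝓝 (0 : ℝ))).mul_const (y ξ)).mono_left nhdsWithin_le_nhds
    · filter_upwards [self_mem_nhdsWithin] with t ht using mul_pos ht (h.pos ξ hξ)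
  have hslope : Tendsto (fun t : ℝ => (1 + (t * y' ξ : ℝ) * I : ℂ)) (𝓝[>] 0) (𝓝 1) := by
    have hc : Continuous fun t : ℝ => (1 + (t * y' ξ : ℝ) * I : ℂ) := by fun_prop
    simpa using hc.continuousWithinAt.tendsto (x := (0 : ℝ)) (s := Ioi 0)
  simpa [arcIntegrand, Function.comp_def] using (hf.comp hheight).mul hslope

lemma tendsto_integral_arcIntegrand (h : IsDominatedArc F W y y' a b c L)
    (hf : ∀ ξ ∈ Ioo a b, ξ ≠ c → Tendsto (fun τ : ℝ => F (ξ + τ * I)) (𝓝[>] 0) (𝓝 (f ξ))) :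
    Tendsto (fun t => ∫ ξ in Ioo a b, arcIntegrand F y y' t ξ) (𝓝[>] 0)
      (𝓝 (∫ ξ in Ioo a b, f ξ)) := by
  have hmem : ∀ᶠ t : ℝ in 𝓝[>] 0, t ∈ Ioc (0 : ℝ) 1 := Ioc_mem_nhdsGT one_pos
  have hae := ae_restrict_mem_and_ne (measurableSet_Ioo (a := a) (b := b)) c
  refine tendsto_integral_filter_of_dominated_convergence (fun ξ => W ξ * (1 + L)) ?_ ?_
    (h.integrableOn.mul_const _) ?_
  · filter_upwards [hmem] with t ht using (h.integrableOn_arcIntegrand ht).aestronglyMeasurable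
  · filter_upwards [hmem] with t ht
    filter_upwards [hae] with ξ hξ using h.norm_arcIntegrand_le ht hξ.1 hξ.2
  · filter_upwards [hae] with ξ hξ using h.tendsto_arcIntegrand hξ.1 (hf ξ hξ.1 hξ.2)

lemma integrableOn_boundaryValue (h : IsDominatedArc F W y y' a b c L)
    (hf : ∀ ξ ∈ Ioo a b, ξ ≠ c → Tendsto (fun τ : ℝ => F (ξ + τ * I)) (𝓝[>] 0) (𝓝 (f ξ))) :
    IntegrableOn f (Ioo a b) := by
  have hmem : ∀ᶠ t : ℝ in 𝓝[>] 0, t ∈ Ioc (0 : ℝ) 1 := Ioc_mem_nhdsGT one_pos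
  have hae := ae_restrict_mem_and_ne (measurableSet_Ioo (a := a) (b := b)) c
  obtain ⟨u, -, hu0, hu⟩ := exists_seq_strictAnti_tendsto' (one_pos (α := ℝ))
  have hu' : Tendsto u atTop (𝓝[>] 0) :=
    tendsto_nhdsWithin_iff.2 ⟨hu, Eventually.of_forall fun n => (hu0 n).1⟩
  have hmeas : AEStronglyMeasurable f (volume.restrict (Ioo a b)) :=
    aestronglyMeasurable_of_tendsto_ae atTop (f := fun n => arcIntegrand F y y' (u n))
      (fun n => (h.integrableOn_arcIntegrand ⟨(hu0 n).1, (hu0 n).2.le⟩).aestronglyMeasurable) (by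
        filter_upwards [hae] with ξ hξ
          using (h.tendsto_arcIntegrand hξ.1 (hf ξ hξ.1 hξ.2)).comp hu')
  refine Integrable.mono' (h.integrableOn.mul_const (1 + L)) hmeas ?_
  filter_upwards [hae] with ξ hξ
  exact le_of_tendsto (h.tendsto_arcIntegrand hξ.1 (hf ξ hξ.1 hξ.2)).norm
    (hmem.mono fun t ht => h.norm_arcIntegrand_le ht hξ.1 hξ.2)

theorem integral_arcIntegrand_eq_integral_boundaryValue (h : IsDominatedArc F W y y' a b c L)
    (hf : ∀ ξ ∈ Ioo a b, ξ ≠ c → Tendsto (fun τ : ℝ => F (ξ + τ * I)) (𝓝[>] 0) (𝓝 (f ξ))) :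
    ∫ ξ in Ioo a b, arcIntegrand F y y' 1 ξ = ∫ ξ in Ioo a b, f ξ :=
  tendsto_nhds_unique (tendsto_const_nhds.congr' (by
    filter_upwards [Ioc_mem_nhdsGT one_pos] with t ht
      using h.integral_arcIntegrand_eq_of_mem_Ioc ht)) (h.tendsto_integral_arcIntegrand hf)

end IsDominatedArc

end ContourShift

section ComplexPeriod

open MeasureTheory Set Filter
open Complex (I slitPlane)
open scoped Real Topology

/-- The integrand of the complex period `ellIntC`, with the exponent `e = -1/2` left free so that
its derivative in `w` is of the same kind. -/
noncomputable def ellKernel (e : ℝ) (w : ℂ) (u : ℝ) : ℂ :=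
  ((√(u * (u + 1)))⁻¹ : ℝ) * (u + w) ^ (e : ℂ)

/-- The holomorphic continuation of `w ↦ ellInt 1 w` to the slit plane. -/
noncomputable def ellIntC (w : ℂ) : ℂ :=
  (1 / π : ℝ) * ∫ u in Ioi (0 : ℝ), ellKernel (-(1 / 2)) w u

lemma ellIntC_ofReal {w : ℝ} (hw : 0 < w) : ellIntC w = ellInt 1 w := by
  rw [ellIntC, ellInt, Complex.ofReal_mul, ← integral_complex_ofReal]
  congr 1
  refine setIntegral_congr_fun measurableSet_Ioi fun u (hu : 0 < u) => ?_
  simp only [ellKernel]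
  rw [← Complex.ofReal_add, ← Complex.ofReal_cpow (by positivity), ← Complex.ofReal_mul,
    Real.rpow_neg (by positivity), ← Real.sqrt_eq_rpow, ← mul_inv, ← Real.sqrt_mul (by positivity)]

lemma measurable_ellKernel (e : ℝ) (w : ℂ) : Measurable (ellKernel e w) :=
  Measurable.mul (by fun_prop) ((by fun_prop : Measurable fun u : ℝ => (u : ℂ) + w).pow_const _)

/-- The integrand of `ellIntC w` after the substitution `u = ‖w‖ s`, which leaves only the phase
`w / ‖w‖` under the singular power. -/
noncomputable def scaledEllKernel (w : ℂ) (s : ℝ) : ℂ :=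
  ((√(s * (‖w‖ * s + 1)))⁻¹ : ℝ) * (s + w / ‖w‖) ^ ((-(1 / 2) : ℝ) : ℂ)

lemma measurable_scaledEllKernel (w : ℂ) : Measurable (scaledEllKernel w) :=
  Measurable.mul (by fun_prop)
    ((by fun_prop : Measurable fun s : ℝ => (s : ℂ) + w / ‖w‖).pow_const _)

lemma scaledEllKernel_one : scaledEllKernel 1 = ellKernel (-(1 / 2)) 1 := by
  ext s
  simp [scaledEllKernel, ellKernel]

lemma ofReal_mul_cpow {r : ℝ} (hr : 0 < r) (z e : ℂ) :
    ((r : ℂ) * z) ^ e = (r : ℂ) ^ e * z ^ e := by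
  rcases eq_or_ne z 0 with rfl | hz
  · rcases eq_or_ne e 0 with rfl | he
    · simp
    · simp [Complex.zero_cpow he]
  · have hr' : (r : ℂ) ≠ 0 := by exact_mod_cast hr.ne'
    rw [Complex.cpow_def_of_ne_zero (mul_ne_zero hr' hz), Complex.cpow_def_of_ne_zero hr',
      Complex.cpow_def_of_ne_zero hz, Complex.log_ofReal_mul hr hz, ← Complex.exp_add,
      Complex.ofReal_log hr.le, add_mul]

lemma ellIntC_eq_integral_scaledEllKernel {w : ℂ} (hw : w ≠ 0) :
    ellIntC w = (1 / π : ℝ) * ∫ s in Ioi (0 : ℝ), scaledEllKernel w s := by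
  have hn : 0 < ‖w‖ := norm_pos_iff.2 hw
  have hscale := integral_comp_mul_left_Ioi' (ellKernel (-(1 / 2)) w) 0 hn
  rw [mul_zero] at hscale
  rw [ellIntC, ← hscale, ← integral_smul]
  congr 1
  refine setIntegral_congr_fun measurableSet_Ioi fun s (hs : 0 < s) => ?_
  have hn' : (‖w‖ : ℂ) ≠ 0 := by exact_mod_cast hn.ne'
  simp only [Complex.real_smul, ellKernel, scaledEllKernel]
  rw [show ((‖w‖ * s : ℝ) : ℂ) + w = (‖w‖ : ℝ) * (s + w / ‖w‖) by push_cast; field_simp,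
    ofReal_mul_cpow hn, ← Complex.ofReal_cpow hn.le, mul_assoc ‖w‖ s, Real.sqrt_mul hn.le,
    Real.rpow_neg hn.le, ← Real.sqrt_eq_rpow, ← mul_assoc, ← mul_assoc, ← Complex.ofReal_mul,
    ← Complex.ofReal_mul]
  congr 2
  have := Real.sq_sqrt hn.le
  have := Real.sqrt_pos.2 hn
  field_simp
  linarith

/-- A majorant of `‖w‖ ^ (1 / 16) * ‖scaledEllKernel w s‖` that does not depend on `w`. Any
exponent in `(0, 1 / 2)` in place of `1 / 16` would make it integrable; this one is small enough
for the applications. -/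
noncomputable def ellMajorant (s : ℝ) : ℝ := s ^ (-(9 / 16) : ℝ) * |s - 1| ^ (-(1 / 2) : ℝ)

lemma measurable_ellMajorant : Measurable ellMajorant :=
  (measurable_id.pow_const _).mul ((by fun_prop : Measurable fun s : ℝ => |s - 1|).pow_const _)

lemma integrableOn_ellMajorant_Ioo : IntegrableOn ellMajorant (Ioo 0 1) := by
  refine (integrableOn_rpow_mul_one_sub_rpow (a := -(9 / 16)) (b := -(1 / 2))
    (by norm_num) (by norm_num)).congr_fun (fun s hs => ?_) measurableSet_Ioo
  simp only [ellMajorant]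
  rw [abs_of_neg (by linarith [hs.2]), neg_sub]

lemma integrableOn_ellMajorant_Ioc : IntegrableOn ellMajorant (Ioc 1 2) := by
  have hpole : IntegrableOn (fun s : ℝ => (s - 1) ^ (-(1 / 2) : ℝ)) (Ioc 1 2) := by
    have h := (intervalIntegral.intervalIntegrable_rpow' (a := 0) (b := 1)
      (r := -(1 / 2)) (by norm_num)).comp_sub_right 1
    norm_num at h
    rwa [intervalIntegrable_iff_integrableOn_Ioc_of_le (by norm_num)] at h
  refine hpole.mono' measurable_ellMajorant.aestronglyMeasurable ?_
  filter_upwards [ae_restrict_mem measurableSet_Ioc] with s hs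
  have h0 : 0 < s - 1 := by linarith [hs.1]
  rw [ellMajorant, Real.norm_of_nonneg (by have := hs.1; positivity), abs_of_pos h0]
  exact mul_le_of_le_one_left (by positivity)
    (Real.rpow_le_one_of_one_le_of_nonpos hs.1.le (by norm_num))

lemma integrableOn_ellMajorant_Ioi_two : IntegrableOn ellMajorant (Ioi 2) := by
  refine ((integrableOn_Ioi_rpow_of_lt (a := -(17 / 16)) (c := 2) (by norm_num)
    (by norm_num)).const_mul (2 ^ (1 / 2 : ℝ))).mono'
      measurable_ellMajorant.aestronglyMeasurable ?_
  filter_upwards [ae_restrict_mem measurableSet_Ioi] with s (hs : 2 < s)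
  have h0 : 0 < s - 1 := by linarith
  have htail : (s - 1) ^ (-(1 / 2) : ℝ) ≤ s ^ (-(1 / 2) : ℝ) * 2 ^ (1 / 2 : ℝ) := by
    rw [← div_inv_eq_mul, ← Real.rpow_neg (by norm_num),
      ← Real.div_rpow (by linarith) (by norm_num)]
    exact Real.rpow_le_rpow_of_nonpos (by linarith) (by linarith) (by norm_num)
  rw [ellMajorant, Real.norm_of_nonneg (by positivity), abs_of_pos h0,
    show (-(17 / 16) : ℝ) = -(9 / 16) + -(1 / 2) by norm_num, Real.rpow_add (by linarith)]
  calc s ^ (-(9 / 16) : ℝ) * (s - 1) ^ (-(1 / 2) : ℝ)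
      ≤ s ^ (-(9 / 16) : ℝ) * (s ^ (-(1 / 2) : ℝ) * 2 ^ (1 / 2 : ℝ)) := by gcongr
    _ = _ := by ring

lemma integrableOn_ellMajorant : IntegrableOn ellMajorant (Ioi 0) := by
  have h1 : IntegrableOn ellMajorant {1} := by simp [IntegrableOn, Measure.restrict_singleton]
  have h := (integrableOn_ellMajorant_Ioo.union h1).union
    (integrableOn_ellMajorant_Ioc.union integrableOn_ellMajorant_Ioi_two)
  rwa [Ioo_union_right zero_lt_one, Ioc_union_Ioi_eq_Ioi one_le_two,
    Ioc_union_Ioi_eq_Ioi zero_le_one] at h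

lemma abs_sub_one_le_norm_add_div_norm {w : ℂ} (hw : w ≠ 0) {s : ℝ} (hs : 0 ≤ s) :
    |s - 1| ≤ ‖(s : ℂ) + w / ‖w‖‖ := by
  have h := abs_norm_sub_norm_le (s : ℂ) (-(w / ‖w‖))
  rwa [sub_neg_eq_add, norm_neg, norm_div, Complex.norm_real, Complex.norm_real, norm_norm,
    div_self (norm_ne_zero_iff.2 hw), Real.norm_of_nonneg hs] at h

lemma inv_sqrt_mul_add_one_le {r s : ℝ} (hr : 0 < r) (hs : 0 < s) :
    (√(s * (r * s + 1)))⁻¹ ≤ r ^ (-(1 / 16) : ℝ) * s ^ (-(9 / 16) : ℝ) := by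
  have hle : (r * s) ^ (1 / 8 : ℝ) ≤ r * s + 1 := by
    calc (r * s) ^ (1 / 8 : ℝ) ≤ (r * s + 1) ^ (1 / 8 : ℝ) := by gcongr; linarith
      _ ≤ (r * s + 1) ^ (1 : ℝ) :=
        Real.rpow_le_rpow_of_exponent_le (by have := mul_pos hr hs; linarith) (by norm_num)
      _ = r * s + 1 := Real.rpow_one _
  rw [Real.sqrt_eq_rpow, ← Real.rpow_neg (by positivity), Real.mul_rpow hs.le (by positivity)]
  calc s ^ (-(1 / 2) : ℝ) * (r * s + 1) ^ (-(1 / 2) : ℝ)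
      ≤ s ^ (-(1 / 2) : ℝ) * ((r * s) ^ (1 / 8 : ℝ)) ^ (-(1 / 2) : ℝ) := by
        gcongr ?_ * ?_
        exact Real.rpow_le_rpow_of_nonpos (by positivity) hle (by norm_num)
    _ = r ^ (-(1 / 16) : ℝ) * s ^ (-(9 / 16) : ℝ) := by
      rw [← Real.rpow_mul (by positivity), Real.mul_rpow hr.le hs.le, mul_left_comm,
        ← Real.rpow_add hs]
      norm_num

lemma norm_scaledEllKernel_le {w : ℂ} (hw : w ≠ 0) {s : ℝ} (hs : 0 < s) (hs1 : s ≠ 1) :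
    ‖scaledEllKernel w s‖ ≤ ‖w‖ ^ (-(1 / 16) : ℝ) * ellMajorant s := by
  rw [scaledEllKernel, norm_mul, Complex.norm_cpow_real, Complex.norm_real,
    Real.norm_of_nonneg (by positivity), ellMajorant, ← mul_assoc]
  exact mul_le_mul (inv_sqrt_mul_add_one_le (norm_pos_iff.2 hw) hs)
    (Real.rpow_le_rpow_of_nonpos (abs_pos.2 (sub_ne_zero.2 hs1))
      (abs_sub_one_le_norm_add_div_norm hw hs.le) (by norm_num)) (by positivity) (by positivity)

lemma integrableOn_scaledEllKernel {w : ℂ} (hw : w ≠ 0) :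
    IntegrableOn (scaledEllKernel w) (Ioi 0) := by
  refine (integrableOn_ellMajorant.const_mul (‖w‖ ^ (-(1 / 16) : ℝ))).mono'
    (measurable_scaledEllKernel w).aestronglyMeasurable ?_
  filter_upwards [ae_restrict_mem_and_ne measurableSet_Ioi 1] with s hs
  exact norm_scaledEllKernel_le hw hs.1 hs.2

lemma exists_norm_ellIntC_le : ∃ C : ℝ, 0 ≤ C ∧
    ∀ w : ℂ, w ≠ 0 → ‖ellIntC w‖ ≤ C * ‖w‖ ^ (-(1 / 16) : ℝ) := by
  have hnonneg : 0 ≤ ∫ s in Ioi (0 : ℝ), ellMajorant s :=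
    setIntegral_nonneg measurableSet_Ioi fun s (hs : 0 < s) => by
      rw [ellMajorant]; positivity
  refine ⟨1 / π * ∫ s in Ioi (0 : ℝ), ellMajorant s, by positivity, fun w hw => ?_⟩
  rw [ellIntC_eq_integral_scaledEllKernel hw, norm_mul, Complex.norm_real,
    Real.norm_of_nonneg (by positivity), mul_assoc]
  gcongr
  rw [mul_comm, ← integral_const_mul]
  refine norm_integral_le_of_norm_le (integrableOn_ellMajorant.const_mul _) ?_
  filter_upwards [ae_restrict_mem_and_ne measurableSet_Ioi 1] with s hs
  exact norm_scaledEllKernel_le hw hs.1 hs.2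

lemma ofReal_add_mem_slitPlane {w : ℂ} (hw : w ∈ slitPlane) {u : ℝ} (hu : 0 ≤ u) :
    (u : ℂ) + w ∈ slitPlane := by
  rw [Complex.mem_slitPlane_iff] at hw ⊢
  simp only [Complex.add_re, Complex.ofReal_re, Complex.add_im, Complex.ofReal_im, zero_add]
  exact hw.imp (fun h => by linarith) id

-- `(u + w) / (u + 1)` runs through the segment from `w` to `1`, a compact set avoiding `0`.
lemma exists_mul_le_norm_ofReal_add {w : ℂ} (hw : w ∈ slitPlane) :
    ∃ c : ℝ, 0 < c ∧ ∀ u : ℝ, 0 < u → c * (u + 1) ≤ ‖(u : ℂ) + w‖ := by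
  have hc : IsCompact (segment ℝ 1 w) := by
    rw [segment_eq_image]
    exact isCompact_Icc.image (by fun_prop)
  obtain ⟨z, hz, hmin⟩ := hc.exists_isMinOn ⟨1, left_mem_segment ℝ 1 w⟩ continuous_norm.continuousOn
  have hsub : segment ℝ 1 w ⊆ slitPlane := Complex.starConvex_one_slitPlane.segment_subset hw
  refine ⟨‖z‖, norm_pos_iff.2 (Complex.slitPlane_ne_zero (hsub hz)), fun u hu => ?_⟩
  have h1 : (0 : ℝ) < u + 1 := by positivity
  have h1' : ((u : ℂ) + 1) ≠ 0 := by exact_mod_cast h1.ne'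
  have hmem : ((u : ℂ) + w) / (u + 1) ∈ segment ℝ 1 w := by
    refine ⟨u / (u + 1), 1 / (u + 1), by positivity, by positivity, by field_simp, ?_⟩
    simp only [Complex.real_smul]
    push_cast
    field_simp
  have hnorm : ‖(u : ℂ) + 1‖ = u + 1 := by
    rw [← Complex.ofReal_one, ← Complex.ofReal_add, Complex.norm_real, Real.norm_of_nonneg h1.le]
  rw [← le_div_iff₀ h1, ← hnorm, ← norm_div]
  exact hmin hmem

lemma exists_ball_mul_le_norm_ofReal_add {w : ℂ} (hw : w ∈ slitPlane) :
    ∃ δ > 0, ∃ c > 0, Metric.ball w δ ⊆ slitPlane ∧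
      ∀ z ∈ Metric.ball w δ, ∀ u : ℝ, 0 < u → c * (u + 1) ≤ ‖(u : ℂ) + z‖ := by
  obtain ⟨c, hc, hcw⟩ := exists_mul_le_norm_ofReal_add hw
  obtain ⟨ε, hε, hball⟩ := Metric.isOpen_iff.1 Complex.isOpen_slitPlane w hw
  refine ⟨min ε (c / 2), lt_min hε (by positivity), c / 2, by positivity,
    (Metric.ball_subset_ball (min_le_left _ _)).trans hball, fun z hz u hu => ?_⟩
  have hzw : ‖z - w‖ < c / 2 := (mem_ball_iff_norm.1 hz).trans_le (min_le_right _ _)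
  have htri : ‖(u : ℂ) + w‖ ≤ ‖(u : ℂ) + z‖ + ‖z - w‖ := by
    simpa only [show (u : ℂ) + z - (z - w) = u + w by ring] using norm_sub_le ((u : ℂ) + z) (z - w)
  have := hcw u hu
  nlinarith

lemma norm_ellKernel_le {c e u : ℝ} {z : ℂ} (hc : 0 < c) (he : e ≤ -(1 / 2)) (hu : 0 < u)
    (hz : c * (u + 1) ≤ ‖(u : ℂ) + z‖) :
    ‖ellKernel e z u‖ ≤ c ^ e * ‖ellKernel (-(1 / 2)) 1 u‖ := by
  have hnorm : ‖(u : ℂ) + 1‖ = u + 1 := by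
    rw [← Complex.ofReal_one, ← Complex.ofReal_add, Complex.norm_real,
      Real.norm_of_nonneg (by positivity)]
  simp only [ellKernel, norm_mul, Complex.norm_cpow_real]
  rw [hnorm, mul_left_comm]
  gcongr
  calc ‖(u : ℂ) + z‖ ^ e ≤ (c * (u + 1)) ^ e :=
        Real.rpow_le_rpow_of_nonpos (by positivity) hz (by linarith)
    _ = c ^ e * (u + 1) ^ e := Real.mul_rpow hc.le (by positivity)
    _ ≤ c ^ e * (u + 1) ^ (-(1 / 2) : ℝ) := by gcongr; linarith

lemma hasDerivAt_ellKernel {z : ℂ} (hz : z ∈ slitPlane) {u : ℝ} (hu : 0 < u) (e : ℝ) :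
    HasDerivAt (fun z => ellKernel e z u) (e * ellKernel (e - 1) z u) z := by
  refine ((((hasDerivAt_id z).const_add (u : ℂ)).cpow_const (c := (e : ℂ))
    (ofReal_add_mem_slitPlane hz hu.le)).const_mul _).congr_deriv ?_
  simp only [ellKernel, id, mul_one, Complex.ofReal_sub, Complex.ofReal_one]
  ring

lemma differentiableAt_ellIntC {w : ℂ} (hw : w ∈ slitPlane) : DifferentiableAt ℂ ellIntC w := by
  obtain ⟨δ, hδ, c, hc, hball, hlow⟩ := exists_ball_mul_le_norm_ofReal_add hw
  have hmajorant : IntegrableOn (fun u => ‖ellKernel (-(1 / 2)) 1 u‖) (Ioi 0) :=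
    scaledEllKernel_one ▸ (integrableOn_scaledEllKernel one_ne_zero).norm
  have hderiv := hasDerivAt_integral_of_dominated_loc_of_deriv_le (𝕜 := ℂ)
    (μ := volume.restrict (Ioi (0 : ℝ))) (F := ellKernel (-(1 / 2)))
    (F' := fun z u => (-(1 / 2) : ℝ) * ellKernel (-(1 / 2) - 1) z u)
    (x₀ := w) (s := Metric.ball w δ)
    (bound := fun u => 1 / 2 * (c ^ (-(1 / 2) - 1 : ℝ) * ‖ellKernel (-(1 / 2)) 1 u‖))
    (Metric.ball_mem_nhds w hδ)
    (Eventually.of_forall fun z => (measurable_ellKernel _ z).aestronglyMeasurable) ?_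
    ((measurable_ellKernel _ w).const_mul _).aestronglyMeasurable ?_
    ((hmajorant.const_mul _).const_mul _) ?_
  · exact hderiv.2.differentiableAt.const_mul _
  · refine (hmajorant.const_mul (c ^ (-(1 / 2) : ℝ))).mono'
      (measurable_ellKernel _ w).aestronglyMeasurable ?_
    filter_upwards [ae_restrict_mem measurableSet_Ioi] with u hu
    exact norm_ellKernel_le hc le_rfl hu (hlow w (Metric.mem_ball_self hδ) u hu)
  · filter_upwards [ae_restrict_mem measurableSet_Ioi] with u hu z hz
    rw [norm_mul, Complex.norm_real, norm_neg, Real.norm_of_nonneg (by norm_num)]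
    gcongr
    exact norm_ellKernel_le hc (by norm_num) hu (hlow z hz u hu)
  · filter_upwards [ae_restrict_mem measurableSet_Ioi] with u hu z hz
    exact hasDerivAt_ellKernel (hball hz) hu _

lemma tendsto_cpow_of_tendsto_log {l : Filter ℂ} {r θ : ℝ} (hr : 0 < r) (hl : ∀ᶠ z in l, z ≠ 0)
    (hlog : Tendsto Complex.log l (𝓝 (Real.log r + θ * I))) (e : ℝ) :
    Tendsto (fun z : ℂ => z ^ (e : ℂ)) l (𝓝 ((r ^ e : ℝ) * Complex.exp (θ * e * I))) := by
  have hexp := (Complex.continuous_exp.tendsto _).comp (hlog.mul_const (e : ℂ))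
  have hvalue : Complex.exp ((Real.log r + θ * I) * e) =
      (r ^ e : ℝ) * Complex.exp (θ * e * I) := by
    rw [Real.rpow_def_of_pos hr, Complex.ofReal_exp, ← Complex.exp_add]
    congr 1; push_cast; ring
  rw [hvalue] at hexp
  exact hexp.congr' (hl.mono fun z hz => (Complex.cpow_def_of_ne_zero hz _).symm)

lemma tendsto_cpow_nhdsWithin_im_neg {x : ℝ} (hx : x < 0) (e : ℝ) :
    Tendsto (fun z : ℂ => z ^ (e : ℂ)) (𝓝[{z | z.im < 0}] (x : ℂ))
      (𝓝 (((-x) ^ e : ℝ) * Complex.exp (-(π * e * I)))) := by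
  have hlog := Complex.tendsto_log_nhdsWithin_im_neg_of_re_neg_of_im_zero (z := (x : ℂ))
    (by simpa using hx) (by simp)
  rw [Complex.norm_real, Real.norm_of_nonpos hx.le] at hlog
  have hne : ∀ᶠ z in 𝓝[{z : ℂ | z.im < 0}] (x : ℂ), z ≠ 0 := by
    filter_upwards [self_mem_nhdsWithin] with z hz
    rintro rfl
    exact lt_irrefl (0 : ℝ) hz
  simpa [neg_mul, sub_eq_add_neg] using
    tendsto_cpow_of_tendsto_log (θ := -π) (neg_pos.2 hx) hne
      (by simpa [neg_mul, sub_eq_add_neg] using hlog) e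

lemma tendsto_cpow_nhdsWithin_im_pos {x : ℝ} (hx : x < 0) (e : ℝ) :
    Tendsto (fun z : ℂ => z ^ (e : ℂ)) (𝓝[{z | 0 < z.im}] (x : ℂ))
      (𝓝 (((-x) ^ e : ℝ) * Complex.exp (π * e * I))) := by
  have hlog := (Complex.tendsto_log_nhdsWithin_im_nonneg_of_re_neg_of_im_zero (z := (x : ℂ))
    (by simpa using hx) (by simp)).mono_left
      (nhdsWithin_mono _ fun z (hz : 0 < z.im) => (hz.le : 0 ≤ z.im))
  rw [Complex.norm_real, Real.norm_of_nonpos hx.le] at hlog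
  refine tendsto_cpow_of_tendsto_log (neg_pos.2 hx) ?_ hlog e
  filter_upwards [self_mem_nhdsWithin] with z hz
  rintro rfl
  exact lt_irrefl (0 : ℝ) hz

/-- The limit of `scaledEllKernel w` as `w` tends to `-ρ < 0` from the lower half plane. -/
noncomputable def boundaryEllKernel (ρ s : ℝ) : ℂ :=
  ((√(s * (ρ * s + 1)))⁻¹ * |s - 1| ^ (-(1 / 2) : ℝ) : ℝ) * if 1 < s then 1 else I

lemma integrableOn_boundaryEllKernel {ρ : ℝ} (hρ : 0 < ρ) :
    IntegrableOn (boundaryEllKernel ρ) (Ioi 0) := by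
  refine (integrableOn_scaledEllKernel (w := -(ρ : ℂ)) (by simpa using hρ.ne')).norm.mono'
    (Measurable.aestronglyMeasurable ?_) ?_
  · refine Measurable.mul (Measurable.complex_ofReal (Measurable.mul (by fun_prop)
      ((by fun_prop : Measurable fun s : ℝ => |s - 1|).pow_const _))) ?_
    exact Measurable.ite measurableSet_Ioi measurable_const measurable_const
  · refine Eventually.of_forall fun s => ?_
    have hphase : (s : ℂ) + -ρ / ρ = ((s - 1 : ℝ) : ℂ) := by
      rw [neg_div, div_self (by exact_mod_cast hρ.ne')]
      push_cast
      ring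
    have hunit : ‖if 1 < s then (1 : ℂ) else I‖ = 1 := by split_ifs <;> simp
    rw [boundaryEllKernel, scaledEllKernel, norm_mul, norm_mul, hunit, Complex.norm_cpow_real,
      norm_neg, Complex.norm_real ρ, Real.norm_of_nonneg hρ.le, hphase, Complex.norm_real,
      Complex.norm_real, Complex.norm_real, norm_mul, Real.norm_eq_abs (s - 1), mul_one,
      Real.norm_of_nonneg (by positivity : 0 ≤ |s - 1| ^ (-(1 / 2) : ℝ))]

lemma integral_boundaryEllKernel_Ioi_one {ρ : ℝ} (hρ : 0 < ρ) :
    (1 / π : ℝ) * ∫ s in Ioi (1 : ℝ), boundaryEllKernel ρ s = ellInt ρ (1 + ρ) := by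
  have himage : (fun s : ℝ => ρ * (s - 1)) '' Ioi 1 = Ioi 0 := by
    rw [← image_image (fun s => ρ * s) (fun s => s - 1), image_sub_const_Ioi, sub_self,
      image_mul_left_Ioi hρ, mul_zero]
  rw [ellInt, Complex.ofReal_mul, ← integral_complex_ofReal, ← himage,
    integral_image_eq_integral_abs_deriv_smul measurableSet_Ioi (f' := fun _ => ρ)
      (fun s _ => by simpa using (((hasDerivAt_id s).sub_const 1).const_mul ρ).hasDerivWithinAt)
      (fun s _ t _ h => by simpa [hρ.ne'] using h)]
  congr 1
  refine setIntegral_congr_fun measurableSet_Ioi fun s (hs : 1 < s) => ?_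
  have h1 : 0 < s - 1 := by linarith
  have hfactor : ρ * (s - 1) * (ρ * (s - 1) + ρ) * (ρ * (s - 1) + (1 + ρ)) =
    ρ ^ 2 * (s * (ρ * s + 1) * (s - 1)) := by ring
  simp only [boundaryEllKernel, if_pos hs, mul_one, Complex.real_smul, ← Complex.ofReal_mul]
  rw [abs_of_pos h1, abs_of_pos hρ, Real.rpow_neg h1.le, ← Real.sqrt_eq_rpow, ← mul_inv,
    ← Real.sqrt_mul (by positivity), hfactor, Real.sqrt_mul (sq_nonneg ρ), Real.sqrt_sq hρ.le,
    mul_inv, mul_inv_cancel_left₀ hρ.ne']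

lemma integral_boundaryEllKernel_Ioo (ρ : ℝ) :
    (1 / π : ℝ) * ∫ s in Ioo (0 : ℝ) 1, boundaryEllKernel ρ s = I * ellInt 1 (1 + ρ) := by
  rw [← sub_neg_eq_add, ellInt_one_one_sub_eq_integral, Complex.ofReal_mul, mul_left_comm,
    ← integral_complex_ofReal, ← integral_const_mul I]
  congr 1
  refine setIntegral_congr_fun measurableSet_Ioo fun s hs => ?_
  have h0 := hs.1
  have h1 := sub_pos.2 hs.2
  simp only [boundaryEllKernel, if_neg hs.2.le.not_gt]
  rw [mul_comm, abs_sub_comm, abs_of_pos h1, Real.sqrt_mul h0.le, mul_inv, Real.sqrt_eq_rpow s,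
    ← Real.rpow_neg h0.le, show (1 / 2 : ℝ) - 1 = -(1 / 2) by norm_num, mul_right_comm,
    show 1 - -ρ * s = ρ * s + 1 by ring]

lemma integral_boundaryEllKernel {ρ : ℝ} (hρ : 0 < ρ) :
    (1 / π : ℝ) * ∫ s in Ioi (0 : ℝ), boundaryEllKernel ρ s =
      ellInt ρ (1 + ρ) + I * ellInt 1 (1 + ρ) := by
  have hint := integrableOn_boundaryEllKernel hρ
  rw [← Ioc_union_Ioi_eq_Ioi zero_le_one,
    setIntegral_union Ioc_disjoint_Ioi_same measurableSet_Ioi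
      (hint.mono_set Ioc_subset_Ioi_self) (hint.mono_set (Ioi_subset_Ioi zero_le_one)),
    integral_Ioc_eq_integral_Ioo, mul_add, integral_boundaryEllKernel_Ioo ρ,
    integral_boundaryEllKernel_Ioi_one hρ, add_comm]

lemma tendsto_norm_nhdsWithin_neg {ρ : ℝ} (hρ : 0 ≤ ρ) (s : Set ℂ) :
    Tendsto (fun w : ℂ => ‖w‖) (𝓝[s] (-ρ : ℂ)) (𝓝 ρ) := by
  have h := (continuous_norm.tendsto (-ρ : ℂ)).mono_left (nhdsWithin_le_nhds (s := s))
  rwa [norm_neg, Complex.norm_real, Real.norm_of_nonneg hρ] at h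

lemma tendsto_add_div_norm_nhdsWithin_im_neg {ρ : ℝ} (hρ : 0 < ρ) (s : ℝ) :
    Tendsto (fun w : ℂ => (s : ℂ) + w / ‖w‖) (𝓝[{w | w.im < 0}] (-ρ : ℂ))
      (𝓝[{w | w.im < 0}] ((s - 1 : ℝ) : ℂ)) := by
  refine tendsto_nhdsWithin_iff.2 ⟨?_, ?_⟩
  · have h := ((tendsto_id.mono_left nhdsWithin_le_nhds).div
      ((Complex.continuous_ofReal.tendsto _).comp
        (tendsto_norm_nhdsWithin_neg hρ.le {w | w.im < 0}))
      (by exact_mod_cast hρ.ne')).const_add (s : ℂ)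
    rwa [neg_div, div_self (by exact_mod_cast hρ.ne'), ← sub_eq_add_neg, ← Complex.ofReal_one,
      ← Complex.ofReal_sub] at h
  · filter_upwards [self_mem_nhdsWithin] with w (hw : w.im < 0)
    have hw0 : w ≠ 0 := by rintro rfl; exact lt_irrefl _ hw
    change ((s : ℂ) + w / ‖w‖).im < 0
    rw [Complex.add_im, Complex.ofReal_im, zero_add, Complex.div_ofReal_im]
    exact div_neg_of_neg_of_pos hw (norm_pos_iff.2 hw0)

lemma tendsto_scaledEllKernel_nhdsWithin_im_neg {ρ s : ℝ} (hρ : 0 < ρ) (hs : 0 < s)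
    (hs1 : s ≠ 1) :
    Tendsto (fun w => scaledEllKernel w s) (𝓝[{w | w.im < 0}] (-ρ : ℂ))
      (𝓝 (boundaryEllKernel ρ s)) := by
  have hsqrt : Tendsto (fun w : ℂ => (((√(s * (‖w‖ * s + 1)))⁻¹ : ℝ) : ℂ))
      (𝓝[{w : ℂ | w.im < 0}] (-ρ : ℂ)) (𝓝 (((√(s * (ρ * s + 1)))⁻¹ : ℝ) : ℂ)) :=
    (Complex.continuous_ofReal.tendsto _).comp <| Tendsto.inv₀
      ((Real.continuous_sqrt.tendsto _).comp
        ((((tendsto_norm_nhdsWithin_neg hρ.le _).mul_const s).add_const 1).const_mul s))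
      (by positivity)
  have hphase := tendsto_add_div_norm_nhdsWithin_im_neg hρ s
  rcases lt_or_gt_of_ne hs1 with h | h
  · have hI : Complex.exp (-(π * ((-(1 / 2) : ℝ) : ℂ) * I)) = I := by
      rw [show -(π * ((-(1 / 2) : ℝ) : ℂ) * I) = π / 2 * I by push_cast; ring,
        Complex.exp_pi_div_two_mul_I]
    have hlim := hsqrt.mul
      ((tendsto_cpow_nhdsWithin_im_neg (sub_neg.2 h) (-(1 / 2))).comp hphase)
    rw [boundaryEllKernel, if_neg h.le.not_gt, abs_of_neg (sub_neg.2 h), Complex.ofReal_mul,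
      mul_assoc]
    rwa [hI] at hlim
  · have hcont : ContinuousAt (fun z : ℂ => z ^ ((-(1 / 2) : ℝ) : ℂ)) ((s - 1 : ℝ) : ℂ) :=
      continuousAt_cpow_const (Complex.ofReal_mem_slitPlane.2 (sub_pos.2 h))
    have hlim := hsqrt.mul ((hcont.tendsto.mono_left nhdsWithin_le_nhds).comp hphase)
    rw [boundaryEllKernel, if_pos h, mul_one, abs_of_pos (sub_pos.2 h), Complex.ofReal_mul,
      Complex.ofReal_cpow (sub_pos.2 h).le]
    exact hlim

lemma tendsto_ellIntC_nhdsWithin_im_neg {ρ : ℝ} (hρ : 0 < ρ) :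
    Tendsto ellIntC (𝓝[{w | w.im < 0}] (-ρ : ℂ))
      (𝓝 (ellInt ρ (1 + ρ) + I * ellInt 1 (1 + ρ))) := by
  have hne : ∀ᶠ w in 𝓝[{w : ℂ | w.im < 0}] (-ρ : ℂ), w ≠ 0 := by
    filter_upwards [self_mem_nhdsWithin] with w hw
    rintro rfl
    exact lt_irrefl (0 : ℝ) hw
  rw [← integral_boundaryEllKernel hρ]
  refine Tendsto.congr' (hne.mono fun w hw => (ellIntC_eq_integral_scaledEllKernel hw).symm) ?_
  refine Tendsto.const_mul _ (tendsto_integral_filter_of_dominated_convergence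
    (fun s => (ρ / 2) ^ (-(1 / 16) : ℝ) * ellMajorant s)
    (Eventually.of_forall fun w => (measurable_scaledEllKernel w).aestronglyMeasurable) ?_
    (integrableOn_ellMajorant.const_mul _) ?_)
  · filter_upwards [hne, (tendsto_norm_nhdsWithin_neg hρ.le _).eventually
      (lt_mem_nhds (half_lt_self hρ))] with w hw hw2
    filter_upwards [ae_restrict_mem_and_ne measurableSet_Ioi 1] with s ⟨hs, hs1⟩
    refine (norm_scaledEllKernel_le hw hs hs1).trans ?_
    rw [ellMajorant]
    have : 0 ≤ s := le_of_lt hs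
    gcongr ?_ * _
    exact Real.rpow_le_rpow_of_nonpos (by positivity) hw2.le (by norm_num)
  · filter_upwards [ae_restrict_mem_and_ne measurableSet_Ioi 1] with s ⟨hs, hs1⟩
    exact tendsto_scaledEllKernel_nhdsWithin_im_neg hρ hs hs1

end ComplexPeriod

section PeriodForm

open MeasureTheory Set Filter
open Complex (I slitPlane)
open scoped Topology

/-- The ratio `β / (1 - β)` for `β = cubicBeta m`. -/
noncomputable def cubicRatio {K : Type*} [Field K] (m : K) : K :=
  (m - 1) ^ 3 * (m + 3) / ((m + 1) ^ 3 * (3 - m))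

lemma cubicRatio_eq {K : Type*} [Field K] [CharZero K] {m : K} (hm : m ≠ 0) :
    cubicRatio m = cubicBeta m / (1 - cubicBeta m) := by
  rw [one_sub_cubicBeta hm, cubicBeta, cubicRatio, div_div_div_cancel_right₀ (by simpa using hm),
    add_comm 1 m]

lemma cubicBeta_ofReal (ξ : ℝ) : cubicBeta (ξ : ℂ) = (cubicBeta ξ : ℝ) := by
  simp [cubicBeta]

lemma cubicRatio_ofReal (ξ : ℝ) : cubicRatio (ξ : ℂ) = (cubicRatio ξ : ℝ) := by
  simp [cubicRatio]

lemma cubicBeta_re_im {m : ℂ} (h0 : m ≠ 0) :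
    (cubicBeta m).re = 1 / 2 + m.re * (4 * m.re ^ 2 - 3 * Complex.normSq m - 6 -
      3 / Complex.normSq m) / 16 ∧
    (cubicBeta m).im =
      m.im * (4 * m.re ^ 2 - Complex.normSq m - 6 + 3 / Complex.normSq m) / 16 := by
  have hbeta : cubicBeta m = (m ^ 3 - 6 * m + 8 - 3 * m⁻¹) / (16 : ℝ) := by
    rw [cubicBeta]; push_cast; field_simp; ring
  have hn : Complex.normSq m = m.re ^ 2 + m.im ^ 2 := by rw [Complex.normSq_apply]; ring
  have hcube : m ^ 3 = ((m.re ^ 3 - 3 * m.re * m.im ^ 2 : ℝ) : ℂ) +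
      ((3 * m.re ^ 2 * m.im - m.im ^ 3 : ℝ) : ℂ) * I := by
    conv_lhs => rw [← Complex.re_add_im m]
    push_cast
    linear_combination (3 * (m.re : ℂ) * (m.im : ℂ) ^ 2 + (m.im : ℂ) ^ 3 * I) * Complex.I_sq
  have hn0 : m.re ^ 2 + m.im ^ 2 ≠ 0 := by rw [← hn]; exact (Complex.normSq_pos.2 h0).ne'
  rw [hbeta, Complex.div_ofReal_re, Complex.div_ofReal_im, hcube]
  simp only [Complex.sub_re, Complex.add_re, Complex.sub_im, Complex.add_im, Complex.mul_re,
    Complex.mul_im, Complex.inv_re, Complex.inv_im, Complex.ofReal_re, Complex.ofReal_im,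
    Complex.I_re, Complex.I_im, Complex.re_ofNat, Complex.im_ofNat, hn]
  constructor <;> field_simp <;> ring

lemma ne_ofReal_of_mem_halfStrip {a b : ℝ} {m : ℂ} (hm : m ∈ halfStrip a b) (x : ℝ) : m ≠ x := by
  rintro rfl
  simpa using hm.2.2

lemma ne_zero_of_mem_halfStrip {a b : ℝ} {m : ℂ} (hm : m ∈ halfStrip a b) : m ≠ 0 := by
  simpa using ne_ofReal_of_mem_halfStrip hm 0

lemma cubicFactors_ne_zero {a b : ℝ} {m : ℂ} (hm : m ∈ halfStrip a b) :
    m - 1 ≠ 0 ∧ m + 1 ≠ 0 ∧ m + 3 ≠ 0 ∧ 3 - m ≠ 0 := by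
  refine ⟨sub_ne_zero.2 ?_, fun h => ?_, fun h => ?_, sub_ne_zero.2 (Ne.symm ?_)⟩
  · exact_mod_cast ne_ofReal_of_mem_halfStrip hm 1
  · exact ne_ofReal_of_mem_halfStrip hm (-1) (by simpa using eq_neg_of_add_eq_zero_left h)
  · exact ne_ofReal_of_mem_halfStrip hm (-3) (by simpa using eq_neg_of_add_eq_zero_left h)
  · exact_mod_cast ne_ofReal_of_mem_halfStrip hm 3

lemma cubicBeta_re_mem_Ioo {m : ℂ} (hm : m ∈ halfStrip (-1) 1) (h : (cubicBeta m).im = 0) :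
    (cubicBeta m).re ∈ Ioo 0 1 := by
  have h0 := ne_zero_of_mem_halfStrip hm
  obtain ⟨hre, him⟩ := cubicBeta_re_im h0
  set N := Complex.normSq m
  have hN0 : 0 < N := Complex.normSq_pos.2 h0
  have hN : 4 * m.re ^ 2 = N + 6 - 3 / N := by
    have hzero : m.im * (4 * m.re ^ 2 - N - 6 + 3 / N) = 0 := by linarith
    have := (mul_eq_zero.1 hzero).resolve_left hm.2.2.ne'
    linarith
  set T := N + 3 / N with hT
  have hre' : (cubicBeta m).re = 1 / 2 - m.re * T / 8 := by rw [hre, hN, hT]; ring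
  have hTsq : T ^ 2 = 16 * (m.re ^ 4 - 3 * m.re ^ 2 + 3) :=
    calc T ^ 2 = (N - 3 / N) ^ 2 + 12 := by rw [hT]; field_simp; ring
      _ = (4 * m.re ^ 2 - 6) ^ 2 + 12 := by rw [hN]; ring
      _ = _ := by ring
  have hx : 0 < 1 - m.re ^ 2 := by nlinarith [hm.1, hm.2.1]
  have hlt : (m.re * T) ^ 2 < 4 ^ 2 := by
    rw [mul_pow, hTsq]
    nlinarith [pow_pos hx 3]
  obtain ⟨hl, hr⟩ := abs_lt.1 (abs_lt_of_sq_lt_sq hlt (by norm_num))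
  rw [hre']
  constructor <;> linarith

lemma one_sub_cubicBeta_mem_slitPlane {m : ℂ} (hm : m ∈ halfStrip (-1) 1) :
    1 - cubicBeta m ∈ slitPlane := by
  rw [Complex.mem_slitPlane_iff, or_iff_not_imp_right, not_ne_iff]
  intro h
  have := cubicBeta_re_mem_Ioo hm (by simpa using h)
  simpa using this.2

lemma cubicRatio_eq_inv_sub_one {m : ℂ} (hm : m ∈ halfStrip (-1) 1) :
    cubicRatio m = (1 - cubicBeta m)⁻¹ - 1 := by
  have := Complex.slitPlane_ne_zero (one_sub_cubicBeta_mem_slitPlane hm)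
  rw [cubicRatio_eq (ne_zero_of_mem_halfStrip hm)]
  field_simp
  ring

lemma cubicRatio_im {m : ℂ} (hm : m ∈ halfStrip (-1) 1) :
    (cubicRatio m).im = (cubicBeta m).im / Complex.normSq (1 - cubicBeta m) := by
  simp [cubicRatio_eq_inv_sub_one hm, Complex.inv_im]

lemma cubicRatio_mem_slitPlane {m : ℂ} (hm : m ∈ halfStrip (-1) 1) : cubicRatio m ∈ slitPlane := by
  rw [Complex.mem_slitPlane_iff, or_iff_not_imp_right, not_ne_iff, cubicRatio_im hm]
  intro h
  have hw := Complex.slitPlane_ne_zero (one_sub_cubicBeta_mem_slitPlane hm)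
  have him : (cubicBeta m).im = 0 :=
    (div_eq_zero_iff.1 h).resolve_right (Complex.normSq_pos.2 hw).ne'
  obtain ⟨h0, h1⟩ := cubicBeta_re_mem_Ioo hm him
  have hreal : cubicBeta m = ((cubicBeta m).re : ℂ) := Complex.ext rfl (by simpa using him)
  rw [cubicRatio_eq (ne_zero_of_mem_halfStrip hm), hreal, ← Complex.ofReal_one,
    ← Complex.ofReal_sub, ← Complex.ofReal_div, Complex.ofReal_re]
  exact div_pos h0 (sub_pos.2 h1)

lemma eventually_add_mul_I_mem_halfStrip {a b ξ : ℝ} (hξ : ξ ∈ Ioo a b) :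
    ∀ᶠ τ : ℝ in 𝓝[>] 0, (ξ + τ * I : ℂ) ∈ halfStrip a b := by
  filter_upwards [self_mem_nhdsWithin] with τ hτ using add_mul_I_mem_halfStrip hξ hτ

lemma tendsto_ofReal_add_mul_I (ξ : ℝ) :
    Tendsto (fun τ : ℝ => (ξ + τ * I : ℂ)) (𝓝[>] 0) (𝓝 (ξ : ℂ)) := by
  have hcont : Continuous fun τ : ℝ => (ξ + τ * I : ℂ) := by fun_prop
  have h := hcont.tendsto 0
  simp only [Complex.ofReal_zero, zero_mul, add_zero] at h
  exact h.mono_left nhdsWithin_le_nhds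

lemma eventually_cubicBeta_im_pos {ξ : ℝ} (hξ : ξ ∈ Ioo (-1) 1) (h0 : ξ ≠ 0) :
    ∀ᶠ τ : ℝ in 𝓝[>] 0, 0 < (cubicBeta (ξ + τ * I : ℂ)).im := by
  have hN : Tendsto (fun τ : ℝ => Complex.normSq (ξ + τ * I)) (𝓝[>] 0) (𝓝 (ξ ^ 2)) := by
    have := (Complex.continuous_normSq.tendsto _).comp (tendsto_ofReal_add_mul_I ξ)
    rwa [Complex.normSq_ofReal, ← sq] at this
  have hlim : Tendsto (fun τ : ℝ => 4 * ξ ^ 2 - Complex.normSq (ξ + τ * I) - 6 +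
      3 / Complex.normSq (ξ + τ * I)) (𝓝[>] 0) (𝓝 (4 * ξ ^ 2 - ξ ^ 2 - 6 + 3 / ξ ^ 2)) :=
    ((hN.const_sub _).sub_const _).add (tendsto_const_nhds.div hN (by positivity))
  have hpos : 0 < 4 * ξ ^ 2 - ξ ^ 2 - 6 + 3 / ξ ^ 2 := by
    have : 0 < 1 - ξ ^ 2 := by nlinarith [hξ.1, hξ.2]
    rw [show 4 * ξ ^ 2 - ξ ^ 2 - 6 + 3 / ξ ^ 2 = 3 * (1 - ξ ^ 2) ^ 2 / ξ ^ 2 by field_simp; ring]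
    positivity
  filter_upwards [eventually_add_mul_I_mem_halfStrip hξ, hlim.eventually (lt_mem_nhds hpos)]
    with τ hm hτ
  have him := hm.2.2
  rw [(cubicBeta_re_im (ne_zero_of_mem_halfStrip hm)).2]
  rw [show (ξ + τ * I : ℂ).re = ξ by simp]
  positivity

lemma tendsto_one_sub_cubicBeta {ξ : ℝ} (hξ : ξ ∈ Ioo (-1) 1) (h0 : ξ ≠ 0) :
    Tendsto (fun τ : ℝ => 1 - cubicBeta (ξ + τ * I : ℂ)) (𝓝[>] 0)
      (𝓝[{w | w.im < 0}] ((1 - cubicBeta ξ : ℝ) : ℂ)) := by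
  refine tendsto_nhdsWithin_iff.2 ⟨?_, ?_⟩
  · have hcont : ContinuousAt (fun m : ℂ => 1 - cubicBeta m) ξ := by
      unfold cubicBeta
      fun_prop (disch := simpa using h0)
    have h := hcont.tendsto.comp (tendsto_ofReal_add_mul_I ξ)
    rwa [cubicBeta_ofReal, ← Complex.ofReal_one, ← Complex.ofReal_sub] at h
  · filter_upwards [eventually_cubicBeta_im_pos hξ h0] with τ hτ
    simpa using hτ

lemma tendsto_cubicRatio {ξ : ℝ} (hξ : ξ ∈ Ioo (-1) 1) (h0 : ξ ≠ 0) :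
    Tendsto (fun τ : ℝ => cubicRatio (ξ + τ * I : ℂ)) (𝓝[>] 0)
      (𝓝[{w | 0 < w.im}] ((cubicRatio ξ : ℝ) : ℂ)) := by
  refine tendsto_nhdsWithin_iff.2 ⟨?_, ?_⟩
  · have hp : (ξ : ℂ) + 1 ≠ 0 := by exact_mod_cast (by linarith [hξ.1] : ξ + 1 ≠ 0)
    have h3 : 3 - (ξ : ℂ) ≠ 0 := by exact_mod_cast (by linarith [hξ.2] : 3 - ξ ≠ 0)
    have hcont : ContinuousAt (fun m : ℂ => cubicRatio m) ξ :=
      ContinuousAt.div (by fun_prop) (by fun_prop) (mul_ne_zero (pow_ne_zero 3 hp) h3)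
    rw [← cubicRatio_ofReal]
    exact hcont.tendsto.comp (tendsto_ofReal_add_mul_I ξ)
  · filter_upwards [eventually_cubicBeta_im_pos hξ h0, eventually_add_mul_I_mem_halfStrip hξ]
      with τ hτ hm
    rw [cubicRatio_im hm]
    exact div_pos hτ
      (Complex.normSq_pos.2 (Complex.slitPlane_ne_zero (one_sub_cubicBeta_mem_slitPlane hm)))

/-- The integrand `(β / (1 - β)) ^ e * ellInt 1 (1 - β) * R` for `β = cubicBeta m`, continued to
complex `m`. -/
noncomputable def periodForm (e : ℝ) (R : ℂ → ℂ) (m : ℂ) : ℂ :=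
  cubicRatio m ^ (e : ℂ) * ellIntC (1 - cubicBeta m) * R m

lemma differentiableOn_periodForm (e : ℝ) {R : ℂ → ℂ}
    (hR : DifferentiableOn ℂ R (halfStrip (-1) 1)) :
    DifferentiableOn ℂ (periodForm e R) (halfStrip (-1) 1) := by
  intro m hm
  obtain ⟨-, hp, -, hm3⟩ := cubicFactors_ne_zero hm
  have h0 := ne_zero_of_mem_halfStrip hm
  have hratio : DifferentiableAt ℂ cubicRatio m :=
    DifferentiableAt.div (by fun_prop) (by fun_prop) (mul_ne_zero (pow_ne_zero 3 hp) hm3)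
  have hbeta : DifferentiableAt ℂ (fun m : ℂ => 1 - cubicBeta m) m :=
    (DifferentiableAt.div (by fun_prop) (by fun_prop) (by simpa using h0)).const_sub 1
  have hcpow := hratio.cpow_const (c := (e : ℂ)) (cubicRatio_mem_slitPlane hm)
  have hell := (differentiableAt_ellIntC (one_sub_cubicBeta_mem_slitPlane hm)).comp m hbeta
  exact (hcpow.mul hell).differentiableWithinAt.mul (hR m hm)

/-- The monomials `c (m - 1)ᵃ (m + 1)ᵇ mᵈ (m + 3)ˢ (3 - m)ᵗ`, whose divisor is supported on the
cusps of the cubic parametrization. -/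
def cuspMonomial {K : Type*} [Field K] (c : ℕ) (a b d s t : ℤ) (m : K) : K :=
  c * ((m - 1) ^ a * (m + 1) ^ b * m ^ d * ((m + 3) ^ s * (3 - m) ^ t))

lemma cuspMonomial_ofReal (c : ℕ) (a b d s t : ℤ) (ξ : ℝ) :
    cuspMonomial c a b d s t (ξ : ℂ) = (cuspMonomial c a b d s t ξ : ℝ) := by
  simp [cuspMonomial]

lemma differentiableAt_cuspMonomial {c : ℕ} {a b d s t : ℤ} {m : ℂ} (h0 : m ≠ 0) (h1 : m - 1 ≠ 0)
    (h2 : m + 1 ≠ 0) (h3 : m + 3 ≠ 0) (h4 : 3 - m ≠ 0) :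
    DifferentiableAt ℂ (cuspMonomial c a b d s t) m := by
  unfold cuspMonomial
  fun_prop (disch := simp [*])

end PeriodForm

section StripBounds

open MeasureTheory Set
open Complex (I)

/-- An integrable weight on `(-1, 1)`, singular at `-1`, `0` and `1`, which dominates the period
forms on the part `m.im ≤ 1` of the half strip. -/
noncomputable def stripWeight (x : ℝ) : ℝ := (|x| * (1 - |x|)) ^ (-(15 / 16) : ℝ)

lemma integrableOn_stripWeight : IntegrableOn stripWeight (Ioo (-1) 1) := by
  have hpos : IntegrableOn stripWeight (Ioo 0 1) := by
    refine (integrableOn_rpow_mul_one_sub_rpow (a := -(15 / 16)) (b := -(15 / 16))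
      (by norm_num) (by norm_num)).congr_fun (fun x hx => ?_) measurableSet_Ioo
    rw [stripWeight, abs_of_pos hx.1, Real.mul_rpow hx.1.le (sub_nonneg.2 hx.2.le)]
  have hneg : IntegrableOn stripWeight (Ioo (-1) 0) := by
    have h := hpos.comp_neg
    rw [neg_Ioo, neg_zero] at h
    exact h.congr_fun (fun x _ => by simp [stripWeight]) measurableSet_Ioo
  rw [← Ioc_union_Ioo_eq_Ioo (by norm_num : (-1 : ℝ) ≤ 0) (by norm_num : (0 : ℝ) < 1)]
  exact (integrableOn_Ioc_iff_integrableOn_Ioo (by simp)).2 hneg |>.union hpos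

lemma rpow_le_rpow_abs {K x : ℝ} (hK : 1 ≤ K) (hl : K⁻¹ ≤ x) (hr : x ≤ K) (e : ℝ) :
    x ^ e ≤ K ^ |e| := by
  have hK0 : 0 < K := by linarith
  have hx : 0 < x := (inv_pos.2 hK0).trans_le hl
  have hlog : |Real.log x| ≤ Real.log K :=
    abs_le.2 ⟨by rw [← Real.log_inv]; gcongr, by gcongr⟩
  rw [Real.rpow_def_of_pos hx, Real.rpow_def_of_pos hK0, Real.exp_le_exp]
  calc Real.log x * e ≤ |Real.log x * e| := le_abs_self _
    _ = |Real.log x| * |e| := abs_mul _ _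
    _ ≤ Real.log K * |e| := by gcongr

lemma rpow_le_mul_rpow_of_le {K t A B : ℝ} (ht : 0 < t) (htK : t ≤ K) (h : B ≤ A) :
    t ^ A ≤ K ^ (A - B) * t ^ B := by
  calc t ^ A = t ^ (A - B) * t ^ B := by rw [← Real.rpow_add ht, sub_add_cancel]
    _ ≤ _ := by gcongr

lemma norm_le_two_of_mem_halfStrip {m : ℂ} (hm : m ∈ halfStrip (-1) 1) (h1 : m.im ≤ 1) :
    ‖m‖ ≤ 2 := by
  have hre : |m.re| ≤ 1 := abs_le.2 ⟨hm.1.le, hm.2.1.le⟩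
  have him : |m.im| ≤ 1 := by rwa [abs_of_pos hm.2.2]
  linarith [Complex.norm_le_abs_re_add_abs_im m]

lemma norm_add_three_mem_Icc {m : ℂ} (hm : m ∈ halfStrip (-1) 1) (h1 : m.im ≤ 1) :
    ‖m + 3‖ ∈ Icc 2 5 := by
  constructor
  · have := Complex.re_le_norm (m + 3)
    rw [Complex.add_re, Complex.re_ofNat] at this
    linarith [hm.1]
  · have := norm_add_le m 3
    rw [Complex.norm_ofNat] at this
    linarith [norm_le_two_of_mem_halfStrip hm h1]

lemma norm_three_sub_mem_Icc {m : ℂ} (hm : m ∈ halfStrip (-1) 1) (h1 : m.im ≤ 1) :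
    ‖3 - m‖ ∈ Icc 2 5 := by
  constructor
  · have := Complex.re_le_norm (3 - m)
    rw [Complex.sub_re, Complex.re_ofNat] at this
    linarith [hm.2.1]
  · have := norm_sub_le 3 m
    rw [Complex.norm_ofNat] at this
    linarith [norm_le_two_of_mem_halfStrip hm h1]

lemma abs_re_mul_one_sub_le {m : ℂ} (hm : m ∈ halfStrip (-1) 1) :
    |m.re| * (1 - |m.re|) ≤ ‖m - 1‖ * ‖m + 1‖ * ‖m‖ := by
  have hsub : 1 - m.re ≤ ‖m - 1‖ := by
    have := Complex.abs_re_le_norm (m - 1)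
    rw [Complex.sub_re, Complex.one_re] at this
    linarith [neg_le_abs (m.re - 1)]
  have hadd : 1 + m.re ≤ ‖m + 1‖ := by
    have := Complex.abs_re_le_norm (m + 1)
    rw [Complex.add_re, Complex.one_re] at this
    linarith [le_abs_self (m.re + 1)]
  have hre : 1 - |m.re| ≤ (1 - m.re) * (1 + m.re) := by
    have : |m.re| < 1 := abs_lt.2 ⟨hm.1, hm.2.1⟩
    nlinarith [sq_abs m.re, abs_nonneg m.re]
  rw [mul_comm]
  refine mul_le_mul (hre.trans ?_) (Complex.abs_re_le_norm m) (abs_nonneg _) (by positivity)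
  exact mul_le_mul hsub hadd (by linarith [hm.1]) (norm_nonneg _)

lemma norm_rpow_mul_le_stripWeight {A B D : ℝ} (hA : -(15 / 16) ≤ A) (hB : -(15 / 16) ≤ B)
    (hD : -(15 / 16) ≤ D) {m : ℂ} (hm : m ∈ halfStrip (-1) 1) (h0 : m.re ≠ 0) (h1 : m.im ≤ 1) :
    ‖m - 1‖ ^ A * ‖m + 1‖ ^ B * ‖m‖ ^ D ≤
      3 ^ (A - -(15 / 16)) * 3 ^ (B - -(15 / 16)) * 3 ^ (D - -(15 / 16)) * stripWeight m.re := by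
  obtain ⟨hsub, hadd, -, -⟩ := cubicFactors_ne_zero hm
  have hn := norm_le_two_of_mem_halfStrip hm h1
  have hsub3 : ‖m - 1‖ ≤ 3 := (norm_sub_le _ _).trans (by rw [norm_one]; linarith)
  have hadd3 : ‖m + 1‖ ≤ 3 := (norm_add_le _ _).trans (by rw [norm_one]; linarith)
  have hpos : 0 < |m.re| * (1 - |m.re|) :=
    mul_pos (abs_pos.2 h0) (sub_pos.2 (abs_lt.2 ⟨hm.1, hm.2.1⟩))
  calc _ ≤ (3 ^ (A - -(15 / 16)) * ‖m - 1‖ ^ (-(15 / 16) : ℝ)) *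
        (3 ^ (B - -(15 / 16)) * ‖m + 1‖ ^ (-(15 / 16) : ℝ)) *
        (3 ^ (D - -(15 / 16)) * ‖m‖ ^ (-(15 / 16) : ℝ)) := by
        gcongr
        · exact rpow_le_mul_rpow_of_le (norm_pos_iff.2 hsub) hsub3 hA
        · exact rpow_le_mul_rpow_of_le (norm_pos_iff.2 hadd) hadd3 hB
        · exact rpow_le_mul_rpow_of_le (norm_pos_iff.2 (ne_zero_of_mem_halfStrip hm))
            (by linarith) hD
    _ = 3 ^ (A - -(15 / 16)) * 3 ^ (B - -(15 / 16)) * 3 ^ (D - -(15 / 16)) *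
        (‖m - 1‖ * ‖m + 1‖ * ‖m‖) ^ (-(15 / 16) : ℝ) := by
        rw [Real.mul_rpow (by positivity) (by positivity),
          Real.mul_rpow (by positivity) (by positivity)]
        ring
    _ ≤ _ := by
        gcongr
        exact Real.rpow_le_rpow_of_nonpos hpos (abs_re_mul_one_sub_le hm) (by norm_num)

lemma norm_cubicRatio_rpow_le (e : ℝ) {m : ℂ} (hm : m ∈ halfStrip (-1) 1) (h1 : m.im ≤ 1) :
    ‖cubicRatio m‖ ^ e ≤ (5 / 2) ^ |e| * (‖m - 1‖ ^ (3 * e) * ‖m + 1‖ ^ (-(3 * e))) := by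
  obtain ⟨hl, hr⟩ := norm_add_three_mem_Icc hm h1
  obtain ⟨hl', hr'⟩ := norm_three_sub_mem_Icc hm h1
  have hnorm : ‖cubicRatio m‖ = ‖m + 3‖ / ‖3 - m‖ * (‖m - 1‖ ^ 3 * (‖m + 1‖ ^ 3)⁻¹) := by
    rw [cubicRatio, norm_div, norm_mul, norm_mul, norm_pow, norm_pow]
    ring
  have hfactor : (‖m + 3‖ / ‖3 - m‖) ^ e ≤ (5 / 2) ^ |e| := by
    refine rpow_le_rpow_abs (by norm_num) ?_ ?_ e
    · rw [le_div_iff₀ (by linarith)]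
      linarith
    · rw [div_le_iff₀ (by linarith)]
      linarith
  rw [hnorm, Real.mul_rpow (by positivity) (by positivity),
    Real.mul_rpow (by positivity) (by positivity), Real.inv_rpow (by positivity),
    ← Real.rpow_natCast, ← Real.rpow_natCast, ← Real.rpow_mul (by positivity),
    ← Real.rpow_mul (by positivity), ← Real.rpow_neg (by positivity)]
  push_cast
  gcongr

lemma norm_one_sub_cubicBeta_rpow_le (e : ℝ) {m : ℂ} (hm : m ∈ halfStrip (-1) 1)
    (h1 : m.im ≤ 1) :
    ‖1 - cubicBeta m‖ ^ e ≤ 8 ^ |e| * (‖m + 1‖ ^ (3 * e) * ‖m‖ ^ (-e)) := by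
  obtain ⟨hl, hr⟩ := norm_three_sub_mem_Icc hm h1
  have hnorm : ‖1 - cubicBeta m‖ = ‖3 - m‖ / 16 * (‖m + 1‖ ^ 3 * ‖m‖⁻¹) := by
    rw [one_sub_cubicBeta (ne_zero_of_mem_halfStrip hm), norm_div, norm_mul, norm_mul, norm_pow,
      Complex.norm_ofNat, add_comm 1 m]
    ring
  have hfactor : (‖3 - m‖ / 16) ^ e ≤ 8 ^ |e| :=
    rpow_le_rpow_abs (by norm_num) (by linarith) (by linarith) e
  rw [hnorm, Real.mul_rpow (by positivity) (by positivity),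
    Real.mul_rpow (by positivity) (by positivity), Real.inv_rpow (by positivity),
    ← Real.rpow_natCast, ← Real.rpow_mul (by positivity), ← Real.rpow_neg (by positivity)]
  push_cast
  gcongr

lemma norm_cuspMonomial_le {c : ℕ} {a b d s t : ℤ} {m : ℂ} (hm : m ∈ halfStrip (-1) 1)
    (h1 : m.im ≤ 1) :
    ‖cuspMonomial c a b d s t m‖ ≤ c * (5 ^ |(s : ℝ)| * 5 ^ |(t : ℝ)|) *
      (‖m - 1‖ ^ (a : ℝ) * ‖m + 1‖ ^ (b : ℝ) * ‖m‖ ^ (d : ℝ)) := by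
  obtain ⟨hl, hr⟩ := norm_add_three_mem_Icc hm h1
  obtain ⟨hl', hr'⟩ := norm_three_sub_mem_Icc hm h1
  rw [cuspMonomial]
  simp only [norm_mul, norm_zpow, Complex.norm_natCast, ← Real.rpow_intCast]
  rw [mul_assoc (c : ℝ), mul_comm (5 ^ |(s : ℝ)| * 5 ^ |(t : ℝ)|)]
  gcongr
  · exact rpow_le_rpow_abs (by norm_num) (by linarith) hr _
  · exact rpow_le_rpow_abs (by norm_num) (by linarith) hr' _

lemma exists_norm_periodForm_le {e : ℝ} {c : ℕ} {a b d s t : ℤ}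
    (ha : -(15 / 16) ≤ 3 * e + a) (hb : -(15 / 16) ≤ -(3 * e) + 3 * -(1 / 16) + b)
    (hd : -(15 / 16) ≤ 1 / 16 + (d : ℝ)) :
    ∃ M, ∀ m ∈ halfStrip (-1) 1, m.re ≠ 0 → m.im ≤ 1 →
      ‖periodForm e (cuspMonomial c a b d s t) m‖ ≤ M * stripWeight m.re := by
  obtain ⟨C, hC, hell⟩ := exists_norm_ellIntC_le
  set K : ℝ := (5 / 2) ^ |e| * (C * 8 ^ |(-(1 / 16) : ℝ)|) *
    (c * (5 ^ |(s : ℝ)| * 5 ^ |(t : ℝ)|)) with hK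
  refine ⟨K * (3 ^ (3 * e + a - -(15 / 16)) * 3 ^ (-(3 * e) + 3 * -(1 / 16) + b - -(15 / 16)) *
    3 ^ (1 / 16 + (d : ℝ) - -(15 / 16))), fun m hm h0 h1 => ?_⟩
  obtain ⟨hsub, hadd, -, -⟩ := cubicFactors_ne_zero hm
  have hw := Complex.slitPlane_ne_zero (one_sub_cubicBeta_mem_slitPlane hm)
  rw [periodForm, norm_mul, norm_mul, Complex.norm_cpow_real]
  calc _ ≤ ((5 / 2) ^ |e| * (‖m - 1‖ ^ (3 * e) * ‖m + 1‖ ^ (-(3 * e)))) *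
        (C * (8 ^ |(-(1 / 16) : ℝ)| *
          (‖m + 1‖ ^ (3 * -(1 / 16) : ℝ) * ‖m‖ ^ (-(-(1 / 16)) : ℝ)))) *
        (c * (5 ^ |(s : ℝ)| * 5 ^ |(t : ℝ)|) *
          (‖m - 1‖ ^ (a : ℝ) * ‖m + 1‖ ^ (b : ℝ) * ‖m‖ ^ (d : ℝ))) := by
        gcongr
        · exact norm_cubicRatio_rpow_le e hm h1
        · exact (hell _ hw).trans (by gcongr; exact norm_one_sub_cubicBeta_rpow_le _ hm h1)
        · exact norm_cuspMonomial_le hm h1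
    _ = K * (‖m - 1‖ ^ (3 * e + a) * ‖m + 1‖ ^ (-(3 * e) + 3 * -(1 / 16) + b) *
        ‖m‖ ^ (1 / 16 + (d : ℝ))) := by
        rw [Real.rpow_add (norm_pos_iff.2 hsub), Real.rpow_add (norm_pos_iff.2 hadd),
          Real.rpow_add (norm_pos_iff.2 hadd),
          Real.rpow_add (norm_pos_iff.2 (ne_zero_of_mem_halfStrip hm)), neg_neg, hK]
        ring
    _ ≤ _ := by
        rw [mul_assoc K]
        exact mul_le_mul_of_nonneg_left (norm_rpow_mul_le_stripWeight ha hb hd hm h0 h1)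
          (by positivity)

end StripBounds

section Arc

open MeasureTheory Set Filter
open Complex (I)
open scoped Topology Real

/-- The auxiliary radical `√(ξ⁴ - 3 ξ² + 3)` in the parametrization of the arc on which `cubicBeta`
is real. -/
noncomputable def arcSqrt (ξ : ℝ) : ℝ := √(ξ ^ 4 - 3 * ξ ^ 2 + 3)

/-- The imaginary part of the point with real part `ξ` on the arc on which `cubicBeta` is real. Its
square is `2 * arcSqrt ξ + ξ ^ 2 - 3`; the form chosen here makes the smoothness at `ξ = ± 1`
visible. -/
noncomputable def arcIm (ξ : ℝ) : ℝ := (1 - ξ ^ 2) * √3 / √(2 * arcSqrt ξ + 3 - ξ ^ 2)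

/-- The point with real part `ξ` on the arc on which `cubicBeta` is real. -/
noncomputable def arcPoint (ξ : ℝ) : ℂ := ξ + arcIm ξ * I

/-- The value of `cubicBeta` at `arcPoint ξ`. -/
noncomputable def arcBeta (ξ : ℝ) : ℝ := (1 - ξ * arcSqrt ξ) / 2

lemma arcSqrt_arg_pos (ξ : ℝ) : 0 < ξ ^ 4 - 3 * ξ ^ 2 + 3 := by
  nlinarith [sq_nonneg (ξ ^ 2 - 3 / 2)]

lemma arcSqrt_pos (ξ : ℝ) : 0 < arcSqrt ξ := Real.sqrt_pos.2 (arcSqrt_arg_pos ξ)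

lemma arcSqrt_sq (ξ : ℝ) : arcSqrt ξ ^ 2 = ξ ^ 4 - 3 * ξ ^ 2 + 3 :=
  Real.sq_sqrt (arcSqrt_arg_pos ξ).le

lemma arcIm_arg_pos (ξ : ℝ) : 0 < 2 * arcSqrt ξ + 3 - ξ ^ 2 := by
  by_contra! h
  nlinarith [sq_nonneg (ξ ^ 2 - 1), arcSqrt_pos ξ, arcSqrt_sq ξ]

lemma arcIm_sq (ξ : ℝ) : arcIm ξ ^ 2 = 2 * arcSqrt ξ + ξ ^ 2 - 3 := by
  have h := arcIm_arg_pos ξ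
  rw [arcIm, div_pow, mul_pow, Real.sq_sqrt (by norm_num), Real.sq_sqrt h.le, div_eq_iff h.ne']
  linear_combination -4 * arcSqrt_sq ξ

lemma contDiff_arcSqrt : ContDiff ℝ 1 arcSqrt :=
  ContDiff.sqrt (by fun_prop) fun ξ => (arcSqrt_arg_pos ξ).ne'

lemma contDiff_sqrt_arcIm_arg : ContDiff ℝ 1 fun ξ => √(2 * arcSqrt ξ + 3 - ξ ^ 2) := by
  have := contDiff_arcSqrt
  exact ContDiff.sqrt (by fun_prop) fun ξ => (arcIm_arg_pos ξ).ne'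

lemma contDiff_arcIm : ContDiff ℝ 1 arcIm :=
  ContDiff.div (by fun_prop) contDiff_sqrt_arcIm_arg
    fun ξ => (Real.sqrt_pos.2 (arcIm_arg_pos ξ)).ne'

lemma hasDerivAt_arcIm (ξ : ℝ) : HasDerivAt arcIm (deriv arcIm ξ) ξ :=
  (contDiff_arcIm.differentiable one_ne_zero ξ).hasDerivAt

lemma continuous_deriv_arcIm : Continuous (deriv arcIm) := contDiff_arcIm.continuous_deriv le_rfl

lemma hasDerivAt_arcSqrt (ξ : ℝ) :
    HasDerivAt arcSqrt ((2 * ξ ^ 3 - 3 * ξ) / arcSqrt ξ) ξ := by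
  have h : HasDerivAt (fun ξ : ℝ => ξ ^ 4 - 3 * ξ ^ 2 + 3) (4 * ξ ^ 3 - 3 * (2 * ξ)) ξ := by
    simpa using ((hasDerivAt_pow 4 ξ).sub ((hasDerivAt_pow 2 ξ).const_mul 3)).add_const 3
  refine (h.sqrt (arcSqrt_arg_pos ξ).ne').congr_deriv ?_
  rw [← arcSqrt]
  have := (arcSqrt_pos ξ).ne'
  field_simp
  ring

lemma hasDerivAt_arcBeta (ξ : ℝ) :
    HasDerivAt arcBeta (-(3 * (1 - ξ ^ 2) ^ 2 / (2 * arcSqrt ξ))) ξ := by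
  have h := (((hasDerivAt_id ξ).mul (hasDerivAt_arcSqrt ξ)).const_sub 1).div_const 2
  refine h.congr_deriv ?_
  have := (arcSqrt_pos ξ).ne'
  simp only [id]
  field_simp
  linear_combination -arcSqrt_sq ξ

lemma arcIm_pos {ξ : ℝ} (hξ : ξ ∈ Ioo (-1) 1) : 0 < arcIm ξ := by
  have hsq : 0 < 1 - ξ ^ 2 := by nlinarith [hξ.1, hξ.2]
  have := arcIm_arg_pos ξ
  unfold arcIm
  positivity

lemma arcIm_le {ξ : ℝ} (hξ : ξ ∈ Ioo (-1) 1) : arcIm ξ ≤ 1 - ξ ^ 2 := by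
  have hsq : 0 < 1 - ξ ^ 2 := by nlinarith [hξ.1, hξ.2]
  refine le_of_sq_le_sq ?_ hsq.le
  -- AM-GM: `2 * arcSqrt ξ ≤ arcSqrt ξ ^ 2 + 1`
  have hamgm : 2 * arcSqrt ξ ≤ ξ ^ 4 - 3 * ξ ^ 2 + 4 := by
    nlinarith [sq_nonneg (arcSqrt ξ - 1), arcSqrt_sq ξ]
  rw [arcIm_sq]
  linarith

@[simp] lemma arcPoint_re (ξ : ℝ) : (arcPoint ξ).re = ξ := by simp [arcPoint]

@[simp] lemma arcPoint_im (ξ : ℝ) : (arcPoint ξ).im = arcIm ξ := by simp [arcPoint]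

lemma arcPoint_mem_halfStrip {ξ : ℝ} (hξ : ξ ∈ Ioo (-1) 1) : arcPoint ξ ∈ halfStrip (-1) 1 :=
  add_mul_I_mem_halfStrip hξ (arcIm_pos hξ)

lemma cubicBeta_arcPoint {ξ : ℝ} (hξ : ξ ∈ Ioo (-1) 1) : cubicBeta (arcPoint ξ) = arcBeta ξ := by
  have h0 := ne_zero_of_mem_halfStrip (arcPoint_mem_halfStrip hξ)
  have hN : Complex.normSq (arcPoint ξ) = 2 * arcSqrt ξ + 2 * ξ ^ 2 - 3 := by
    rw [Complex.normSq_apply, arcPoint_re, arcPoint_im]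
    linear_combination arcIm_sq ξ
  have hN3 : 3 / Complex.normSq (arcPoint ξ) = 2 * arcSqrt ξ - 2 * ξ ^ 2 + 3 := by
    rw [div_eq_iff (Complex.normSq_pos.2 h0).ne', hN]
    linear_combination -4 * arcSqrt_sq ξ
  obtain ⟨hre, him⟩ := cubicBeta_re_im h0
  apply Complex.ext
  · rw [hre, hN3, hN, arcPoint_re, Complex.ofReal_re, arcBeta]; ring
  · rw [him, hN3, hN, arcPoint_re, Complex.ofReal_im]; ring

lemma arcBeta_mem_Ioo {ξ : ℝ} (hξ : ξ ∈ Ioo (-1) 1) : arcBeta ξ ∈ Ioo 0 1 := by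
  have h := cubicBeta_re_mem_Ioo (arcPoint_mem_halfStrip hξ) (by simp [cubicBeta_arcPoint hξ])
  rwa [cubicBeta_arcPoint hξ, Complex.ofReal_re] at h

lemma hasDerivAt_arcPoint (ξ : ℝ) :
    HasDerivAt arcPoint (1 + (deriv arcIm ξ : ℝ) * I) ξ :=
  (hasDerivAt_id ξ).ofReal_comp.add ((hasDerivAt_arcIm ξ).ofReal_comp.mul_const _)

lemma hasDerivAt_cubicBeta {K : Type*} [NontriviallyNormedField K] [CharZero K] {m : K}
    (hm : m ≠ 0) : HasDerivAt cubicBeta (3 * (m ^ 2 - 1) ^ 2 / (16 * m ^ 2)) m := by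
  have h := ((((hasDerivAt_id m).sub_const 1).pow 3).mul ((hasDerivAt_id m).add_const 3)).div
    ((hasDerivAt_id m).const_mul 16) (mul_ne_zero (by norm_num) hm)
  refine h.congr_deriv ?_
  simp only [id, Pi.pow_apply, Pi.mul_apply]
  field_simp
  ring

lemma tendsto_stripWeight_mul_arcIm {ξ : ℝ} (hξ : |ξ| = 1) :
    Tendsto (fun t => stripWeight t * arcIm t) (𝓝[Ioo (-1) 1] ξ) (𝓝 0) := by
  have hbound : Tendsto (fun t : ℝ => |t| ^ (-(15 / 16) : ℝ) * ((1 - |t|) ^ (1 / 16 : ℝ) *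
      (1 + |t|))) (𝓝[Ioo (-1) 1] ξ) (𝓝 0) := by
    have hcont : ContinuousAt (fun t : ℝ => |t| ^ (-(15 / 16) : ℝ) * ((1 - |t|) ^ (1 / 16 : ℝ) *
        (1 + |t|))) ξ := by
      have h0 : |ξ| ≠ 0 := by rw [hξ]; exact one_ne_zero
      exact (continuousAt_id.abs.rpow_const (Or.inl h0)).mul
        (((continuousAt_id.abs.const_sub 1).rpow_const (Or.inr (by norm_num))).mul
          (continuousAt_id.abs.const_add 1))
    have h := hcont.tendsto
    rw [hξ] at h
    norm_num at h
    exact h.mono_left nhdsWithin_le_nhds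
  refine squeeze_zero' ?_ ?_ hbound <;> filter_upwards [self_mem_nhdsWithin] with t ht
  · have : 0 ≤ 1 - |t| := sub_nonneg.2 (abs_le.2 ⟨ht.1.le, ht.2.le⟩)
    have := arcIm_pos ht
    unfold stripWeight
    positivity
  · have ht1 : 0 < 1 - |t| := sub_pos.2 (abs_lt.2 ht)
    calc stripWeight t * arcIm t
        ≤ |t| ^ (-(15 / 16) : ℝ) * (1 - |t|) ^ (-(15 / 16) : ℝ) * ((1 - |t|) * (1 + |t|)) := by
          rw [stripWeight, Real.mul_rpow (abs_nonneg t) ht1.le]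
          gcongr
          linarith [arcIm_le ht, sq_abs t]
      _ = _ := by
          rw [mul_assoc, ← mul_assoc _ (1 - |t|), ← Real.rpow_add_one ht1.ne']
          norm_num

lemma exists_isDominatedArc_periodForm {e : ℝ} {c : ℕ} {a b d s t : ℤ}
    (ha : -(15 / 16) ≤ 3 * e + a) (hb : -(15 / 16) ≤ -(3 * e) + 3 * -(1 / 16) + b)
    (hd : -(15 / 16) ≤ 1 / 16 + (d : ℝ)) :
    ∃ W L, IsDominatedArc (periodForm e (cuspMonomial c a b d s t)) W arcIm (deriv arcIm)
      (-1) 1 0 L := by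
  obtain ⟨M, hM⟩ := exists_norm_periodForm_le (c := c) (s := s) (t := t) ha hb hd
  obtain ⟨L, hL⟩ := (isCompact_Icc (a := (-1 : ℝ)) (b := 1)).exists_bound_of_continuousOn
    continuous_deriv_arcIm.continuousOn
  have htendsto {ξ : ℝ} (hξ : |ξ| = 1) :
      Tendsto (fun t => M * stripWeight t * arcIm t) (𝓝[Ioo (-1) 1] ξ) (𝓝 0) := by
    simpa only [mul_zero, mul_assoc] using (tendsto_stripWeight_mul_arcIm hξ).const_mul M
  refine ⟨fun ξ => M * stripWeight ξ, L, ?_⟩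
  exact
    { mem := by norm_num
      differentiableOn := differentiableOn_periodForm e fun m hm => by
        obtain ⟨h1, h2, h3, h4⟩ := cubicFactors_ne_zero hm
        exact (differentiableAt_cuspMonomial (ne_zero_of_mem_halfStrip hm) h1 h2 h3
          h4).differentiableWithinAt
      integrableOn := integrableOn_stripWeight.const_mul M
      norm_le := fun ξ hξ h0 τ hτ => by
        have hτ1 : τ ≤ 1 := by linarith [hτ.2, arcIm_le hξ, sq_nonneg ξ]
        simpa using hM _ (add_mul_I_mem_halfStrip hξ hτ.1) (by simpa using h0) (by simpa using hτ1)
      hasDerivAt := fun ξ _ => hasDerivAt_arcIm ξ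
      continuousOn := continuous_deriv_arcIm.continuousOn
      abs_deriv_le := fun ξ hξ => hL ξ (Ioo_subset_Icc_self hξ)
      pos := fun _ hξ => arcIm_pos hξ
      tendsto_left := by
        rw [← nhdsWithin_Ioo_eq_nhdsGT (by norm_num : (-1 : ℝ) < 1)]
        exact htendsto (by norm_num)
      tendsto_right := by
        rw [← nhdsWithin_Ioo_eq_nhdsLT (by norm_num : (-1 : ℝ) < 1)]
        exact htendsto (by norm_num) }

end Arc

section BoundaryValue

open MeasureTheory Set Filter
open Complex (I)
open scoped Topology Real

lemma cubicBeta_neg_of_mem_Ioo {ξ : ℝ} (hξ : ξ ∈ Ioo 0 1) : cubicBeta ξ < 0 := by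
  have h1 : (ξ - 1) ^ 3 < 0 := Odd.pow_neg (by decide) (sub_neg.2 hξ.2)
  exact div_neg_of_neg_of_pos (mul_neg_of_neg_of_pos h1 (by linarith [hξ.1]))
    (by linarith [hξ.1])

lemma one_lt_cubicBeta_of_mem_Ioo {ξ : ℝ} (hξ : ξ ∈ Ioo (-1) 0) : 1 < cubicBeta ξ := by
  have h := cubicBeta_neg_of_mem_Ioo (ξ := -ξ) ⟨neg_pos.2 hξ.2, by linarith [hξ.1]⟩
  rw [cubicBeta_neg hξ.2.ne] at h
  linarith

lemma cubicRatio_neg_of_mem_Ioo {ξ : ℝ} (hξ : ξ ∈ Ioo (-1) 1) : cubicRatio ξ < 0 := by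
  have h1 : (ξ - 1) ^ 3 < 0 := Odd.pow_neg (by decide) (sub_neg.2 hξ.2)
  have h2 : 0 < (ξ + 1) ^ 3 := pow_pos (by linarith [hξ.1]) 3
  exact div_neg_of_neg_of_pos (mul_neg_of_neg_of_pos h1 (by linarith [hξ.1]))
    (mul_pos h2 (by linarith [hξ.2]))

/-- The boundary value of `ellIntC (1 - cubicBeta m)` at a real point of `(-1, 1)`, which is
approached from the upper half plane. -/
noncomputable def axisPeriod (ξ : ℝ) : ℂ :=
  if 0 < ξ then ellInt 1 (1 - cubicBeta ξ)
  else ellInt (cubicBeta ξ - 1) (cubicBeta ξ) + I * ellInt 1 (cubicBeta ξ)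

/-- The boundary value of `periodForm e R` on the real axis, up to the factor `exp (π e i)`. -/
noncomputable def axisForm (e : ℝ) (R : ℝ → ℝ) (ξ : ℝ) : ℂ :=
  ((-cubicRatio ξ) ^ e * R ξ : ℝ) * axisPeriod ξ

/-- The weight `(β / (1 - β)) ^ e * ellInt 1 (1 - β)` at the point `β = arcBeta ξ`. -/
noncomputable def arcWeight (e ξ : ℝ) : ℝ :=
  (arcBeta ξ / (1 - arcBeta ξ)) ^ e * ellInt 1 (1 - arcBeta ξ)

/-- The restriction of `periodForm e R m dm` to the arc on which `cubicBeta` takes the real values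
`arcBeta`, parametrized by `ξ = re m`. -/
noncomputable def arcForm (e : ℝ) (R : ℂ → ℂ) (ξ : ℝ) : ℂ :=
  arcWeight e ξ * (R (arcPoint ξ) * (1 + deriv arcIm ξ * I))

lemma tendsto_ellIntC_one_sub_cubicBeta {ξ : ℝ} (hξ : ξ ∈ Ioo (-1) 1) (h0 : ξ ≠ 0) :
    Tendsto (fun τ : ℝ => ellIntC (1 - cubicBeta (ξ + τ * I : ℂ))) (𝓝[>] 0)
      (𝓝 (axisPeriod ξ)) := by
  have hbeta := tendsto_one_sub_cubicBeta hξ h0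
  rcases h0.lt_or_gt with h | h
  · have hpos : 0 < cubicBeta ξ - 1 := sub_pos.2 (one_lt_cubicBeta_of_mem_Ioo ⟨hξ.1, h⟩)
    have hell := tendsto_ellIntC_nhdsWithin_im_neg hpos
    rw [← Complex.ofReal_neg, neg_sub, add_sub_cancel] at hell
    rw [axisPeriod, if_neg h.le.not_gt]
    exact hell.comp hbeta
  · have hpos : 0 < 1 - cubicBeta ξ := by linarith [cubicBeta_neg_of_mem_Ioo ⟨h, hξ.2⟩]
    have hcont : ContinuousAt ellIntC ((1 - cubicBeta ξ : ℝ) : ℂ) :=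
      (differentiableAt_ellIntC (Or.inl (by simpa using hpos))).continuousAt
    rw [axisPeriod, if_pos h, ← ellIntC_ofReal hpos]
    exact hcont.tendsto.comp (hbeta.mono_right nhdsWithin_le_nhds)

lemma tendsto_periodForm {e : ℝ} {c : ℕ} {a b d s t : ℤ} {ξ : ℝ} (hξ : ξ ∈ Ioo (-1) 1)
    (h0 : ξ ≠ 0) :
    Tendsto (fun τ : ℝ => periodForm e (cuspMonomial c a b d s t) (ξ + τ * I)) (𝓝[>] 0)
      (𝓝 (Complex.exp (π * e * I) * axisForm e (cuspMonomial c a b d s t) ξ)) := by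
  have hR : ContinuousAt (cuspMonomial c a b d s t) (ξ : ℂ) := by
    obtain ⟨hl, hr⟩ := hξ
    refine (differentiableAt_cuspMonomial ?_ ?_ ?_ ?_ ?_).continuousAt <;> norm_cast <;> linarith
  have hcpow := (tendsto_cpow_nhdsWithin_im_pos (cubicRatio_neg_of_mem_Ioo hξ) e).comp
    (tendsto_cubicRatio hξ h0)
  have hlim := (hcpow.mul (tendsto_ellIntC_one_sub_cubicBeta hξ h0)).mul
    (hR.tendsto.comp (tendsto_ofReal_add_mul_I ξ))
  convert hlim using 2
  · rfl
  · rw [axisForm, cuspMonomial_ofReal]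
    push_cast
    ring

lemma periodForm_arcPoint (e : ℝ) (R : ℂ → ℂ) {ξ : ℝ} (hξ : ξ ∈ Ioo (-1) 1) :
    periodForm e R (arcPoint ξ) * (1 + deriv arcIm ξ * I) = arcForm e R ξ := by
  obtain ⟨hb0, hb1⟩ := arcBeta_mem_Ioo hξ
  have h1 : 0 < 1 - arcBeta ξ := sub_pos.2 hb1
  have h0 := ne_zero_of_mem_halfStrip (arcPoint_mem_halfStrip hξ)
  rw [periodForm, arcForm, arcWeight, cubicRatio_eq h0, cubicBeta_arcPoint hξ, ← Complex.ofReal_one,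
    ← Complex.ofReal_sub, ellIntC_ofReal h1, ← Complex.ofReal_div,
    ← Complex.ofReal_cpow (div_pos hb0 h1).le]
  push_cast
  ring

lemma integral_axisForm_Ioo_zero_one (e : ℝ) (R : ℝ → ℝ) :
    ∫ ξ in Ioo 0 1, axisForm e R ξ =
      (∫ ξ in Ioo 0 1, (-cubicRatio ξ) ^ e * R ξ * ellInt 1 (1 - cubicBeta ξ) : ℝ) := by
  rw [← integral_complex_ofReal]
  refine setIntegral_congr_fun measurableSet_Ioo fun ξ hξ => ?_
  simp only [axisForm, axisPeriod, if_pos hξ.1]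
  push_cast
  ring

lemma integral_axisForm_Ioo_neg_one_zero {e : ℝ} {R : ℝ → ℝ}
    (hint : IntegrableOn (axisForm e R) (Ioo (-1) 0)) :
    ∫ ξ in Ioo (-1) 0, axisForm e R ξ =
      (∫ ξ in Ioo (-1) 0, (-cubicRatio ξ) ^ e * R ξ *
        ellInt (cubicBeta ξ - 1) (cubicBeta ξ) : ℝ) +
      (∫ ξ in Ioo (-1) 0, (-cubicRatio ξ) ^ e * R ξ * ellInt 1 (cubicBeta ξ) : ℝ) * I := by
  have hval : ∀ ξ ∈ Ioo (-1 : ℝ) 0, axisForm e R ξ = ((-cubicRatio ξ) ^ e * R ξ : ℝ) *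
      (ellInt (cubicBeta ξ - 1) (cubicBeta ξ) + I * ellInt 1 (cubicBeta ξ)) :=
    fun ξ hξ => by rw [axisForm, axisPeriod, if_neg hξ.2.le.not_gt]
  have hre : EqOn (fun ξ => RCLike.re (axisForm e R ξ))
      (fun ξ => (-cubicRatio ξ) ^ e * R ξ * ellInt (cubicBeta ξ - 1) (cubicBeta ξ))
      (Ioo (-1) 0) := fun ξ hξ => by simp [hval ξ hξ]
  have him : EqOn (fun ξ => RCLike.im (axisForm e R ξ))
      (fun ξ => (-cubicRatio ξ) ^ e * R ξ * ellInt 1 (cubicBeta ξ)) (Ioo (-1) 0) :=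
    fun ξ hξ => by simp [hval ξ hξ]
  rw [← integral_re_add_im hint, setIntegral_congr_fun measurableSet_Ioo hre,
    setIntegral_congr_fun measurableSet_Ioo him]
  rfl

section

variable {e : ℝ} {c : ℕ} {a b d s t : ℤ}

lemma arcIntegrand_periodForm_eqOn {R : ℂ → ℂ} :
    EqOn (arcIntegrand (periodForm e R) arcIm (deriv arcIm) 1) (arcForm e R) (Ioo (-1) 1) := by
  intro ξ hξ
  rw [arcIntegrand, one_mul, one_mul, ← arcPoint, periodForm_arcPoint e R hξ]

variable (ha : -(15 / 16) ≤ 3 * e + a) (hb : -(15 / 16) ≤ -(3 * e) + 3 * -(1 / 16) + b)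
  (hd : -(15 / 16) ≤ 1 / 16 + (d : ℝ))
include ha hb hd

lemma integrableOn_arcForm : IntegrableOn (arcForm e (cuspMonomial c a b d s t)) (Ioo (-1) 1) := by
  obtain ⟨W, L, h⟩ := exists_isDominatedArc_periodForm (c := c) (s := s) (t := t) ha hb hd
  exact (h.integrableOn_arcIntegrand ⟨one_pos, le_rfl⟩).congr_fun arcIntegrand_periodForm_eqOn
    measurableSet_Ioo

lemma integrableOn_axisForm :
    IntegrableOn (axisForm e (cuspMonomial c a b d s t)) (Ioo (-1) 1) := by
  obtain ⟨W, L, h⟩ := exists_isDominatedArc_periodForm (c := c) (s := s) (t := t) ha hb hd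
  exact (integrable_const_mul_iff (Complex.exp_ne_zero _).isUnit _).1
    (h.integrableOn_boundaryValue fun ξ hξ h0 => tendsto_periodForm hξ h0)

lemma integral_arcForm_eq_integral_axisForm :
    ∫ ξ in Ioo (-1) 1, arcForm e (cuspMonomial c a b d s t) ξ =
      Complex.exp (π * e * I) * ∫ ξ in Ioo (-1) 1, axisForm e (cuspMonomial c a b d s t) ξ := by
  obtain ⟨W, L, h⟩ := exists_isDominatedArc_periodForm (c := c) (s := s) (t := t) ha hb hd
  rw [← integral_const_mul, ← setIntegral_congr_fun measurableSet_Ioo arcIntegrand_periodForm_eqOn]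
  exact h.integral_arcIntegrand_eq_integral_boundaryValue
    fun ξ hξ h0 => tendsto_periodForm hξ h0

lemma integral_arcForm :
    ∫ ξ in Ioo (-1) 1, arcForm e (cuspMonomial c a b d s t) ξ = Complex.exp (π * e * I) *
      (((∫ ξ in Ioo 0 1, (-cubicRatio ξ) ^ e * cuspMonomial c a b d s t ξ *
          ellInt 1 (1 - cubicBeta ξ)) +
        ∫ ξ in Ioo (-1) 0, (-cubicRatio ξ) ^ e * cuspMonomial c a b d s t ξ *
          ellInt (cubicBeta ξ - 1) (cubicBeta ξ) : ℝ) +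
        I * (∫ ξ in Ioo (-1) 0, (-cubicRatio ξ) ^ e * cuspMonomial c a b d s t ξ *
          ellInt 1 (cubicBeta ξ) : ℝ)) := by
  have hint := integrableOn_axisForm (c := c) (s := s) (t := t) ha hb hd
  have hleft := hint.mono_set (Ioo_subset_Ioo_right zero_le_one)
  have hright := hint.mono_set (Ioo_subset_Ioo_left (show (-1 : ℝ) ≤ 0 by norm_num))
  have hdisj : Disjoint (Ioc (-1 : ℝ) 0) (Ioo 0 1) :=
    (Ioc_disjoint_Ioi le_rfl).mono_right Ioo_subset_Ioi_self
  rw [integral_arcForm_eq_integral_axisForm ha hb hd,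
    ← Ioc_union_Ioo_eq_Ioo (show (-1 : ℝ) ≤ 0 by norm_num) one_pos,
    setIntegral_union hdisj measurableSet_Ioo (hleft.congr_set_ae Ioo_ae_eq_Ioc.symm)
      hright, integral_Ioc_eq_integral_Ioo, integral_axisForm_Ioo_zero_one,
    integral_axisForm_Ioo_neg_one_zero hleft]
  push_cast
  ring

end

end BoundaryValue

section AxisIntegrals

open MeasureTheory Set Filter
open Complex (I)
open scoped Real

/-- The Euler type integral of the value `₃F₂(1/2, 1/2, r; 1, 1; 1)`. -/
noncomputable def intA (r : ℝ) : ℝ :=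
  ∫ x in Ioo 0 1, x ^ (r - 1) * (1 - x) ^ (-r) * ellInt 1 (1 - x)

/-- The Euler type integral of the value `₃F₂(1/2, 1/2, r; 1, r + 1/2; 1)`. -/
noncomputable def intB (r : ℝ) : ℝ :=
  ∫ x in Ioo 0 1, x ^ (r - 1) * (1 - x) ^ (-(1 / 2) : ℝ) * ellInt 1 (1 - x)

/-- The Euler type integral of the value `₃F₂(1/2, 1/2, 1/2; 1, 3/2 - r; 1)`. -/
noncomputable def intX (r : ℝ) : ℝ :=
  ∫ x in Ioo 0 1, x ^ (-(1 / 2) : ℝ) * (1 - x) ^ (-r) * ellInt 1 (1 - x)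

/-- A modulus `g` on the real segment `(-1, 1)`, with logarithmic derivative `D`: it grows from `1`
to infinity on `(-1, 0)` and satisfies `g (-t) = 1 - g t`. Both `cubicBeta` and `cubicAlpha` are of
this kind. The pole at `0` is encoded by the continuity of `1 / g` and `(g 0)⁻¹ = 0`. -/
structure IsAxisModulus (g D : ℝ → ℝ) : Prop where
  continuousOn_inv : ContinuousOn (fun t => (g t)⁻¹) (Icc (-1) 0)
  hasDerivAt : ∀ t ∈ Ioo (-1) 0, HasDerivAt g (D t * g t) t
  logDeriv_pos : ∀ t ∈ Ioo (-1) 0, 0 < D t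
  one_lt : ∀ t ∈ Ioo (-1) 0, 1 < g t
  map_neg_one : g (-1) = 1
  inv_map_zero : (g 0)⁻¹ = 0
  map_neg : ∀ t ∈ Ioo (-1) 0, g (-t) = 1 - g t
  logDeriv_neg : ∀ t ∈ Ioo (-1) 0, D (-t) * (1 - g t) = D t * g t

namespace IsAxisModulus

variable {g D : ℝ → ℝ}

lemma hasDerivAt_inv (h : IsAxisModulus g D) {t : ℝ} (ht : t ∈ Ioo (-1) 0) :
    HasDerivAt (fun t => (g t)⁻¹) (-(D t / g t)) t := by
  have hg : g t ≠ 0 := (one_pos.trans (h.one_lt t ht)).ne'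
  exact ((h.hasDerivAt t ht).inv hg).congr_deriv (by field_simp)

lemma logDeriv_div_nonneg (h : IsAxisModulus g D) {t : ℝ} (ht : t ∈ Ioo (-1) 0) :
    0 ≤ D t / g t :=
  div_nonneg (h.logDeriv_pos t ht).le (one_pos.trans (h.one_lt t ht)).le

lemma weight_eq {y : ℝ} (hy : 1 < y) (r d : ℝ) :
    d / y * (y⁻¹ ^ (-(1 / 2) : ℝ) * (1 - y⁻¹) ^ (-r)) = (y / (y - 1)) ^ r * (√y)⁻¹ * d := by
  have hy0 : 0 < y := one_pos.trans hy
  have hinv : 0 ≤ 1 - y⁻¹ := sub_nonneg.2 (inv_le_one_of_one_le₀ hy.le)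
  have hratio : (1 - y⁻¹)⁻¹ = y / (y - 1) := by field_simp
  have hroot : y = √y ^ 2 := (Real.sq_sqrt hy0.le).symm
  have : 0 < √y := Real.sqrt_pos.2 hy0
  rw [Real.rpow_neg hinv, ← Real.inv_rpow hinv, hratio, Real.rpow_neg (inv_nonneg.2 hy0.le),
    Real.inv_rpow hy0.le, inv_inv, ← Real.sqrt_eq_rpow]
  nth_rewrite 1 [hroot]
  field_simp

lemma integral_ellInt_sub_one (h : IsAxisModulus g D) (r : ℝ) :
    ∫ t in Ioo (-1) 0, (g t / (g t - 1)) ^ r * ellInt (g t - 1) (g t) * D t = intX r := by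
  have hsubst := integral_Ioo_comp_deriv_smul_of_deriv_nonpos (by norm_num) h.continuousOn_inv
    (fun t ht => h.hasDerivAt_inv ht) (fun t ht => neg_nonpos.2 (h.logDeriv_div_nonneg ht))
    fun x => x ^ (-(1 / 2) : ℝ) * (1 - x) ^ (-r) * ellInt 1 (1 - x)
  rw [h.map_neg_one, h.inv_map_zero, inv_one] at hsubst
  rw [intX, hsubst, ← integral_neg]
  refine setIntegral_congr_fun measurableSet_Ioo fun t ht => ?_
  have hg := h.one_lt t ht
  have hg0 := one_pos.trans hg
  have hell := ellInt_mul_mul hg0 (1 - (g t)⁻¹) 1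
  rw [mul_one, mul_sub, mul_one, mul_inv_cancel₀ hg0.ne', ellInt_comm (1 - _)] at hell
  simp only [smul_eq_mul, neg_mul, neg_neg]
  rw [hell, ← mul_assoc (D t / g t), weight_eq hg]
  ring

lemma integral_ellInt_one (h : IsAxisModulus g D) (r : ℝ) :
    ∫ t in Ioo (-1) 0, (g t / (g t - 1)) ^ r * ellInt 1 (g t) * D t = intB (1 - r) := by
  have hsubst := integral_Ioo_comp_deriv_smul_of_deriv_nonneg (f := fun t => 1 - (g t)⁻¹)
    (by norm_num) (continuousOn_const.sub h.continuousOn_inv)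
    (fun t ht => (h.hasDerivAt_inv ht).const_sub 1)
    (fun t ht => by simpa using h.logDeriv_div_nonneg ht)
    fun x => x ^ (1 - r - 1) * (1 - x) ^ (-(1 / 2) : ℝ) * ellInt 1 (1 - x)
  simp only [h.map_neg_one, h.inv_map_zero, inv_one, sub_self, sub_zero] at hsubst
  rw [intB, hsubst]
  refine setIntegral_congr_fun measurableSet_Ioo fun t ht => ?_
  have hg := h.one_lt t ht
  have hg0 := one_pos.trans hg
  have hell := ellInt_mul_mul hg0 (g t)⁻¹ 1
  rw [mul_one, mul_inv_cancel₀ hg0.ne', ellInt_comm (g t)⁻¹] at hell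
  simp only [smul_eq_mul, neg_neg, sub_sub_cancel, sub_sub_cancel_left]
  rw [hell, mul_comm (_ ^ (-r)), ← mul_assoc (D t / g t), weight_eq hg]
  ring

/- The reflection `t ↦ -t` exchanges `g` and `1 - g`, hence `r` and `1 - r`. -/
lemma integral_ellInt_one_sub (h : IsAxisModulus g D) (r : ℝ) :
    ∫ t in Ioo 0 1, (g t / (g t - 1)) ^ r * ellInt 1 (1 - g t) * D t = -intB r := by
  have hrefl := integral_Ioo_comp_deriv_smul_of_deriv_nonpos (a := -1) (b := 0) (f := Neg.neg)
    (by norm_num) (by fun_prop) (fun t _ => hasDerivAt_neg t) (fun _ _ => by norm_num)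
    fun t => (g t / (g t - 1)) ^ r * ellInt 1 (1 - g t) * D t
  rw [neg_zero, neg_neg] at hrefl
  rw [hrefl, neg_inj]
  refine (setIntegral_congr_fun measurableSet_Ioo fun t ht => ?_).trans
    ((h.integral_ellInt_one (1 - r)).trans (by rw [sub_sub_cancel]))
  have hg := h.one_lt t ht
  have : 0 < g t := one_pos.trans hg
  have : 0 < g t - 1 := sub_pos.2 hg
  have hD : D (-t) = -(D t * (g t / (g t - 1))) := by
    rw [mul_div_assoc', ← h.logDeriv_neg t ht]
    field_simp
    ring
  have hratio : (1 - g t) / (1 - g t - 1) = (g t / (g t - 1))⁻¹ := by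
    rw [inv_div, sub_sub_cancel_left, div_neg, ← neg_div, neg_sub]
  simp only [smul_eq_mul]
  rw [h.map_neg t ht, hD, hratio, sub_sub_cancel, Real.inv_rpow (by positivity),
    Real.rpow_sub (by positivity), Real.rpow_one]
  field_simp

end IsAxisModulus

/-- The logarithmic derivative of `cubicBeta`. -/
def dlogBeta {K : Type*} [Field K] (m : K) : K := 3 * (1 + m) ^ 2 / ((m - 1) * (m + 3) * m)

/-- The logarithmic derivative of `cubicAlpha`. -/
def dlogAlpha {K : Type*} [Field K] (m : K) : K := (3 - m) ^ 2 / ((m - 1) * (m + 3) * m)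

lemma dlogBeta_mul_cubicBeta {K : Type*} [Field K] [CharZero K] {m : K} (h1 : m - 1 ≠ 0)
    (h3 : m + 3 ≠ 0) : dlogBeta m * cubicBeta m = 3 * (m ^ 2 - 1) ^ 2 / (16 * m ^ 2) := by
  rcases eq_or_ne m 0 with rfl | h0
  · simp [dlogBeta]
  rw [dlogBeta, cubicBeta, div_mul_div_comm, div_eq_div_iff (mul_ne_zero
    (mul_ne_zero (mul_ne_zero h1 h3) h0) (by simpa using h0)) (by simpa using h0)]
  ring

lemma hasDerivAt_cubicAlpha {m : ℝ} (h0 : m ≠ 0) (h1 : m - 1 ≠ 0) :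
    HasDerivAt cubicAlpha (dlogAlpha m * cubicAlpha m) m := by
  have hn := ((hasDerivAt_id m).sub_const 1).mul (((hasDerivAt_id m).add_const 3).pow 3)
  have hd := ((hasDerivAt_id m).pow 3).const_mul 16
  refine (hn.div hd (by simpa using h0)).congr_deriv ?_
  simp only [id, Pi.mul_apply, Pi.pow_apply, dlogAlpha, cubicAlpha]
  field_simp
  ring

lemma isAxisModulus_cubicBeta : IsAxisModulus cubicBeta dlogBeta where
  continuousOn_inv := by
    simp only [cubicBeta, inv_div]
    refine ContinuousOn.div (by fun_prop) (by fun_prop) fun t ht =>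
      mul_ne_zero (pow_ne_zero 3 ?_) ?_
    · linarith [ht.2]
    · linarith [ht.1]
  hasDerivAt t ht := by
    rw [dlogBeta_mul_cubicBeta (by linarith [ht.2]) (by linarith [ht.1])]
    exact hasDerivAt_cubicBeta ht.2.ne
  logDeriv_pos t ht := by
    have : 0 < 1 + t := by linarith [ht.1]
    refine div_pos (by positivity) (mul_pos_of_neg_of_neg ?_ ht.2)
    exact mul_neg_of_neg_of_pos (by linarith [ht.2]) (by linarith)
  one_lt t ht := one_lt_cubicBeta_of_mem_Ioo ht
  map_neg_one := by norm_num [cubicBeta]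
  inv_map_zero := by simp [cubicBeta]
  map_neg t ht := cubicBeta_neg ht.2.ne
  logDeriv_neg t ht := by
    have h0 := ht.2.ne
    have h1 : t - 1 ≠ 0 := by linarith [ht.2]
    have h1' : -t - 1 ≠ 0 := by linarith [ht.1]
    have h3 : t + 3 ≠ 0 := by linarith [ht.1]
    have h3' : -t + 3 ≠ 0 := by linarith [ht.2]
    rw [← cubicBeta_neg h0, dlogBeta_mul_cubicBeta h1' h3', dlogBeta_mul_cubicBeta h1 h3, neg_sq]

lemma isAxisModulus_cubicAlpha : IsAxisModulus cubicAlpha dlogAlpha where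
  continuousOn_inv := by
    simp only [cubicAlpha, inv_div]
    refine ContinuousOn.div (by fun_prop) (by fun_prop) fun t ht =>
      mul_ne_zero ?_ (pow_ne_zero 3 ?_)
    · linarith [ht.2]
    · linarith [ht.1]
  hasDerivAt t ht := hasDerivAt_cubicAlpha ht.2.ne (by linarith [ht.2])
  logDeriv_pos t ht := by
    have : 0 < 3 - t := by linarith [ht.2]
    refine div_pos (by positivity) (mul_pos_of_neg_of_neg ?_ ht.2)
    exact mul_neg_of_neg_of_pos (by linarith [ht.2]) (by linarith [ht.1])
  one_lt t ht := by
    have hpos : 0 < (1 + t) * (3 - t) ^ 3 :=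
      mul_pos (by linarith [ht.1]) (pow_pos (by linarith [ht.2]) 3)
    have ht3 : 16 * t ^ 3 < 0 := by nlinarith [Odd.pow_neg (n := 3) (by decide) ht.2]
    rw [← sub_neg, one_sub_cubicAlpha ht.2.ne]
    exact div_neg_of_pos_of_neg hpos ht3
  map_neg_one := by norm_num [cubicAlpha]
  inv_map_zero := by simp [cubicAlpha]
  map_neg t ht := cubicAlpha_neg ht.2.ne
  logDeriv_neg t ht := by
    have h0 := ht.2.ne
    have : t - 1 ≠ 0 := by linarith [ht.2]
    have : -t - 1 ≠ 0 := by linarith [ht.1]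
    have : t + 3 ≠ 0 := by linarith [ht.1]
    have : -t + 3 ≠ 0 := by linarith [ht.2]
    rw [← cubicAlpha_neg h0, dlogAlpha, dlogAlpha, cubicAlpha, cubicAlpha]
    field_simp
    ring

lemma neg_cubicRatio_eq {m : ℝ} (hm : m ≠ 0) :
    -cubicRatio m = cubicBeta m / (cubicBeta m - 1) := by
  rw [cubicRatio_eq hm, ← div_neg, neg_sub]

/-- The form `(β / (1 - β)) ^ e * R dm` is `m * (α / (1 - α)) ^ r * dα / α` on the real line, where
`α = cubicAlpha m`, `β = cubicBeta m`. Absolute values make the powers meaningful also when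
`β` and `α` lie outside `(0, 1)`. -/
def IsAlphaForm (e r : ℝ) (R : ℝ → ℝ) : Prop :=
  ∀ m ∈ Ioo (-3 : ℝ) 3, m ≠ 0 → m ≠ 1 → m ≠ -1 →
    |cubicRatio m| ^ e * R m =
      |cubicAlpha m / (1 - cubicAlpha m)| ^ r * (m * dlogAlpha m)

lemma rpow_div_eq_rpow_div_mul {s t c : ℝ} (hs : 0 ≤ s) (ht : 0 ≤ t) (hc : 0 ≤ c) {j n k : ℕ}
    (hk : k ≠ 0) (h : t ^ j = s ^ n * c ^ k) :
    t ^ (j / k : ℝ) = s ^ (n / k : ℝ) * c := by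
  rw [div_eq_mul_inv, div_eq_mul_inv, Real.rpow_mul ht, Real.rpow_mul hs, Real.rpow_natCast,
    Real.rpow_natCast, h, Real.mul_rpow (by positivity) (by positivity),
    Real.pow_rpow_inv_natCast hc hk]

lemma cubicAlpha_div_one_sub {m : ℝ} (hm : m ≠ 0) :
    cubicAlpha m / (1 - cubicAlpha m) = (m - 1) * (m + 3) ^ 3 / ((1 + m) * (3 - m) ^ 3) := by
  rw [one_sub_cubicAlpha hm, cubicAlpha, div_div_div_cancel_right₀ (by simpa using hm)]

lemma isAlphaForm_of_pow_eq {e r : ℝ} {R c : ℝ → ℝ} {j n k : ℕ} (hk : k ≠ 0) (he : e = n / k)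
    (hr : r = j / k)
    (h : ∀ m ∈ Ioo (-3 : ℝ) 3, m ≠ 0 → m - 1 ≠ 0 → 1 + m ≠ 0 → 0 ≤ c m ∧
      ((m - 1) * (m + 3) ^ 3 / ((1 + m) * (3 - m) ^ 3)) ^ j = cubicRatio m ^ n * c m ^ k ∧
      R m = c m * (m * dlogAlpha m)) :
    IsAlphaForm e r R := by
  intro m hm h0 h1 h1'
  obtain ⟨hc, hpow, hR⟩ := h m hm h0 (sub_ne_zero.2 h1) fun h => h1' (by linarith)
  have habs := congrArg abs hpow
  rw [abs_pow, abs_mul, abs_pow, abs_pow, abs_of_nonneg hc] at habs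
  rw [he, hr, cubicAlpha_div_one_sub h0,
    rpow_div_eq_rpow_div_mul (abs_nonneg _) (abs_nonneg _) hc hk habs, hR, mul_assoc]

/-- The integrand relative to `(β / (1 - β)) ^ (1 / 8)` of the pullback of the integrand of
`intA (3 / 8)`. -/
def traceForm {K : Type*} [Field K] (m : K) : K := (3 - m) / (m - 1)

/-- The integrand relative to `(β / (1 - β)) ^ (7 / 8)` of the pullback of the integrand of
`intA (5 / 8)`. -/
def traceForm' {K : Type*} [Field K] (m : K) : K := (m + 1) ^ 2 * (3 - m) / (m - 1) ^ 3

lemma isAlphaForm_traceForm : IsAlphaForm (1 / 8) (3 / 8) traceForm := by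
  refine isAlphaForm_of_pow_eq (c := fun m => (m + 3) / (3 - m)) (j := 3) (n := 1) (k := 8)
    (by norm_num) (by norm_num) (by norm_num) fun m hm h0 h1 h1' => ?_
  have h3 : 0 < m + 3 := by linarith [hm.1]
  have h3' : 0 < 3 - m := by linarith [hm.2]
  refine ⟨by positivity, ?_, ?_⟩
  · rw [cubicRatio, add_comm m 1]
    field_simp
  · rw [traceForm, dlogAlpha]
    field_simp

lemma isAlphaForm_traceForm' : IsAlphaForm (7 / 8) (5 / 8) traceForm' := by
  refine isAlphaForm_of_pow_eq (c := fun m => (1 + m) ^ 2 * (m + 3) / ((m - 1) ^ 2 * (3 - m)))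
    (j := 5) (n := 7) (k := 8) (by norm_num) (by norm_num) (by norm_num) fun m hm h0 h1 h1' => ?_
  have h3 : 0 < m + 3 := by linarith [hm.1]
  have h3' : 0 < 3 - m := by linarith [hm.2]
  refine ⟨by positivity, ?_, ?_⟩
  · rw [cubicRatio, add_comm m 1]
    field_simp
  · rw [traceForm', dlogAlpha, add_comm m 1]
    field_simp

lemma ellInt_one_cubicAlpha_of_neg {m : ℝ} (hm : m ∈ Ioo (-1) 0) :
    ellInt 1 (cubicAlpha m) = -m * ellInt 1 (cubicBeta m) := by
  have := ellInt_one_sub_cubicAlpha (m := -m) (by linarith [hm.2]) (by linarith [hm.1])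
  rwa [cubicAlpha_neg hm.2.ne, cubicBeta_neg hm.2.ne, sub_sub_cancel, sub_sub_cancel] at this

lemma ellInt_cubicAlpha_sub_one_of_neg {m : ℝ} (hm : m ∈ Ioo (-1) 0) :
    ellInt (cubicAlpha m - 1) (cubicAlpha m) =
      -m / 3 * ellInt (cubicBeta m - 1) (cubicBeta m) := by
  have := ellInt_neg_cubicAlpha (m := -m) (by linarith [hm.2]) (by linarith [hm.1])
  rwa [cubicAlpha_neg hm.2.ne, cubicBeta_neg hm.2.ne, sub_sub_cancel, sub_sub_cancel, neg_sub,
    neg_sub] at this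

lemma IsAlphaForm.neg_cubicRatio_rpow_mul {e r : ℝ} {R : ℝ → ℝ} (h : IsAlphaForm e r R) {m : ℝ}
    (hm : m ∈ Ioo (-1) 1) (h0 : m ≠ 0) :
    (-cubicRatio m) ^ e * R m =
      (cubicAlpha m / (cubicAlpha m - 1)) ^ r * (m * dlogAlpha m) := by
  have hα : cubicAlpha m / (1 - cubicAlpha m) < 0 := by
    rw [cubicAlpha_div_one_sub h0]
    exact div_neg_of_neg_of_pos (mul_neg_of_neg_of_pos (by linarith [hm.2])
      (pow_pos (by linarith [hm.1]) 3)) (mul_pos (by linarith [hm.1])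
      (pow_pos (by linarith [hm.2]) 3))
  have := h m ⟨by linarith [hm.1], by linarith [hm.2]⟩ h0 hm.2.ne hm.1.ne'
  rwa [abs_of_neg (cubicRatio_neg_of_mem_Ioo hm), abs_of_neg hα, ← div_neg, neg_sub] at this

lemma IsAlphaForm.integral_axis {e r : ℝ} {R : ℝ → ℝ} (h : IsAlphaForm e r R) :
    ∫ ξ in Ioo 0 1, (-cubicRatio ξ) ^ e * R ξ * ellInt 1 (1 - cubicBeta ξ) = -intB r ∧
    ∫ ξ in Ioo (-1) 0, (-cubicRatio ξ) ^ e * R ξ * ellInt (cubicBeta ξ - 1) (cubicBeta ξ) =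
      -(3 * intX r) ∧
    ∫ ξ in Ioo (-1) 0, (-cubicRatio ξ) ^ e * R ξ * ellInt 1 (cubicBeta ξ) = -intB (1 - r) := by
  refine ⟨?_, ?_, ?_⟩
  · rw [← isAxisModulus_cubicAlpha.integral_ellInt_one_sub r]
    refine setIntegral_congr_fun measurableSet_Ioo fun m hm => ?_
    have hR := h.neg_cubicRatio_rpow_mul ⟨by linarith [hm.1], hm.2⟩ hm.1.ne'
    have hell := ellInt_one_sub_cubicAlpha hm.1 (by linarith [hm.2])
    simp only [hR, hell]
    ring
  · rw [← isAxisModulus_cubicAlpha.integral_ellInt_sub_one r, ← integral_const_mul,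
      ← integral_neg]
    refine setIntegral_congr_fun measurableSet_Ioo fun m hm => ?_
    have hR := h.neg_cubicRatio_rpow_mul ⟨hm.1, by linarith [hm.2]⟩ hm.2.ne
    simp only [hR, ellInt_cubicAlpha_sub_one_of_neg hm]
    ring
  · rw [← isAxisModulus_cubicAlpha.integral_ellInt_one r, ← integral_neg]
    refine setIntegral_congr_fun measurableSet_Ioo fun m hm => ?_
    have hR := h.neg_cubicRatio_rpow_mul ⟨hm.1, by linarith [hm.2]⟩ hm.2.ne
    simp only [hR, ellInt_one_cubicAlpha_of_neg hm]
    ring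

lemma dlogBeta_eq_cuspMonomial {K : Type*} [Field K] :
    dlogBeta (K := K) = cuspMonomial 3 (-1) 2 (-1) (-1) 0 := by
  ext m
  simp [dlogBeta, cuspMonomial, div_eq_mul_inv]
  ring

lemma traceForm_eq_cuspMonomial {K : Type*} [Field K] :
    traceForm (K := K) = cuspMonomial 1 (-1) 0 0 0 1 := by
  ext m
  simp [traceForm, cuspMonomial, div_eq_inv_mul]

lemma traceForm'_eq_cuspMonomial {K : Type*} [Field K] :
    traceForm' (K := K) = cuspMonomial 1 (-3) 2 0 0 1 := by
  ext m
  simp [traceForm', cuspMonomial, zpow_neg, zpow_ofNat, div_eq_inv_mul, mul_assoc]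

lemma integral_axis_dlogBeta (r : ℝ) :
    ∫ ξ in Ioo 0 1, (-cubicRatio ξ) ^ r * dlogBeta ξ * ellInt 1 (1 - cubicBeta ξ) = -intB r ∧
    ∫ ξ in Ioo (-1) 0, (-cubicRatio ξ) ^ r * dlogBeta ξ *
      ellInt (cubicBeta ξ - 1) (cubicBeta ξ) = intX r ∧
    ∫ ξ in Ioo (-1) 0, (-cubicRatio ξ) ^ r * dlogBeta ξ * ellInt 1 (cubicBeta ξ) =
      intB (1 - r) := by
  rw [← isAxisModulus_cubicBeta.integral_ellInt_one_sub,
    ← isAxisModulus_cubicBeta.integral_ellInt_one,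
    ← isAxisModulus_cubicBeta.integral_ellInt_sub_one]
  refine ⟨?_, ?_, ?_⟩ <;> refine setIntegral_congr_fun measurableSet_Ioo fun ξ hξ => ?_
  · simp only [neg_cubicRatio_eq hξ.1.ne', mul_right_comm]
  · simp only [neg_cubicRatio_eq hξ.2.ne, mul_right_comm]
  · simp only [neg_cubicRatio_eq hξ.2.ne, mul_right_comm]

lemma integral_arcForm_dlogBeta {r : ℝ} (h0 : 1 / 8 ≤ r) (h1 : r ≤ 7 / 8) :
    ∫ ξ in Ioo (-1) 1, arcForm r dlogBeta ξ =
      Complex.exp (π * r * I) * ((-intB r + intX r : ℝ) + I * (intB (1 - r) : ℝ)) := by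
  obtain ⟨hpos, hX, hB⟩ := integral_axis_dlogBeta r
  rw [dlogBeta_eq_cuspMonomial, integral_arcForm (by push_cast; linarith)
    (by push_cast; linarith) (by norm_num), ← dlogBeta_eq_cuspMonomial, hpos, hX, hB]

lemma integrableOn_arcForm_traceForm : IntegrableOn (arcForm (1 / 8) traceForm) (Ioo (-1) 1) := by
  rw [traceForm_eq_cuspMonomial]
  exact integrableOn_arcForm (by norm_num) (by norm_num) (by norm_num)

lemma integrableOn_arcForm_traceForm' :
    IntegrableOn (arcForm (7 / 8) traceForm') (Ioo (-1) 1) := by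
  rw [traceForm'_eq_cuspMonomial]
  exact integrableOn_arcForm (by norm_num) (by norm_num) (by norm_num)

lemma integral_arcForm_traceForm :
    ∫ ξ in Ioo (-1) 1, arcForm (1 / 8) traceForm ξ = Complex.exp (π * (1 / 8 : ℝ) * I) *
      ((-intB (3 / 8) - 3 * intX (3 / 8) : ℝ) + I * (-intB (5 / 8) : ℝ)) := by
  obtain ⟨hpos, hX, hB⟩ := isAlphaForm_traceForm.integral_axis
  rw [traceForm_eq_cuspMonomial, integral_arcForm (by norm_num) (by norm_num) (by norm_num),
    ← traceForm_eq_cuspMonomial, hpos, hX, hB]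
  norm_num [sub_eq_add_neg]

lemma integral_arcForm_traceForm' :
    ∫ ξ in Ioo (-1) 1, arcForm (7 / 8) traceForm' ξ = Complex.exp (π * (7 / 8 : ℝ) * I) *
      ((-intB (5 / 8) - 3 * intX (5 / 8) : ℝ) + I * (-intB (3 / 8) : ℝ)) := by
  obtain ⟨hpos, hX, hB⟩ := isAlphaForm_traceForm'.integral_axis
  rw [traceForm'_eq_cuspMonomial, integral_arcForm (by norm_num) (by norm_num) (by norm_num),
    ← traceForm'_eq_cuspMonomial, hpos, hX, hB]
  norm_num [sub_eq_add_neg]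

end AxisIntegrals

section RealBranches

open MeasureTheory Set Filter
open Complex (I)
open scoped Topology Real

lemma continuousOn_ellInt_one_sub : ContinuousOn (fun x : ℝ => ellInt 1 (1 - x)) (Ioo 0 1) := by
  have hcont : ContinuousOn (fun x : ℝ => (ellIntC ((1 - x : ℝ) : ℂ)).re) (Ioo 0 1) := by
    intro x hx
    have hell : ContinuousAt ellIntC ((1 - x : ℝ) : ℂ) :=
      (differentiableAt_ellIntC (Or.inl (by simpa using hx.2))).continuousAt
    have hsub : ContinuousAt (fun x : ℝ => ((1 - x : ℝ) : ℂ)) x := by fun_prop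
    exact (Complex.continuous_re.continuousAt.comp
      (hell.comp (f := fun x : ℝ => ((1 - x : ℝ) : ℂ)) hsub)).continuousWithinAt
  refine hcont.congr fun x hx => ?_
  simp only
  rw [ellIntC_ofReal (sub_pos.2 hx.2), Complex.ofReal_re]

lemma integrableOn_intA {r : ℝ} (h0 : 0 < r) (h1 : r < 15 / 16) :
    IntegrableOn (fun x => x ^ (r - 1) * (1 - x) ^ (-r) * ellInt 1 (1 - x)) (Ioo 0 1) := by
  obtain ⟨C, -, hC⟩ := exists_norm_ellIntC_le
  have hdom := (integrableOn_rpow_mul_one_sub_rpow (a := r - 1) (b := -r + -(1 / 16))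
    (by linarith) (by linarith)).mul_const C
  refine hdom.mono' ?_ ?_
  · refine ContinuousOn.aestronglyMeasurable ?_ measurableSet_Ioo
    refine ContinuousOn.mul (ContinuousOn.mul ?_ ?_) continuousOn_ellInt_one_sub
    · exact continuousOn_id.rpow_const fun x hx => Or.inl hx.1.ne'
    · exact ContinuousOn.rpow_const (by fun_prop) fun x hx => Or.inl (sub_pos.2 hx.2).ne'
  · filter_upwards [ae_restrict_mem measurableSet_Ioo] with x hx
    have hx0 := hx.1
    have hx1 : 0 < 1 - x := sub_pos.2 hx.2
    have hell := hC ((1 - x : ℝ) : ℂ) (by exact_mod_cast hx1.ne')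
    rw [ellIntC_ofReal hx1, Complex.norm_real, Complex.norm_real,
      Real.norm_of_nonneg hx1.le] at hell
    rw [norm_mul, Real.norm_of_nonneg (by positivity), Real.rpow_add hx1]
    calc _ ≤ x ^ (r - 1) * (1 - x) ^ (-r) * (C * (1 - x) ^ (-(1 / 16) : ℝ)) := by gcongr
      _ = _ := by ring

/-- A modulus `y` decreasing from `1` to `0` on the segment `(-1, 1)`, with logarithmic derivative
`D`. -/
structure IsDecreasingModulus (y D : ℝ → ℝ) : Prop where
  continuousOn : ContinuousOn y (Icc (-1) 1)
  hasDerivAt : ∀ ξ ∈ Ioo (-1) 1, HasDerivAt y (D ξ * y ξ) ξ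
  logDeriv_nonpos : ∀ ξ ∈ Ioo (-1) 1, D ξ ≤ 0
  mem_Ioo : ∀ ξ ∈ Ioo (-1) 1, y ξ ∈ Ioo 0 1
  map_neg_one : y (-1) = 1
  map_one : y 1 = 0

namespace IsDecreasingModulus

variable {y D : ℝ → ℝ}

lemma weight_eqOn (h : IsDecreasingModulus y D) (r : ℝ) :
    EqOn (fun ξ => (D ξ * y ξ) • (y ξ ^ (r - 1) * (1 - y ξ) ^ (-r) * ellInt 1 (1 - y ξ)))
      (fun ξ => (y ξ / (1 - y ξ)) ^ r * ellInt 1 (1 - y ξ) * D ξ) (Ioo (-1) 1) := by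
  intro ξ hξ
  obtain ⟨hy0, hy1⟩ := h.mem_Ioo ξ hξ
  have hy1' : 0 < 1 - y ξ := sub_pos.2 hy1
  simp only [smul_eq_mul]
  rw [Real.div_rpow hy0.le hy1'.le, Real.rpow_sub_one hy0.ne', Real.rpow_neg hy1'.le]
  field_simp

lemma logDeriv_mul_nonpos (h : IsDecreasingModulus y D) {ξ : ℝ} (hξ : ξ ∈ Ioo (-1) 1) :
    D ξ * y ξ ≤ 0 :=
  mul_nonpos_of_nonpos_of_nonneg (h.logDeriv_nonpos ξ hξ) (h.mem_Ioo ξ hξ).1.le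

lemma integrableOn_ellInt_one_sub (h : IsDecreasingModulus y D) {r : ℝ} (h0 : 0 < r)
    (h1 : r < 15 / 16) :
    IntegrableOn (fun ξ => (y ξ / (1 - y ξ)) ^ r * ellInt 1 (1 - y ξ) * D ξ) (Ioo (-1) 1) := by
  refine IntegrableOn.congr_fun ?_ (h.weight_eqOn r) measurableSet_Ioo
  refine (integrableOn_Ioo_comp_deriv_smul_iff_of_deriv_nonpos (by norm_num) h.continuousOn
    h.hasDerivAt (fun ξ hξ => h.logDeriv_mul_nonpos hξ)
    fun x => x ^ (r - 1) * (1 - x) ^ (-r) * ellInt 1 (1 - x)).2 ?_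
  rw [h.map_neg_one, h.map_one]
  exact integrableOn_intA h0 h1

lemma integral_ellInt_one_sub (h : IsDecreasingModulus y D) (r : ℝ) :
    ∫ ξ in Ioo (-1) 1, (y ξ / (1 - y ξ)) ^ r * ellInt 1 (1 - y ξ) * D ξ = -intA r := by
  have hsubst := integral_Ioo_comp_deriv_smul_of_deriv_nonpos (by norm_num) h.continuousOn
    h.hasDerivAt (fun ξ hξ => h.logDeriv_mul_nonpos hξ)
    fun x => x ^ (r - 1) * (1 - x) ^ (-r) * ellInt 1 (1 - x)
  rw [h.map_neg_one, h.map_one] at hsubst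
  rw [intA, hsubst, neg_neg]
  exact (setIntegral_congr_fun measurableSet_Ioo (h.weight_eqOn r)).symm

end IsDecreasingModulus

/-- The logarithmic derivative of `arcBeta`. -/
noncomputable def dlogArcBeta (ξ : ℝ) : ℝ :=
  -(3 * (1 - ξ ^ 2) ^ 2 / (2 * arcSqrt ξ)) / arcBeta ξ

lemma arcSqrt_neg (ξ : ℝ) : arcSqrt (-ξ) = arcSqrt ξ := by
  rw [arcSqrt, arcSqrt, neg_sq, (by decide : Even 4).neg_pow]

lemma arcIm_neg (ξ : ℝ) : arcIm (-ξ) = arcIm ξ := by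
  rw [arcIm, arcIm, arcSqrt_neg, neg_sq]

lemma arcBeta_neg (ξ : ℝ) : arcBeta (-ξ) = 1 - arcBeta ξ := by
  rw [arcBeta, arcBeta, arcSqrt_neg]
  ring

lemma arcPoint_neg (ξ : ℝ) : arcPoint (-ξ) = -(starRingEnd ℂ) (arcPoint ξ) := by
  apply Complex.ext <;> simp [arcIm_neg]

lemma isDecreasingModulus_arcBeta : IsDecreasingModulus arcBeta dlogArcBeta where
  continuousOn ξ _ := (hasDerivAt_arcBeta ξ).continuousAt.continuousWithinAt
  hasDerivAt ξ hξ := by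
    rw [dlogArcBeta, div_mul_cancel₀ _ (arcBeta_mem_Ioo hξ).1.ne']
    exact hasDerivAt_arcBeta ξ
  logDeriv_nonpos ξ hξ := by
    have := arcSqrt_pos ξ
    exact div_nonpos_of_nonpos_of_nonneg (neg_nonpos.2 (by positivity)) (arcBeta_mem_Ioo hξ).1.le
  mem_Ioo _ := arcBeta_mem_Ioo
  map_neg_one := by norm_num [arcBeta, arcSqrt]
  map_one := by norm_num [arcBeta, arcSqrt]

lemma cubicFactors_ne_zero_of_cubicBeta {K : Type*} [Field K] [CharZero K] {m : K}
    (hb0 : cubicBeta m ≠ 0) (hb1 : cubicBeta m ≠ 1) :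
    m ≠ 0 ∧ m - 1 ≠ 0 ∧ m + 1 ≠ 0 ∧ m + 3 ≠ 0 := by
  have h0 : m ≠ 0 := by
    rintro rfl
    simp [cubicBeta] at hb0
  have hb1' := sub_ne_zero.2 hb1.symm
  rw [one_sub_cubicBeta h0] at hb1'
  rw [cubicBeta] at hb0
  refine ⟨h0, ?_, ?_, ?_⟩
  · rintro h
    simp [h] at hb0
  · rintro h
    simp [add_comm 1 m, h] at hb1'
  · rintro h
    simp [h] at hb0

lemma sq_mem_Ioo_of_cubicBeta_mem_Ioo {m : ℝ} (h : cubicBeta m ∈ Ioo 0 1) :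
    m ^ 2 ∈ Ioo 1 9 := by
  have h0 := (cubicFactors_ne_zero_of_cubicBeta h.1.ne' h.2.ne).1
  have hpos := mul_pos h.1 (sub_pos.2 h.2)
  have hprod : 256 * m ^ 2 * (cubicBeta m * (1 - cubicBeta m)) = (m ^ 2 - 1) ^ 3 * (9 - m ^ 2) := by
    rw [one_sub_cubicBeta h0, cubicBeta]
    field_simp
    ring
  have hprod_pos : 0 < (m ^ 2 - 1) ^ 3 * (9 - m ^ 2) := by
    rw [← hprod]
    positivity
  rcases pos_and_pos_or_neg_and_neg_of_mul_pos hprod_pos with ⟨h1, h9⟩ | ⟨h1, h9⟩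
  · exact ⟨sub_pos.1 ((Odd.pow_pos_iff (by decide)).1 h1), sub_pos.1 h9⟩
  · linarith [(Odd.pow_neg_iff (by decide)).1 h1]

lemma cubicAlpha_mem_Ioo_of_cubicBeta_mem_Ioo {m : ℝ} (h : cubicBeta m ∈ Ioo 0 1) :
    cubicAlpha m ∈ Ioo 0 1 := by
  obtain ⟨h0, h1, h1', h3⟩ := cubicFactors_ne_zero_of_cubicBeta h.1.ne' h.2.ne
  have h3' : 3 - m ≠ 0 := by nlinarith [(sq_mem_Ioo_of_cubicBeta_mem_Ioo h).2]
  rw [add_comm] at h1'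
  have hprod : cubicAlpha m * cubicBeta m = ((m - 1) * (m + 3)) ^ 4 / (256 * m ^ 4) := by
    rw [cubicAlpha, cubicBeta]
    field_simp
    ring
  have hprod' : (1 - cubicAlpha m) * (1 - cubicBeta m) =
      ((1 + m) * (3 - m)) ^ 4 / (256 * m ^ 4) := by
    rw [one_sub_cubicAlpha h0, one_sub_cubicBeta h0]
    field_simp
    ring
  exact ⟨(pos_iff_pos_of_mul_pos (by rw [hprod]; positivity)).2 h.1,
    sub_pos.1 ((pos_iff_pos_of_mul_pos (by rw [hprod']; positivity)).2 (sub_pos.2 h.2))⟩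

/-- A branch `q` over the arc of the inverse of `cubicBeta`, with derivative `q'`. There are four of
them: the arc itself, its complex conjugate and two real ones. -/
structure IsArcBranch {𝕜 : Type*} [RCLike 𝕜] (q q' : ℝ → 𝕜) : Prop where
  hasDerivAt : ∀ ξ ∈ Ioo (-1) 1, HasDerivAt q (q' ξ) ξ
  cubicBeta_eq : ∀ ξ ∈ Ioo (-1) 1, cubicBeta (q ξ) = (arcBeta ξ : 𝕜)

lemma isArcBranch_arcPoint : IsArcBranch arcPoint fun ξ => 1 + deriv arcIm ξ * I where
  hasDerivAt ξ _ := hasDerivAt_arcPoint ξ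
  cubicBeta_eq _ := cubicBeta_arcPoint

namespace IsArcBranch

variable {𝕜 : Type*} [RCLike 𝕜] {q q' : ℝ → 𝕜} {ξ : ℝ}

lemma factors_ne_zero (h : IsArcBranch q q') (hξ : ξ ∈ Ioo (-1) 1) :
    q ξ ≠ 0 ∧ q ξ - 1 ≠ 0 ∧ q ξ + 1 ≠ 0 ∧ q ξ + 3 ≠ 0 := by
  obtain ⟨hb0, hb1⟩ := arcBeta_mem_Ioo hξ
  apply cubicFactors_ne_zero_of_cubicBeta <;> rw [h.cubicBeta_eq ξ hξ]
  · exact_mod_cast hb0.ne'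
  · exact_mod_cast hb1.ne

lemma dlogBeta_mul (h : IsArcBranch q q') (hξ : ξ ∈ Ioo (-1) 1) :
    dlogBeta (q ξ) * q' ξ = (dlogArcBeta ξ : 𝕜) := by
  obtain ⟨h0, h1, -, h3⟩ := h.factors_ne_zero hξ
  have hb : (arcBeta ξ : 𝕜) ≠ 0 := by exact_mod_cast (arcBeta_mem_Ioo hξ).1.ne'
  have hcomp : HasDerivAt (fun ξ => cubicBeta (q ξ)) _ ξ :=
    (hasDerivAt_cubicBeta h0).comp ξ (h.hasDerivAt ξ hξ)
  have harc : HasDerivAt (fun ξ => (arcBeta ξ : 𝕜)) _ ξ :=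
    (RCLike.ofRealCLM (K := 𝕜)).hasFDerivAt.comp_hasDerivAt ξ
      (isDecreasingModulus_arcBeta.hasDerivAt ξ hξ)
  have hunique := hcomp.unique (harc.congr_of_eventuallyEq (by
    filter_upwards [Ioo_mem_nhds hξ.1 hξ.2] with t ht using h.cubicBeta_eq t ht))
  rw [← dlogBeta_mul_cubicBeta h1 h3, h.cubicBeta_eq ξ hξ, RCLike.ofRealCLM_apply,
    RCLike.ofReal_mul] at hunique
  exact mul_right_cancel₀ hb (by linear_combination hunique)

end IsArcBranch

/-- The root of `cubicBeta m = arcBeta ξ` in the interval `(1, 3)`; the other real root is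
`-realRoot (-ξ)`. -/
noncomputable def realRoot (ξ : ℝ) : ℝ := -ξ + √(2 * arcSqrt ξ + 3 - ξ ^ 2)

lemma realRoot_quadratic (ξ : ℝ) :
    realRoot ξ ^ 2 + 2 * ξ * realRoot ξ + (2 * ξ ^ 2 - 3 - 2 * arcSqrt ξ) = 0 := by
  rw [realRoot]
  linear_combination Real.sq_sqrt (arcIm_arg_pos ξ).le

lemma realRoot_neg (ξ : ℝ) : realRoot (-ξ) = realRoot ξ + 2 * ξ := by
  rw [realRoot, realRoot, arcSqrt_neg, neg_sq]
  ring

lemma realRoot_one : realRoot 1 = 1 := by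
  have h : √(4 : ℝ) = 2 := by rw [Real.sqrt_eq_iff_mul_self_eq] <;> norm_num
  norm_num [realRoot, arcSqrt, h]

lemma realRoot_neg_one : realRoot (-1) = 3 := by
  norm_num [realRoot_neg, realRoot_one]

lemma contDiff_realRoot : ContDiff ℝ 1 realRoot := contDiff_neg.add contDiff_sqrt_arcIm_arg

lemma hasDerivAt_realRoot (ξ : ℝ) : HasDerivAt realRoot (deriv realRoot ξ) ξ :=
  (contDiff_realRoot.differentiable one_ne_zero ξ).hasDerivAt

lemma realRoot_pos {ξ : ℝ} (hξ : ξ ∈ Icc (-1) 1) : 0 < realRoot ξ := by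
  have hsq : ξ ^ 2 ≤ 1 := (sq_le_one_iff_abs_le_one ξ).2 (abs_le.2 hξ)
  have := Real.lt_sqrt_of_sq_lt (by linarith [arcSqrt_pos ξ] : ξ ^ 2 < 2 * arcSqrt ξ + 3 - ξ ^ 2)
  rw [realRoot]
  linarith

lemma neg_mem_Icc_neg_one_one {ξ : ℝ} (hξ : ξ ∈ Icc (-1) 1) : -ξ ∈ Icc (-1) 1 :=
  ⟨neg_le_neg hξ.2, neg_le.1 hξ.1⟩

lemma cubicBeta_realRoot {ξ : ℝ} (hξ : ξ ∈ Icc (-1) 1) : cubicBeta (realRoot ξ) = arcBeta ξ := by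
  have h0 := (realRoot_pos hξ).ne'
  rw [cubicBeta, arcBeta, div_eq_div_iff (by simpa using h0) two_ne_zero]
  linear_combination 8 * arcSqrt_sq ξ + 2 * (realRoot ξ ^ 2 - 2 * ξ * realRoot ξ +
    (2 * arcSqrt ξ + 2 * ξ ^ 2 - 3)) * realRoot_quadratic ξ

lemma isArcBranch_realRoot : IsArcBranch realRoot (deriv realRoot) where
  hasDerivAt ξ _ := hasDerivAt_realRoot ξ
  cubicBeta_eq _ hξ := cubicBeta_realRoot (Ioo_subset_Icc_self hξ)

lemma isArcBranch_neg_realRoot_neg :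
    IsArcBranch (fun ξ => -realRoot (-ξ)) fun ξ => deriv realRoot (-ξ) where
  hasDerivAt ξ _ := by
    exact ((hasDerivAt_realRoot (-ξ)).comp ξ (hasDerivAt_neg ξ)).neg.congr_deriv (by simp)
  cubicBeta_eq ξ hξ := by
    have hneg := neg_mem_Icc_neg_one_one (Ioo_subset_Icc_self hξ)
    rw [cubicBeta_neg (realRoot_pos hneg).ne', cubicBeta_realRoot hneg, arcBeta_neg,
      sub_sub_cancel, RCLike.ofReal_real_eq_id, id]

end RealBranches

section TraceRelation

open MeasureTheory Set Filter
open Complex (I)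
open scoped Real

lemma IsAlphaForm.div_rpow_mul {e r : ℝ} {R : ℝ → ℝ} (h : IsAlphaForm e r R) {m : ℝ}
    (hm : cubicBeta m ∈ Ioo 0 1) :
    (cubicBeta m / (1 - cubicBeta m)) ^ e * R m =
      (cubicAlpha m / (1 - cubicAlpha m)) ^ r * (m * dlogAlpha m) := by
  obtain ⟨hα0, hα1⟩ := cubicAlpha_mem_Ioo_of_cubicBeta_mem_Ioo hm
  have hsq := (sq_mem_Ioo_of_cubicBeta_mem_Ioo hm).2
  obtain ⟨h0, h1, h1', -⟩ := cubicFactors_ne_zero_of_cubicBeta hm.1.ne' hm.2.ne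
  have habs : |m| < 3 := abs_lt_of_sq_lt_sq (by linarith) (by norm_num)
  have := h m (abs_lt.1 habs) h0 (sub_ne_zero.1 h1) fun h => h1' (by rw [h]; norm_num)
  rwa [cubicRatio_eq h0, abs_of_pos (div_pos hm.1 (sub_pos.2 hm.2)),
    abs_of_pos (div_pos hα0 (sub_pos.2 hα1))] at this

namespace IsArcBranch

section Real

variable {q q' : ℝ → ℝ} {ξ : ℝ}

lemma cubicBeta_mem_Ioo (h : IsArcBranch q q') (hξ : ξ ∈ Ioo (-1) 1) :
    cubicBeta (q ξ) ∈ Ioo 0 1 := by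
  rw [h.cubicBeta_eq ξ hξ]
  exact arcBeta_mem_Ioo hξ

lemma dlogAlpha_mul_nonpos (h : IsArcBranch q q') (hξ : ξ ∈ Ioo (-1) 1) :
    dlogAlpha (q ξ) * q' ξ ≤ 0 := by
  obtain ⟨h0, h1, h1', h3⟩ := h.factors_ne_zero hξ
  have hlog : dlogAlpha (q ξ) = (3 - q ξ) ^ 2 / (3 * (q ξ + 1) ^ 2) * dlogBeta (q ξ) := by
    rw [dlogAlpha, dlogBeta, add_comm 1]
    field_simp
  rw [hlog, mul_assoc, h.dlogBeta_mul hξ]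
  exact mul_nonpos_of_nonneg_of_nonpos (by positivity)
    (isDecreasingModulus_arcBeta.logDeriv_nonpos ξ hξ)

lemma isDecreasingModulus_cubicAlpha (h : IsArcBranch q q') (hc : ContinuousOn q (Icc (-1) 1))
    (h0 : ∀ ξ ∈ Icc (-1) 1, q ξ ≠ 0) (hl : cubicAlpha (q (-1)) = 1) (hr : cubicAlpha (q 1) = 0) :
    IsDecreasingModulus (fun ξ => cubicAlpha (q ξ)) fun ξ => dlogAlpha (q ξ) * q' ξ where
  continuousOn := by
    simp only [cubicAlpha]
    exact ContinuousOn.div (by fun_prop) (by fun_prop) fun ξ hξ => by simpa using h0 ξ hξ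
  hasDerivAt ξ hξ := by
    obtain ⟨h0, h1, -, -⟩ := h.factors_ne_zero hξ
    exact ((hasDerivAt_cubicAlpha h0 h1).comp ξ (h.hasDerivAt ξ hξ)).congr_deriv
      (mul_right_comm _ _ _)
  logDeriv_nonpos _ := h.dlogAlpha_mul_nonpos
  mem_Ioo _ hξ := cubicAlpha_mem_Ioo_of_cubicBeta_mem_Ioo (h.cubicBeta_mem_Ioo hξ)
  map_neg_one := hl
  map_one := hr

lemma integral_alphaForm (h : IsArcBranch q q')
    (hα : IsDecreasingModulus (fun ξ => cubicAlpha (q ξ)) fun ξ => dlogAlpha (q ξ) * q' ξ)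
    {e r k : ℝ} {R : ℝ → ℝ} (hR : IsAlphaForm e r R) (h0 : 0 < r) (h1 : r < 15 / 16)
    (hell : ∀ ξ ∈ Ioo (-1) 1, q ξ * ellInt 1 (1 - cubicBeta (q ξ)) =
      k * ellInt 1 (1 - cubicAlpha (q ξ))) :
    IntegrableOn (fun ξ => arcWeight e ξ * (R (q ξ) * q' ξ)) (Ioo (-1) 1) ∧
    ∫ ξ in Ioo (-1) 1, arcWeight e ξ * (R (q ξ) * q' ξ) = -(k * intA r) := by
  have heq : EqOn (fun ξ => k * ((cubicAlpha (q ξ) / (1 - cubicAlpha (q ξ))) ^ r *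
      ellInt 1 (1 - cubicAlpha (q ξ)) * (dlogAlpha (q ξ) * q' ξ)))
      (fun ξ => arcWeight e ξ * (R (q ξ) * q' ξ)) (Ioo (-1) 1) := by
    intro ξ hξ
    have hform := hR.div_rpow_mul (h.cubicBeta_mem_Ioo hξ)
    have hell := hell ξ hξ
    have hβ : cubicBeta (q ξ) = arcBeta ξ := h.cubicBeta_eq ξ hξ
    rw [hβ] at hform hell
    simp only [arcWeight]
    linear_combination -(ellInt 1 (1 - arcBeta ξ) * q' ξ) * hform -
      (cubicAlpha (q ξ) / (1 - cubicAlpha (q ξ))) ^ r * dlogAlpha (q ξ) * q' ξ * hell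
  have hint := (hα.integrableOn_ellInt_one_sub h0 h1).const_mul k
  refine ⟨IntegrableOn.congr_fun hint heq measurableSet_Ioo, ?_⟩
  rw [← setIntegral_congr_fun measurableSet_Ioo heq, integral_const_mul,
    hα.integral_ellInt_one_sub, mul_neg]

end Real

end IsArcBranch

lemma one_lt_realRoot {ξ : ℝ} (hξ : ξ ∈ Ioo (-1) 1) : 1 < realRoot ξ :=
  (one_lt_sq_iff₀ (realRoot_pos (Ioo_subset_Icc_self hξ)).le).1
    (sq_mem_Ioo_of_cubicBeta_mem_Ioo (isArcBranch_realRoot.cubicBeta_mem_Ioo hξ)).1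

lemma realRoot_lt_three {ξ : ℝ} (hξ : ξ ∈ Ioo (-1) 1) : realRoot ξ < 3 :=
  lt_of_pow_lt_pow_left₀ 2 (by norm_num) <| by
    linarith [(sq_mem_Ioo_of_cubicBeta_mem_Ioo (isArcBranch_realRoot.cubicBeta_mem_Ioo hξ)).2]

lemma isDecreasingModulus_cubicAlpha_realRoot :
    IsDecreasingModulus (fun ξ => cubicAlpha (realRoot ξ))
      fun ξ => dlogAlpha (realRoot ξ) * deriv realRoot ξ :=
  isArcBranch_realRoot.isDecreasingModulus_cubicAlpha contDiff_realRoot.continuous.continuousOn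
    (fun _ hξ => (realRoot_pos hξ).ne') (by norm_num [realRoot_neg_one, cubicAlpha])
    (by norm_num [realRoot_one, cubicAlpha])

lemma isDecreasingModulus_cubicAlpha_neg_realRoot_neg :
    IsDecreasingModulus (fun ξ => cubicAlpha (-realRoot (-ξ)))
      fun ξ => dlogAlpha (-realRoot (-ξ)) * deriv realRoot (-ξ) :=
  isArcBranch_neg_realRoot_neg.isDecreasingModulus_cubicAlpha
    (contDiff_realRoot.continuous.comp continuous_neg).neg.continuousOn
    (fun _ hξ => neg_ne_zero.2 (realRoot_pos (neg_mem_Icc_neg_one_one hξ)).ne')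
    (by norm_num [realRoot_one, cubicAlpha]) (by norm_num [realRoot_neg_one, cubicAlpha])

section TraceRatio

variable {K : Type*} [Field K]

/-- The ratio `traceForm / dlogBeta`. -/
def traceRatio (m : K) : K := m * (3 - m) * (m + 3) / (3 * (1 + m) ^ 2)

lemma traceForm_eq [CharZero K] {m : K} (h0 : m ≠ 0) (h1 : m + 1 ≠ 0) (h3 : m + 3 ≠ 0) :
    traceForm m = traceRatio m * dlogBeta m := by
  rw [add_comm] at h1
  rw [traceForm, traceRatio, dlogBeta]
  field_simp

lemma traceForm'_eq [CharZero K] {m : K} (h0 : m ≠ 0) (h1 : m - 1 ≠ 0) (h3 : m + 3 ≠ 0) :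
    traceForm' m = -traceRatio (-m) * dlogBeta m := by
  have h1' : 1 + -m = -(m - 1) := by ring
  rw [traceForm', traceRatio, dlogBeta, h1']
  field_simp
  ring

/- The hypotheses are Vieta's formulas for the coefficients of `m ^ 3`, `m ^ 2` and `1` in
`(m - 1) ^ 3 * (m + 3) - 16 * m * β`; they do not involve `β`. -/
lemma sum_traceRatio_eq_two [CharZero K] {a b c d : K} (h1 : a + b + c + d = 0)
    (h2 : a * b + a * c + a * d + b * c + b * d + c * d = -6) (h4 : a * b * c * d = -3)
    (ha : 1 + a ≠ 0) (hb : 1 + b ≠ 0) (hc : 1 + c ≠ 0) (hd : 1 + d ≠ 0) :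
    traceRatio a + traceRatio b + traceRatio c + traceRatio d = 2 := by
  have hexpand (m : K) (hm : 1 + m ≠ 0) :
      traceRatio m = (-(1 + m) + 3 + 6 * (1 + m)⁻¹ - 8 * (1 + m)⁻¹ ^ 2) / 3 := by
    rw [traceRatio]
    field_simp
    ring
  have hsum : (1 + a)⁻¹ + (1 + b)⁻¹ + (1 + c)⁻¹ + (1 + d)⁻¹ = 1 := by
    field_simp
    linear_combination 2 * h1 + h2 - h4
  have hpairs : (1 + a)⁻¹ * (1 + b)⁻¹ + (1 + a)⁻¹ * (1 + c)⁻¹ + (1 + a)⁻¹ * (1 + d)⁻¹ +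
      (1 + b)⁻¹ * (1 + c)⁻¹ + (1 + b)⁻¹ * (1 + d)⁻¹ + (1 + c)⁻¹ * (1 + d)⁻¹ = 0 := by
    field_simp
    linear_combination 3 * h1 + h2
  rw [hexpand a ha, hexpand b hb, hexpand c hc, hexpand d hd]
  linear_combination (-1 / 3) * h1 + 2 * hsum + 16 / 3 * hpairs -
    8 / 3 * ((1 + a)⁻¹ + (1 + b)⁻¹ + (1 + c)⁻¹ + (1 + d)⁻¹ + 1) * hsum

end TraceRatio

namespace IsArcBranch

variable {𝕜 : Type*} [RCLike 𝕜] {q q' : ℝ → 𝕜} {ξ : ℝ}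

lemma traceForm_mul (h : IsArcBranch q q') (hξ : ξ ∈ Ioo (-1) 1) :
    traceForm (q ξ) * q' ξ = traceRatio (q ξ) * (dlogArcBeta ξ : 𝕜) := by
  obtain ⟨h0, -, h1', h3⟩ := h.factors_ne_zero hξ
  rw [traceForm_eq h0 h1' h3, mul_assoc, h.dlogBeta_mul hξ]

lemma traceForm'_mul (h : IsArcBranch q q') (hξ : ξ ∈ Ioo (-1) 1) :
    traceForm' (q ξ) * q' ξ = -traceRatio (-q ξ) * (dlogArcBeta ξ : 𝕜) := by
  obtain ⟨h0, h1, -, h3⟩ := h.factors_ne_zero hξ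
  rw [traceForm'_eq h0 h1 h3, mul_assoc, h.dlogBeta_mul hξ]

end IsArcBranch

lemma conj_traceRatio (m : ℂ) :
    (starRingEnd ℂ) (traceRatio m) = traceRatio ((starRingEnd ℂ) m) := by
  simp [traceRatio, map_ofNat]

lemma ofReal_traceRatio (m : ℝ) : ((traceRatio m : ℝ) : ℂ) = traceRatio (m : ℂ) := by
  simp [traceRatio]

lemma arcPoint_add_conj (ξ : ℝ) : arcPoint ξ + (starRingEnd ℂ) (arcPoint ξ) = 2 * ξ := by
  rw [Complex.add_conj, arcPoint_re]
  push_cast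
  rfl

lemma arcPoint_mul_conj (ξ : ℝ) :
    arcPoint ξ * (starRingEnd ℂ) (arcPoint ξ) = 2 * arcSqrt ξ + 2 * ξ ^ 2 - 3 := by
  have := arcIm_sq ξ
  rw [Complex.mul_conj, Complex.normSq_apply, arcPoint_re, arcPoint_im]
  norm_cast
  linear_combination this

lemma sum_traceRatio_roots {ξ : ℝ} (hξ : ξ ∈ Ioo (-1) 1) :
    2 * (traceRatio (arcPoint ξ)).re + traceRatio (realRoot ξ) +
      traceRatio (-realRoot (-ξ)) = 2 := by
  have hsum : (realRoot ξ : ℂ) + (-realRoot (-ξ) : ℝ) = -(2 * ξ) := by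
    rw [realRoot_neg]
    push_cast
    ring
  have hprod : (realRoot ξ : ℂ) * (-realRoot (-ξ) : ℝ) = 2 * ξ ^ 2 - 3 - 2 * arcSqrt ξ := by
    rw [realRoot_neg]
    norm_cast
    linear_combination -realRoot_quadratic ξ
  have hsqrt : (arcSqrt ξ : ℂ) ^ 2 = ξ ^ 4 - 3 * ξ ^ 2 + 3 := by exact_mod_cast arcSqrt_sq ξ
  have harc : 1 + arcPoint ξ ≠ 0 := by
    rw [add_comm]
    exact (isArcBranch_arcPoint.factors_ne_zero hξ).2.2.1
  have hconj : 1 + (starRingEnd ℂ) (arcPoint ξ) ≠ 0 := by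
    simpa using (map_ne_zero (starRingEnd ℂ)).2 harc
  have hreal {q q' : ℝ → ℝ} (h : IsArcBranch q q') : 1 + (q ξ : ℂ) ≠ 0 := by
    rw [add_comm]
    exact_mod_cast (h.factors_ne_zero hξ).2.2.1
  have htotal := sum_traceRatio_eq_two
    (by linear_combination arcPoint_add_conj ξ + hsum)
    (by linear_combination arcPoint_mul_conj ξ + hprod + ((realRoot ξ : ℂ) +
      (-realRoot (-ξ) : ℝ)) * arcPoint_add_conj ξ + 2 * ξ * hsum)
    (by linear_combination (realRoot ξ : ℂ) * (-realRoot (-ξ) : ℝ) * arcPoint_mul_conj ξ +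
      (2 * arcSqrt ξ + 2 * ξ ^ 2 - 3) * hprod - 4 * hsqrt)
    harc hconj (hreal isArcBranch_realRoot) (hreal isArcBranch_neg_realRoot_neg)
  rw [← conj_traceRatio, Complex.add_conj, ← ofReal_traceRatio, ← ofReal_traceRatio] at htotal
  exact_mod_cast htotal

lemma sum_traceRatio_neg_roots {ξ : ℝ} (hξ : ξ ∈ Ioo (-1) 1) :
    2 * (traceRatio (-arcPoint ξ)).re + traceRatio (-realRoot ξ) +
      traceRatio (realRoot (-ξ)) = 2 := by
  have h := sum_traceRatio_roots (ξ := -ξ) ⟨neg_lt_neg hξ.2, neg_lt.1 hξ.1⟩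
  rw [arcPoint_neg, ← map_neg, ← conj_traceRatio, Complex.conj_re, neg_neg] at h
  linear_combination h

/-- The trace of the differential form `R dm`, given on the real line by `R` and on the complex
plane by `Rc`, over the four branches of the inverse of `cubicBeta` is `2 k dβ / β`; the two
complex conjugate branches contribute twice a real part. -/
def HasArcTrace (k : ℝ) (R : ℝ → ℝ) (Rc : ℂ → ℂ) : Prop :=
  ∀ ξ ∈ Ioo (-1 : ℝ) 1,
    2 * (Rc (arcPoint ξ) * (1 + deriv arcIm ξ * I)).re + R (realRoot ξ) * deriv realRoot ξ +
      R (-realRoot (-ξ)) * deriv realRoot (-ξ) = 2 * k * dlogArcBeta ξ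

lemma hasArcTrace_traceForm : HasArcTrace 1 traceForm traceForm := by
  intro ξ hξ
  have hreal := isArcBranch_realRoot.traceForm_mul hξ
  have hreal' := isArcBranch_neg_realRoot_neg.traceForm_mul hξ
  rw [RCLike.ofReal_real_eq_id, id] at hreal hreal'
  rw [isArcBranch_arcPoint.traceForm_mul hξ, hreal, hreal', RCLike.ofReal_eq_complex_ofReal,
    Complex.re_mul_ofReal]
  linear_combination dlogArcBeta ξ * sum_traceRatio_roots hξ

lemma hasArcTrace_traceForm' : HasArcTrace (-1) traceForm' traceForm' := by
  intro ξ hξ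
  have hreal := isArcBranch_realRoot.traceForm'_mul hξ
  have hreal' := isArcBranch_neg_realRoot_neg.traceForm'_mul hξ
  rw [RCLike.ofReal_real_eq_id, id] at hreal hreal'
  rw [isArcBranch_arcPoint.traceForm'_mul hξ, hreal, hreal', RCLike.ofReal_eq_complex_ofReal,
    Complex.re_mul_ofReal, Complex.neg_re, neg_neg]
  linear_combination -dlogArcBeta ξ * sum_traceRatio_neg_roots hξ

/- The isogeny multiplies the periods on the two real branches by `1` and `-3`. -/
lemma HasArcTrace.mul_intA_eq {e r k : ℝ} {R : ℝ → ℝ} {Rc : ℂ → ℂ} (h : HasArcTrace k R Rc)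
    (hR : IsAlphaForm e r R) (h0 : 0 < r) (h1 : r < 15 / 16)
    (hi : IntegrableOn (arcForm e Rc) (Ioo (-1) 1)) :
    k * intA e = -(intA r + (∫ ξ in Ioo (-1) 1, arcForm e Rc ξ).re) := by
  obtain ⟨hint, hval⟩ := isArcBranch_realRoot.integral_alphaForm (k := 1)
    isDecreasingModulus_cubicAlpha_realRoot hR h0 h1 fun ξ hξ => by
      have := one_lt_realRoot hξ
      rw [ellInt_one_sub_cubicAlpha (by linarith) (realRoot_lt_three hξ), one_mul]
  obtain ⟨hint', hval'⟩ := isArcBranch_neg_realRoot_neg.integral_alphaForm (k := -3)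
    isDecreasingModulus_cubicAlpha_neg_realRoot_neg hR h0 h1 fun ξ hξ => by
      have hone := one_lt_realRoot (ξ := -ξ) ⟨neg_lt_neg hξ.2, neg_lt.1 hξ.1⟩
      have hne : realRoot (-ξ) ≠ 0 := by linarith
      rw [cubicAlpha_neg hne, cubicBeta_neg hne, sub_sub_cancel, sub_sub_cancel,
        ellInt_cubicAlpha_of_one_lt hone]
      ring
  have hre : IntegrableOn (fun ξ => (arcForm e Rc ξ).re) (Ioo (-1) 1) := Integrable.re hi
  have hsum : ∫ ξ in Ioo (-1) 1, 2 * k * (arcWeight e ξ * dlogArcBeta ξ) =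
      2 * (∫ ξ in Ioo (-1) 1, (arcForm e Rc ξ).re) + -(1 * intA r) + -(-3 * intA r) := by
    have hadd : IntegrableOn (fun ξ => 2 * (arcForm e Rc ξ).re +
        arcWeight e ξ * (R (realRoot ξ) * deriv realRoot ξ)) (Ioo (-1) 1) :=
      (hre.const_mul 2).add hint
    rw [← hval, ← hval', ← integral_const_mul, ← integral_add (hre.const_mul 2) hint,
      ← integral_add hadd hint']
    refine setIntegral_congr_fun measurableSet_Ioo fun ξ hξ => ?_
    simp only [arcForm, Complex.re_ofReal_mul]
    linear_combination -arcWeight e ξ * h ξ hξ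
  have hre_integral : ∫ ξ in Ioo (-1) 1, (arcForm e Rc ξ).re =
      (∫ ξ in Ioo (-1) 1, arcForm e Rc ξ).re := integral_re hi
  have hbeta : ∫ ξ in Ioo (-1) 1, arcWeight e ξ * dlogArcBeta ξ = -intA e :=
    isDecreasingModulus_arcBeta.integral_ellInt_one_sub e
  rw [integral_const_mul, hbeta, hre_integral] at hsum
  linear_combination -hsum / 2

lemma neg_intA_eq {r : ℝ} (h0 : 1 / 8 ≤ r) (h1 : r ≤ 7 / 8) :
    ((-intA r : ℝ) : ℂ) =
      Complex.exp (π * r * I) * ((-intB r + intX r : ℝ) + I * (intB (1 - r) : ℝ)) := by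
  rw [← integral_arcForm_dlogBeta h0 h1, ← isDecreasingModulus_arcBeta.integral_ellInt_one_sub r,
    ← integral_complex_ofReal]
  refine setIntegral_congr_fun measurableSet_Ioo fun ξ hξ => ?_
  simp only [arcForm, isArcBranch_arcPoint.dlogBeta_mul hξ, RCLike.ofReal_eq_complex_ofReal]
  rw [arcWeight, ← Complex.ofReal_mul]

lemma re_exp_mul (θ u v : ℝ) :
    (Complex.exp (θ * I) * (u + I * v)).re = Real.cos θ * u - Real.sin θ * v := by
  simp [Complex.exp_mul_I, Complex.cos_ofReal_re, Complex.sin_ofReal_re]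

lemma im_exp_mul (θ u v : ℝ) :
    (Complex.exp (θ * I) * (u + I * v)).im = Real.cos θ * v + Real.sin θ * u := by
  simp [Complex.exp_mul_I, Complex.cos_ofReal_re, Complex.sin_ofReal_re]

lemma intB_one_sub_and_intX {r : ℝ} (h0 : 1 / 8 ≤ r) (h1 : r ≤ 7 / 8) :
    intB (1 - r) = Real.sin (π * r) * intA r ∧
      intX r = intB r - Real.cos (π * r) * intA r := by
  have h := neg_intA_eq h0 h1
  rw [← Complex.ofReal_mul] at h
  have hre := congrArg Complex.re h
  have him := congrArg Complex.im h
  rw [re_exp_mul, Complex.ofReal_re] at hre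
  rw [im_exp_mul, Complex.ofReal_im] at him
  have hsc := Real.sin_sq_add_cos_sq (π * r)
  constructor
  · linear_combination Real.sin (π * r) * hre - Real.cos (π * r) * him - intB (1 - r) * hsc
  · linear_combination -Real.cos (π * r) * hre - Real.sin (π * r) * him -
      (-intB r + intX r) * hsc

end TraceRelation

section TracesAtEighths

open scoped Real

lemma cos_pi_div_eight_eq : Real.cos (π / 8) = Real.sin (π / 8) * (1 + √2) := by
  have h : Real.cos (π / 4) = 2 * Real.cos (π / 8) ^ 2 - 1 := by
    rw [← Real.cos_two_mul]
    congr 1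
    ring
  have h' : Real.sin (π / 4) = 2 * Real.sin (π / 8) * Real.cos (π / 8) := by
    rw [← Real.sin_two_mul]
    congr 1
    ring
  have hcos : Real.cos (π / 8) ≠ 0 :=
    (Real.cos_pos_of_mem_Ioo ⟨by linarith [Real.pi_pos], by linarith [Real.pi_pos]⟩).ne'
  rw [Real.cos_pi_div_four] at h
  rw [Real.sin_pi_div_four] at h'
  refine mul_right_cancel₀ hcos ?_
  linear_combination -h / 2 + (1 + √2) / 2 * h' - Real.sq_sqrt zero_le_two / 4

lemma four_mul_cos_sq : 4 * Real.cos (π / 8) ^ 2 = 2 + √2 := by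
  have h : 2 * (π / 8) = π / 4 := by ring
  rw [Real.cos_sq, h, Real.cos_pi_div_four]
  ring

lemma four_mul_sin_mul_cos : 4 * (Real.sin (π / 8) * Real.cos (π / 8)) = √2 := by
  have h := Real.sin_two_mul (π / 8)
  have hangle : 2 * (π / 8) = π / 4 := by ring
  rw [hangle, Real.sin_pi_div_four] at h
  linear_combination -2 * h

lemma sin_three_pi_div_eight : Real.sin (π * (3 / 8)) = Real.cos (π / 8) := by
  rw [← Real.sin_pi_div_two_sub]
  congr 1
  ring

lemma cos_three_pi_div_eight : Real.cos (π * (3 / 8)) = Real.sin (π / 8) := by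
  rw [← Real.cos_pi_div_two_sub]
  congr 1
  ring

lemma sin_five_pi_div_eight : Real.sin (π * (5 / 8)) = Real.cos (π / 8) := by
  rw [← Real.sin_add_pi_div_two]
  congr 1
  ring

lemma cos_five_pi_div_eight : Real.cos (π * (5 / 8)) = -Real.sin (π / 8) := by
  rw [← Real.cos_add_pi_div_two]
  congr 1
  ring

lemma pi_mul_seven_div_eight : π * (7 / 8) = π - π / 8 := by ring

lemma intA_one_eighth_eq_trace :
    intA (1 / 8) = -(intA (3 / 8) + (Real.cos (π / 8) * (-intB (3 / 8) - 3 * intX (3 / 8)) +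
      Real.sin (π / 8) * intB (5 / 8))) := by
  have h := hasArcTrace_traceForm.mul_intA_eq isAlphaForm_traceForm (by norm_num) (by norm_num)
    integrableOn_arcForm_traceForm
  rw [integral_arcForm_traceForm, ← Complex.ofReal_mul, re_exp_mul, mul_one_div] at h
  linear_combination h

lemma intA_seven_eighths_eq_trace :
    intA (7 / 8) = intA (5 / 8) + (Real.cos (π / 8) * (intB (5 / 8) + 3 * intX (5 / 8)) +
      Real.sin (π / 8) * intB (3 / 8)) := by
  have h := hasArcTrace_traceForm'.mul_intA_eq isAlphaForm_traceForm' (by norm_num) (by norm_num)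
    integrableOn_arcForm_traceForm'
  rw [integral_arcForm_traceForm', ← Complex.ofReal_mul, re_exp_mul, pi_mul_seven_div_eight,
    Real.cos_pi_sub, Real.sin_pi_sub] at h
  linear_combination -h

lemma intB_one_eighth : intB (1 / 8) = Real.sin (π / 8) * intA (7 / 8) := by
  have h := (intB_one_sub_and_intX (r := 7 / 8) (by norm_num) (by norm_num)).1
  norm_num only at h
  rwa [pi_mul_seven_div_eight, Real.sin_pi_sub] at h

lemma intB_three_eighths : intB (3 / 8) = Real.cos (π / 8) * intA (5 / 8) := by
  have h := (intB_one_sub_and_intX (r := 5 / 8) (by norm_num) (by norm_num)).1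
  norm_num only at h
  rwa [sin_five_pi_div_eight] at h

lemma intB_five_eighths : intB (5 / 8) = Real.cos (π / 8) * intA (3 / 8) := by
  have h := (intB_one_sub_and_intX (r := 3 / 8) (by norm_num) (by norm_num)).1
  norm_num only at h
  rwa [sin_three_pi_div_eight] at h

lemma intB_seven_eighths : intB (7 / 8) = Real.sin (π / 8) * intA (1 / 8) := by
  have h := (intB_one_sub_and_intX (r := 1 / 8) (by norm_num) (by norm_num)).1
  norm_num only at h
  rwa [mul_one_div] at h

lemma intA_one_eighth : intA (1 / 8) = (2 + √2) * intA (5 / 8) - (1 + √2) * intA (3 / 8) := by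
  have hX := (intB_one_sub_and_intX (r := 3 / 8) (by norm_num) (by norm_num)).2
  rw [cos_three_pi_div_eight, intB_three_eighths] at hX
  rw [intA_one_eighth_eq_trace, hX, intB_three_eighths, intB_five_eighths]
  linear_combination intA (5 / 8) * four_mul_cos_sq - intA (3 / 8) * four_mul_sin_mul_cos

lemma intA_seven_eighths : intA (7 / 8) = (1 + √2) * intA (5 / 8) + (2 + √2) * intA (3 / 8) := by
  have hX := (intB_one_sub_and_intX (r := 5 / 8) (by norm_num) (by norm_num)).2
  rw [cos_five_pi_div_eight, intB_five_eighths] at hX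
  rw [intA_seven_eighths_eq_trace, hX, intB_three_eighths, intB_five_eighths]
  linear_combination intA (3 / 8) * four_mul_cos_sq + intA (5 / 8) * four_mul_sin_mul_cos

lemma pi_div_twenty_four_eq : π / 24 = π / 8 - (π / 3 - π / 4) := by ring

lemma cos_pi_div_twenty_four :
    Real.cos (π / 24) = Real.sin (π / 8) / 2 * (1 + √3 + √2 * √3) := by
  rw [pi_div_twenty_four_eq, Real.cos_sub, Real.cos_sub, Real.sin_sub, Real.cos_pi_div_three,
    Real.sin_pi_div_three, Real.cos_pi_div_four, Real.sin_pi_div_four, cos_pi_div_eight_eq]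
  linear_combination Real.sin (π / 8) * (1 + √3) / 4 * Real.sq_sqrt zero_le_two

lemma sin_pi_div_twenty_four :
    Real.sin (π / 24) = Real.sin (π / 8) / 2 * (1 + √2 - √3) := by
  rw [pi_div_twenty_four_eq, Real.sin_sub, Real.cos_sub, Real.sin_sub, Real.cos_pi_div_three,
    Real.sin_pi_div_three, Real.cos_pi_div_four, Real.sin_pi_div_four, cos_pi_div_eight_eq]
  linear_combination Real.sin (π / 8) * (1 - √3) / 4 * Real.sq_sqrt zero_le_two

lemma exp_two_pi_mul_I_div_forty_eight :
    Complex.exp (2 * π * Complex.I / 48) = (Real.sin (π / 8) : ℂ) / 2 *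
      ((1 + √3 + √2 * √3 : ℂ) + (1 + √2 - √3 : ℂ) * Complex.I) := by
  have h : (2 * π * Complex.I / 48 : ℂ) = (π / 24 : ℝ) * Complex.I := by
    push_cast
    ring
  rw [h, Complex.exp_mul_I, ← Complex.ofReal_cos, ← Complex.ofReal_sin, cos_pi_div_twenty_four,
    sin_pi_div_twenty_four]
  push_cast
  ring

open Complex in
lemma intB_combination_eq_exp_mul :
    (intB (1 / 8) : ℂ) - √3 * intB (3 / 8) - I * √3 * intB (5 / 8) - I * intB (7 / 8) =
      -(1 / 2) * exp (2 * π * I / 48) *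
        (intA (1 / 8) - I * √3 * intA (3 / 8) - √3 * intA (5 / 8) + I * intA (7 / 8)) := by
  have h2 : (√2 : ℂ) ^ 2 = 2 := by exact_mod_cast Real.sq_sqrt zero_le_two
  have h3 : (√3 : ℂ) ^ 2 = 3 := by exact_mod_cast Real.sq_sqrt zero_le_three
  rw [exp_two_pi_mul_I_div_forty_eight, intB_one_eighth, intB_three_eighths, intB_five_eighths,
    intB_seven_eighths, cos_pi_div_eight_eq, intA_one_eighth, intA_seven_eighths]
  generalize intA (3 / 8) = a, intA (5 / 8) = b
  generalize Real.sin (π / 8) = s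
  push_cast
  linear_combination
    s / 4 * (1 + √2 - √3) * ((1 + √2) * b + (2 + √2 - √3) * a) * I_sq +
      s / 4 * (I * b - a - (1 + √2) * (I * a + b)) * h3 +
      s / 4 * ((√3 + I) * (b - a) + (√3 * I - 1) * (a + b)) * h2

lemma Fval_eq_intA {r : ℚ} (hr : 0 < r) (hr1 : r < 1) :
    Fval r 1 = 2 ^ (1 - 4 * r : ℝ) / (2 * r.den) * intA r := by
  have h : (1 : ℝ) - r - 1 = -r := by ring
  rw [Fval_eq_integral hr hr1, intA, Rat.cast_one, h]

lemma Fval_eq_intB {r s : ℚ} (hr : 0 < r) (hs : s = r + 1 / 2) :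
    Fval r s = 2 ^ (1 - 4 * r : ℝ) / (2 * r.den) * intB r := by
  have h : (s : ℝ) - r - 1 = -(1 / 2) := by
    rw [hs]
    push_cast
    ring
  rw [Fval_eq_integral hr (by linarith), intB, h]

lemma two_rpow_one_sub_div_two_mul_den {r : ℚ} (n : ℕ) (hr : r = (2 * n + 1) / 8)
    (hd : r.den = 8) : (2 : ℝ) ^ (1 - 4 * r : ℝ) / (2 * r.den) = √2 / 16 / 2 ^ n := by
  have hexp : (1 : ℝ) - 4 * r = 1 / 2 - n := by
    rw [hr]
    push_cast
    ring
  rw [hd, hexp, Real.rpow_sub_natCast two_ne_zero, ← Real.sqrt_eq_rpow]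
  push_cast
  ring

end TracesAtEighths

open Complex in
/-- L(f_{1/8,5/8},1) = −(1/2)·ζ₄₈·L(f_{1/8,1},1), where ζ₄₈ = e^{2πi/48}, with the
L-values expressed as linear combinations of normalized hypergeometric values. -/
theorem lvalue_relation_class6 :
    (Fval (1/8) (5/8) : ℂ) - 2 * (Real.sqrt 3 : ℂ) * (Fval (3/8) (7/8) : ℂ) -
        4 * I * (Real.sqrt 3 : ℂ) * (Fval (5/8) (9/8) : ℂ) -
        8 * I * (Fval (7/8) (11/8) : ℂ) =
      -(1/2) * Complex.exp (2 * (Real.pi : ℂ) * I / 48) *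
        ((Fval (1/8) 1 : ℂ) - 2 * I * (Real.sqrt 3 : ℂ) * (Fval (3/8) 1 : ℂ) -
          4 * (Real.sqrt 3 : ℂ) * (Fval (5/8) 1 : ℂ) + 8 * I * (Fval (7/8) 1 : ℂ)) := by
  have f0 := two_rpow_one_sub_div_two_mul_den (r := 1 / 8) 0 (by norm_num) (by norm_num)
  have f1 := two_rpow_one_sub_div_two_mul_den (r := 3 / 8) 1 (by norm_num) (by norm_num)
  have f2 := two_rpow_one_sub_div_two_mul_den (r := 5 / 8) 2 (by norm_num) (by norm_num)
  have f3 := two_rpow_one_sub_div_two_mul_den (r := 7 / 8) 3 (by norm_num) (by norm_num)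
  rw [Fval_eq_intB (by norm_num) (by norm_num), Fval_eq_intB (by norm_num) (by norm_num),
    Fval_eq_intB (by norm_num) (by norm_num), Fval_eq_intB (by norm_num) (by norm_num),
    Fval_eq_intA (by norm_num) (by norm_num), Fval_eq_intA (by norm_num) (by norm_num),
    Fval_eq_intA (by norm_num) (by norm_num), Fval_eq_intA (by norm_num) (by norm_num),
    f0, f1, f2, f3]
  norm_num only [Rat.cast_div, Rat.cast_one, Rat.cast_ofNat]
  push_cast
  linear_combination (√2 / 16 : ℂ) * intB_combination_eq_exp_mul
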